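/- arXiv:1509.02251 — 2 statements merged into one kernel-verified Lean document; each statement's English description precedes it below -/
import Mathlib

section
/- Let φ be the Gaussian free field on the (d+1)-regular tree, d ≥ 2, and let h_* be the unique real number with λ_{h_*} = 1 (where λ_h = ‖π_h(dQ_{log d})π_h‖ on L²(N(0, d/(d²−1)))). Then for h < h_*, P^G-a.s. the level set {x : φ_x ≥ h} has an infinite connected component, while for h > h_*, P^G-a.s. all connected components of {x : φ_x ≥ h} are finite. -/
open MeasureTheory ProbabilityTheory

/-!
Explored from a root, the field is a Markov chain indexed by the tree: given the earlier
generations, the value at a vertex has law `N(a/d, 1/d)`, where `a` is the value at its parent. Its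
transition operator has a symmetric density with respect to the one-vertex law (the Mehler kernel),
so the operators `π_h (d Q) π_h` are self-adjoint and positivity improving on the half-lines
`[h, ∞)`, and their norm is strictly decreasing in `h`.

If the norm is below `1`, the expected number of vertices of the `n`-th generation joined to the
root inside the level set tends to `0`, so no component is infinite. If it exceeds `1`, one minus
a small multiple of a bounded approximate eigenfunction is a supersolution `s` of the extinction
equation. By the Markov property, `s` bounds the probability that a given vertex does not percolate,
and the probability that no vertex of a far away generation percolates tends to `0`.
-/

namespace TreeGFF

open Filter Topology
open scoped ENNReal NNReal

section Operator

variable {α : Type*} [MeasurableSpace α] {ν : Measure α} {K : α → α → ℝ≥0∞}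

/-- `K` is the density with respect to `ν` of a Markov kernel that is reversible for `ν`. -/
structure IsSymmDensity (ν : Measure α) (K : α → α → ℝ≥0∞) : Prop where
  measurable : Measurable (Function.uncurry K)
  symm : ∀ a z, K a z = K z a
  lintegral_eq_one : ∀ a, ∫⁻ z, K a z ∂ν = 1

/-- The integral operator on nonnegative functions with kernel `K`. -/
noncomputable def transOp (ν : Measure α) (K : α → α → ℝ≥0∞) (f : α → ℝ≥0∞) (a : α) : ℝ≥0∞ :=
  ∫⁻ z, K a z * f z ∂ν

/-- The operator `f ↦ 1_I c K (1_I f)` on nonnegative functions: the mean operator of the branching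
Markov chain with `c` expected offspring and transition density `K`, killed outside `I`. -/
noncomputable def cutOp (ν : Measure α) (K : α → α → ℝ≥0∞) (c : ℝ≥0) (I : Set α)
    (f : α → ℝ≥0∞) : α → ℝ≥0∞ :=
  I.indicator fun a => c * transOp ν K (I.indicator f) a

lemma IsSymmDensity.measurable_right (hK : IsSymmDensity ν K) (a : α) : Measurable (K a) :=
  hK.measurable.comp (measurable_const.prodMk measurable_id)

lemma measurable_transOp [SFinite ν] (hK : IsSymmDensity ν K) {f : α → ℝ≥0∞} (hf : Measurable f) :
    Measurable (transOp ν K f) :=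
  (hK.measurable.mul (hf.comp measurable_snd) :
    Measurable fun p : α × α => K p.1 p.2 * f p.2).lintegral_prod_right'

lemma transOp_mono {f g : α → ℝ≥0∞} (h : f ≤ g) : transOp ν K f ≤ transOp ν K g :=
  fun _ => lintegral_mono fun z => mul_le_mul_right (h z) _

lemma transOp_const_mul {r : ℝ≥0∞} (hr : r ≠ ∞) (f : α → ℝ≥0∞) (a : α) :
    transOp ν K (fun z => r * f z) a = r * transOp ν K f a := by
  rw [transOp, transOp, ← lintegral_const_mul' _ _ hr]
  exact lintegral_congr fun z => mul_left_comm _ _ _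

lemma transOp_le_const (hK : IsSymmDensity ν K) {f : α → ℝ≥0∞} {r : ℝ≥0∞} (h : ∀ z, f z ≤ r)
    (a : α) : transOp ν K f a ≤ r :=
  calc transOp ν K f a ≤ ∫⁻ z, K a z * r ∂ν := transOp_mono h a
    _ = r := by rw [lintegral_mul_const _ (hK.measurable_right a), hK.lintegral_eq_one, one_mul]

lemma lintegral_mul_transOp [SFinite ν] (hK : IsSymmDensity ν K) {f g : α → ℝ≥0∞}
    (hf : Measurable f) (hg : Measurable g) :
    ∫⁻ a, f a * transOp ν K g a ∂ν = ∫⁻ a, transOp ν K f a * g a ∂ν :=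
  calc ∫⁻ a, f a * transOp ν K g a ∂ν = ∫⁻ a, ∫⁻ z, f a * (K a z * g z) ∂ν ∂ν :=
        lintegral_congr fun a => (lintegral_const_mul _ ((hK.measurable_right a).mul hg)).symm
    _ = ∫⁻ z, ∫⁻ a, f a * (K a z * g z) ∂ν ∂ν :=
        lintegral_lintegral_swap ((hf.comp measurable_fst).mul
          (hK.measurable.mul (hg.comp measurable_snd))).aemeasurable
    _ = ∫⁻ z, transOp ν K f z * g z ∂ν := by
        refine lintegral_congr fun z => (lintegral_congr fun a => ?_).trans
          (lintegral_mul_const _ ((hK.measurable_right z).mul hf))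
        rw [hK.symm z a, mul_assoc, mul_left_comm]

lemma lintegral_transOp [SFinite ν] (hK : IsSymmDensity ν K) {f : α → ℝ≥0∞}
    (hf : Measurable f) : ∫⁻ a, transOp ν K f a ∂ν = ∫⁻ a, f a ∂ν := by
  simpa [transOp, hK.lintegral_eq_one] using
    lintegral_mul_transOp hK (measurable_const (a := (1 : ℝ≥0∞))) hf

lemma measurable_cutOp [SFinite ν] (hK : IsSymmDensity ν K) (c : ℝ≥0) {I : Set α}
    (hI : MeasurableSet I) {f : α → ℝ≥0∞} (hf : Measurable f) : Measurable (cutOp ν K c I f) :=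
  ((measurable_transOp hK (hf.indicator hI)).const_mul _).indicator hI

lemma cutOp_of_mem {c : ℝ≥0} {I : Set α} {a : α} (ha : a ∈ I) (f : α → ℝ≥0∞) :
    cutOp ν K c I f a = c * transOp ν K (I.indicator f) a :=
  Set.indicator_of_mem ha _

lemma cutOp_of_notMem {c : ℝ≥0} {I : Set α} {a : α} (ha : a ∉ I) (f : α → ℝ≥0∞) :
    cutOp ν K c I f a = 0 :=
  Set.indicator_of_notMem ha _

lemma cutOp_indicator (c : ℝ≥0) (I : Set α) (f : α → ℝ≥0∞) :
    cutOp ν K c I (I.indicator f) = cutOp ν K c I f := by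
  rw [cutOp, Set.indicator_indicator, Set.inter_self, cutOp]

lemma cutOp_le_cutOp (c : ℝ≥0) {I J : Set α} (hIJ : I ⊆ J) {f g : α → ℝ≥0∞} (h : f ≤ g) :
    cutOp ν K c I f ≤ cutOp ν K c J g := fun _ => by
  unfold cutOp
  refine (Set.indicator_le_indicator_of_subset hIJ (fun _ => zero_le) _).trans
    (Set.indicator_le_indicator (mul_le_mul_right (transOp_mono (fun z => ?_) _) _))
  exact (Set.indicator_le_indicator_of_subset hIJ (fun _ => zero_le) z).trans
    (Set.indicator_le_indicator (h z))

lemma cutOp_mono (c : ℝ≥0) (I : Set α) : Monotone (cutOp ν K c I) := fun _ _ h =>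
  cutOp_le_cutOp c Set.Subset.rfl h

lemma cutOp_le (c : ℝ≥0) (I : Set α) (f : α → ℝ≥0∞) (a : α) :
    cutOp ν K c I f a ≤ c * transOp ν K f a :=
  (Set.indicator_le_self _ _ _).trans
    (mul_le_mul_right (transOp_mono (Set.indicator_le_self _ _) a) _)

lemma cutOp_const_mul (c : ℝ≥0) (I : Set α) {r : ℝ≥0∞} (hr : r ≠ ∞) (f : α → ℝ≥0∞) (a : α) :
    cutOp ν K c I (fun z => r * f z) a = r * cutOp ν K c I f a := by
  by_cases ha : a ∈ I
  · have hind : (I.indicator fun z => r * f z) = fun z => r * I.indicator f z :=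
      funext fun z => Set.indicator_const_mul I f r z
    rw [cutOp_of_mem ha, cutOp_of_mem ha, hind, transOp_const_mul hr, mul_left_comm]
  · rw [cutOp_of_notMem ha, cutOp_of_notMem ha, mul_zero]

lemma lintegral_mul_cutOp [SFinite ν] (hK : IsSymmDensity ν K) (c : ℝ≥0) {I : Set α}
    (hI : MeasurableSet I) {f g : α → ℝ≥0∞} (hf : Measurable f) (hg : Measurable g) :
    ∫⁻ a, f a * cutOp ν K c I g a ∂ν = ∫⁻ a, cutOp ν K c I f a * g a ∂ν := by
  have hf' := hf.indicator hI
  have hg' := hg.indicator hI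
  calc ∫⁻ a, f a * cutOp ν K c I g a ∂ν
      = ∫⁻ a, c * (I.indicator f a * transOp ν K (I.indicator g) a) ∂ν :=
        lintegral_congr fun a => by
          by_cases ha : a ∈ I
          · rw [cutOp_of_mem ha, Set.indicator_of_mem ha, mul_left_comm]
          · rw [cutOp_of_notMem ha, Set.indicator_of_notMem ha, zero_mul, mul_zero, mul_zero]
    _ = ∫⁻ a, c * (transOp ν K (I.indicator f) a * I.indicator g a) ∂ν := by
        rw [lintegral_const_mul' _ _ ENNReal.coe_ne_top, lintegral_mul_transOp hK hf' hg',
          lintegral_const_mul' _ _ ENNReal.coe_ne_top]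
    _ = ∫⁻ a, cutOp ν K c I f a * g a ∂ν :=
        lintegral_congr fun a => by
          by_cases ha : a ∈ I
          · rw [cutOp_of_mem ha, Set.indicator_of_mem ha, mul_assoc]
          · rw [cutOp_of_notMem ha, Set.indicator_of_notMem ha, zero_mul, mul_zero, mul_zero]

lemma measurable_iterate_cutOp [SFinite ν] (hK : IsSymmDensity ν K) (c : ℝ≥0) {I : Set α}
    (hI : MeasurableSet I) {f : α → ℝ≥0∞} (hf : Measurable f) (n : ℕ) :
    Measurable ((cutOp ν K c I)^[n] f) := by
  induction n with
  | zero => exact hf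
  | succ n ih => rw [Function.iterate_succ_apply']; exact measurable_cutOp hK c hI ih

lemma iterate_cutOp_const_mul (c : ℝ≥0) (I : Set α) {r : ℝ≥0∞} (hr : r ≠ ∞) (f : α → ℝ≥0∞)
    (n : ℕ) : (cutOp ν K c I)^[n] (fun z => r * f z) = fun z => r * (cutOp ν K c I)^[n] f z := by
  induction n with
  | zero => rfl
  | succ n ih =>
    simp only [Function.iterate_succ_apply', ih]
    exact funext (cutOp_const_mul c I hr _)

lemma lintegral_mul_iterate_cutOp [SFinite ν] (hK : IsSymmDensity ν K) (c : ℝ≥0) {I : Set α}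
    (hI : MeasurableSet I) {f g : α → ℝ≥0∞} (hf : Measurable f) (hg : Measurable g) (n : ℕ) :
    ∫⁻ a, f a * (cutOp ν K c I)^[n] g a ∂ν = ∫⁻ a, (cutOp ν K c I)^[n] f a * g a ∂ν := by
  induction n generalizing f with
  | zero => rfl
  | succ n ih =>
    rw [Function.iterate_succ_apply', lintegral_mul_cutOp hK c hI hf
      (measurable_iterate_cutOp hK c hI hg n), ih (measurable_cutOp hK c hI hf),
      ← Function.iterate_succ_apply]

lemma sq_lintegral_mul_le {f g : α → ℝ≥0∞} (hf : Measurable f) (hg : Measurable g) :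
    (∫⁻ a, f a * g a ∂ν) ^ 2 ≤ (∫⁻ a, f a ^ 2 ∂ν) * ∫⁻ a, g a ^ 2 ∂ν := by
  have holder := ENNReal.lintegral_mul_le_Lp_mul_Lq ν Real.HolderConjugate.two_two hf.aemeasurable
    hg.aemeasurable
  have hsq : ∀ x : ℝ≥0∞, (x ^ ((1 : ℝ) / 2)) ^ 2 = x := fun x => by
    rw [← ENNReal.rpow_natCast, ← ENNReal.rpow_mul]; norm_num
  simpa only [Pi.mul_apply, mul_pow, hsq, ENNReal.rpow_two] using pow_le_pow_left' holder 2

end Operator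

section Gain

variable {α : Type*} [MeasurableSpace α] {ν : Measure α} {K : α → α → ℝ≥0∞} {ρ κ : α → ℝ≥0∞}

/-- The kernel `K` lies between the product kernels `ρ ⊗ ρ` and `κ ⊗ κ`, where `ρ` is positive and
`κ` is square integrable: a quantitative form of irreducibility and compactness. -/
structure HasProductBounds (ν : Measure α) (K : α → α → ℝ≥0∞) (ρ κ : α → ℝ≥0∞) : Prop where
  measurable_lower : Measurable ρ
  measurable_upper : Measurable κ
  lower_ne_zero : ∀ a, ρ a ≠ 0
  upper_ne_top : ∀ a, κ a ≠ ∞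
  lintegral_sq_upper_ne_top : ∫⁻ a, κ a ^ 2 ∂ν ≠ ∞
  lower_le : ∀ a z, ρ a * ρ z ≤ K a z
  le_upper : ∀ a z, K a z ≤ κ a * κ z

namespace HasProductBounds

lemma mul_lintegral_le_transOp (hb : HasProductBounds ν K ρ κ) {g : α → ℝ≥0∞} (hg : Measurable g)
    (a : α) : ρ a * ∫⁻ z, ρ z * g z ∂ν ≤ transOp ν K g a := by
  refine (lintegral_const_mul _ (hb.measurable_lower.mul hg)).symm.trans_le
    (lintegral_mono fun z => ?_)
  rw [Pi.mul_apply, ← mul_assoc]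
  exact mul_le_mul_left (hb.lower_le a z) _

lemma transOp_le_mul_lintegral (hb : HasProductBounds ν K ρ κ) {g : α → ℝ≥0∞} (hg : Measurable g)
    (a : α) : transOp ν K g a ≤ κ a * ∫⁻ z, κ z * g z ∂ν := by
  refine (lintegral_mono fun z => ?_).trans_eq
    (lintegral_const_mul _ (hb.measurable_upper.mul hg))
  rw [← mul_assoc]
  exact mul_le_mul_left (hb.le_upper a z) _

lemma lintegral_sq_transOp_le (hb : HasProductBounds ν K ρ κ) {g : α → ℝ≥0∞} (hg : Measurable g) :
    ∫⁻ a, transOp ν K g a ^ 2 ∂ν ≤ (∫⁻ a, κ a ^ 2 ∂ν) * (∫⁻ z, κ z * g z ∂ν) ^ 2 := by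
  rw [← lintegral_mul_const _ (hb.measurable_upper.pow_const 2)]
  refine lintegral_mono fun a => ?_
  rw [← mul_pow]
  exact pow_le_pow_left' (hb.transOp_le_mul_lintegral hg a) 2

lemma exists_setLIntegral_sq_upper_le [IsFiniteMeasure ν] (hb : HasProductBounds ν K ρ κ)
    {ε : ℝ≥0∞} (hε : ε ≠ 0) : ∃ M : ℕ, ∫⁻ z in {z | κ z ≤ M * ρ z}ᶜ, κ z ^ 2 ∂ν ≤ ε := by
  have hmeas (M : ℕ) : MeasurableSet {z | κ z ≤ M * ρ z} :=
    measurableSet_le hb.measurable_upper (hb.measurable_lower.const_mul _)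
  have hinter : ⋂ M : ℕ, {z | κ z ≤ M * ρ z}ᶜ = ∅ := by
    refine Set.eq_empty_iff_forall_notMem.2 fun z hz => ?_
    obtain ⟨M, hM⟩ := ENNReal.exists_nat_mul_gt (hb.lower_ne_zero z) (hb.upper_ne_top z)
    exact Set.mem_iInter.1 hz M hM.le
  have hanti : Antitone fun M : ℕ => {z | κ z ≤ M * ρ z}ᶜ := fun m n hmn =>
    Set.compl_subset_compl.2 fun z (hz : κ z ≤ m * ρ z) =>
      hz.trans (mul_le_mul_left (Nat.cast_le.2 hmn) _)
  have hlim := tendsto_measure_iInter_atTop (μ := ν) (fun M => (hmeas M).compl.nullMeasurableSet)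
    hanti ⟨0, measure_ne_top _ _⟩
  rw [hinter, measure_empty] at hlim
  exact ((tendsto_setLIntegral_zero hb.lintegral_sq_upper_ne_top hlim).eventually
    (ge_mem_nhds (pos_iff_ne_zero.2 hε))).exists

lemma sq_lintegral_upper_mul_le (hb : HasProductBounds ν K ρ κ) (M : ℕ) {g : α → ℝ≥0∞}
    (hg : Measurable g) :
    (∫⁻ z, κ z * g z ∂ν) ^ 2 ≤ 2 * ((M * ∫⁻ z, ρ z * g z ∂ν) ^ 2 +
      (∫⁻ z in {z | κ z ≤ M * ρ z}ᶜ, κ z ^ 2 ∂ν) * ∫⁻ z, g z ^ 2 ∂ν) := by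
  set E := {z | κ z ≤ M * ρ z}
  have hE : MeasurableSet E :=
    measurableSet_le hb.measurable_upper (hb.measurable_lower.const_mul _)
  have add_sq_le_two_mul (x y : ℝ≥0∞) : (x + y) ^ 2 ≤ 2 * (x ^ 2 + y ^ 2) := by
    simpa [show (2 : ℝ) - 1 = 1 by norm_num] using
      ENNReal.rpow_add_le_mul_rpow_add_rpow x y one_le_two
  have inside : ∫⁻ z in E, κ z * g z ∂ν ≤ M * ∫⁻ z, ρ z * g z ∂ν := by
    have hρg : Measurable fun z => ρ z * g z := hb.measurable_lower.mul hg
    rw [← lintegral_const_mul _ hρg]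
    refine (setLIntegral_mono (hρg.const_mul _) fun z hz => ?_).trans
      (setLIntegral_le_lintegral _ _)
    rw [← mul_assoc]
    exact mul_le_mul_left hz _
  have outside : (∫⁻ z in Eᶜ, κ z * g z ∂ν) ^ 2 ≤
      (∫⁻ z in Eᶜ, κ z ^ 2 ∂ν) * ∫⁻ z, g z ^ 2 ∂ν :=
    (sq_lintegral_mul_le hb.measurable_upper hg).trans
      (mul_le_mul_right (setLIntegral_le_lintegral _ _) _)
  calc (∫⁻ z, κ z * g z ∂ν) ^ 2
      = (∫⁻ z in E, κ z * g z ∂ν + ∫⁻ z in Eᶜ, κ z * g z ∂ν) ^ 2 := by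
        rw [lintegral_add_compl _ hE]
    _ ≤ 2 * ((∫⁻ z in E, κ z * g z ∂ν) ^ 2 + (∫⁻ z in Eᶜ, κ z * g z ∂ν) ^ 2) :=
        add_sq_le_two_mul _ _
    _ ≤ _ := by gcongr

lemma exists_mul_lintegral_sq_le [IsFiniteMeasure ν] (hb : HasProductBounds ν K ρ κ) {ε : ℝ≥0∞}
    (hε : ε ≠ 0) (hε' : ε ≠ ∞) :
    ∃ δ : ℝ≥0∞, δ ≠ 0 ∧ ∀ g : α → ℝ≥0∞, Measurable g → ∫⁻ z, g z ^ 2 ∂ν ≠ ∞ →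
      ε * ∫⁻ z, g z ^ 2 ∂ν ≤ ∫⁻ a, transOp ν K g a ^ 2 ∂ν →
      δ * ∫⁻ z, g z ^ 2 ∂ν ≤ (∫⁻ z, ρ z * g z ∂ν) ^ 2 := by
  set D := ∫⁻ z, κ z ^ 2 ∂ν
  have hDtop : 2 * D ≠ ∞ := ENNReal.mul_ne_top ENNReal.ofNat_ne_top hb.lintegral_sq_upper_ne_top
  have hε2 : ε / 2 ≠ 0 := (ENNReal.half_pos hε).ne'
  obtain ⟨M, hM⟩ := hb.exists_setLIntegral_sq_upper_le (ENNReal.div_ne_zero.2 ⟨hε2, hDtop⟩)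
  have hMtop : 2 * D * (M : ℝ≥0∞) ^ 2 ≠ ∞ :=
    ENNReal.mul_ne_top hDtop (ENNReal.pow_ne_top (ENNReal.natCast_ne_top M))
  refine ⟨ε / 2 / (2 * D * M ^ 2), ENNReal.div_ne_zero.2 ⟨hε2, hMtop⟩, fun g hg hgtop hle => ?_⟩
  set N := ∫⁻ z, g z ^ 2 ∂ν
  set S := ∫⁻ z, ρ z * g z ∂ν
  have hsplit : ε / 2 * N + ε / 2 * N ≤ 2 * D * M ^ 2 * S ^ 2 + ε / 2 * N :=
    calc ε / 2 * N + ε / 2 * N = ε * N := by rw [← add_mul, ENNReal.add_halves]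
      _ ≤ D * (2 * ((M * S) ^ 2 + ε / 2 / (2 * D) * N)) :=
          hle.trans <| (hb.lintegral_sq_transOp_le hg).trans <|
            mul_le_mul_right ((hb.sq_lintegral_upper_mul_le M hg).trans (by gcongr)) _
      _ = 2 * D * M ^ 2 * S ^ 2 + 2 * D * (ε / 2 / (2 * D)) * N := by ring
      _ ≤ 2 * D * M ^ 2 * S ^ 2 + ε / 2 * N := by gcongr; exact ENNReal.mul_div_le
  have hfin : ε / 2 * N ≠ ∞ := ENNReal.mul_ne_top (ENNReal.div_ne_top hε' two_ne_zero) hgtop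
  rw [← ENNReal.mul_div_right_comm]
  exact ENNReal.div_le_of_le_mul' ((ENNReal.add_le_add_iff_right hfin).1 hsplit)

end HasProductBounds

lemma lintegral_sq_cutOp {c : ℝ≥0} {I : Set α} (hI : MeasurableSet I) (f : α → ℝ≥0∞) :
    ∫⁻ a, cutOp ν K c I f a ^ 2 ∂ν = c ^ 2 * ∫⁻ a in I, transOp ν K (I.indicator f) a ^ 2 ∂ν := by
  rw [← lintegral_const_mul' _ _ (ENNReal.pow_ne_top ENNReal.coe_ne_top), ← lintegral_indicator hI]
  refine lintegral_congr fun a => ?_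
  by_cases ha : a ∈ I
  · rw [cutOp_of_mem ha, Set.indicator_of_mem ha, mul_pow]
  · rw [cutOp_of_notMem ha, Set.indicator_of_notMem ha, zero_pow two_ne_zero]

lemma HasProductBounds.exists_lintegral_sq_cutOp_add_le [IsFiniteMeasure ν]
    (hb : HasProductBounds ν K ρ κ) {c : ℝ≥0} (hc : c ≠ 0) {I J : Set α} (hI : MeasurableSet I)
    (hJ : MeasurableSet J) (hIJ : I ⊆ J) (hν : ν (J \ I) ≠ 0) {ε : ℝ≥0∞} (hε : ε ≠ 0)
    (hε' : ε ≠ ∞) :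
    ∃ δ : ℝ≥0∞, δ ≠ 0 ∧ ∀ g : α → ℝ≥0∞, Measurable g → ∫⁻ z, g z ^ 2 ∂ν ≠ ∞ →
      (∀ z ∉ I, g z = 0) →
      ε * ∫⁻ z, g z ^ 2 ∂ν ≤ ∫⁻ a, cutOp ν K c I g a ^ 2 ∂ν →
      ∫⁻ a, cutOp ν K c I g a ^ 2 ∂ν + δ * ∫⁻ z, g z ^ 2 ∂ν ≤
        ∫⁻ a, cutOp ν K c J g a ^ 2 ∂ν := by
  have hc2 : (c : ℝ≥0∞) ^ 2 ≠ 0 := pow_ne_zero 2 (ENNReal.coe_ne_zero.2 hc)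
  have hc2' : (c : ℝ≥0∞) ^ 2 ≠ ∞ := ENNReal.pow_ne_top ENNReal.coe_ne_top
  obtain ⟨δ, hδ, H⟩ := hb.exists_mul_lintegral_sq_le (ENNReal.div_ne_zero.2 ⟨hε, hc2'⟩)
    (ENNReal.div_ne_top hε' hc2)
  have hρ : ∫⁻ a in J \ I, ρ a ^ 2 ∂ν ≠ 0 := fun h0 => by
    have hae := (setLIntegral_eq_zero_iff (hJ.diff hI) (hb.measurable_lower.pow_const 2)).1 h0
    refine hν (measure_eq_zero_iff_ae_notMem.2 (hae.mono fun a ha hmem => ?_))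
    exact pow_ne_zero 2 (hb.lower_ne_zero a) (ha hmem)
  refine ⟨c ^ 2 * ((∫⁻ a in J \ I, ρ a ^ 2 ∂ν) * δ), mul_ne_zero hc2 (mul_ne_zero hρ hδ),
    fun g hg hgtop hgI hle => ?_⟩
  have hgI' : I.indicator g = g :=
    Set.indicator_eq_self.2 fun z hz => by_contra fun h => hz (hgI z h)
  have hgJ' : J.indicator g = g := by rw [← hgI', Set.indicator_indicator, Set.inter_eq_right.2 hIJ]
  rw [lintegral_sq_cutOp hI, hgI'] at hle ⊢
  rw [lintegral_sq_cutOp hJ, hgJ', ← lintegral_inter_add_sdiff _ J hI, Set.inter_eq_right.2 hIJ,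
    mul_assoc, ← mul_add]
  gcongr
  have hmass : δ * ∫⁻ z, g z ^ 2 ∂ν ≤ (∫⁻ z, ρ z * g z ∂ν) ^ 2 := by
    refine H g hg hgtop ?_
    rw [← ENNReal.mul_div_right_comm]
    exact ENNReal.div_le_of_le_mul' (hle.trans (mul_le_mul_right (setLIntegral_le_lintegral _ _) _))
  calc (∫⁻ a in J \ I, ρ a ^ 2 ∂ν) * δ * ∫⁻ z, g z ^ 2 ∂ν
      ≤ (∫⁻ a in J \ I, ρ a ^ 2 ∂ν) * (∫⁻ z, ρ z * g z ∂ν) ^ 2 := by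
        rw [mul_assoc]; gcongr
    _ = ∫⁻ a in J \ I, (ρ a * ∫⁻ z, ρ z * g z ∂ν) ^ 2 ∂ν := by
        simp only [mul_pow]
        rw [lintegral_mul_const _ (hb.measurable_lower.pow_const 2)]
    _ ≤ ∫⁻ a in J \ I, transOp ν K g a ^ 2 ∂ν :=
        lintegral_mono fun a => pow_le_pow_left' (hb.mul_lintegral_le_transOp hg a) 2

end Gain

section Subsolution

lemma indicator_iUnion_iSup {α : Type*} {I : ℕ → Set α} (hI : Monotone I) {f : ℕ → α → ℝ≥0∞}
    (hf : Monotone f) (a : α) :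
    (⋃ n, I n).indicator (fun z => ⨆ n, f n z) a = ⨆ n, (I n).indicator (f n) a := by
  refine le_antisymm ?_ (iSup_le fun n => ?_)
  · by_cases ha : a ∈ ⋃ n, I n
    · obtain ⟨k, hk⟩ := Set.mem_iUnion.1 ha
      rw [Set.indicator_of_mem ha]
      refine iSup_le fun n => le_iSup_of_le (max n k) ?_
      rw [Set.indicator_of_mem (hI (le_max_right n k) hk)]
      exact hf (le_max_left n k) a
    · rw [Set.indicator_of_notMem ha]
      exact zero_le
  · exact (Set.indicator_le_indicator (le_iSup (fun n => f n a) n)).trans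
      (Set.indicator_le_indicator_of_subset (Set.subset_iUnion I n) (fun _ => zero_le) a)

variable {α : Type*} [MeasurableSpace α] {ν : Measure α} {K : α → α → ℝ≥0∞}

/-- A bounded function `g` living on `I` whose mean grows by the factor `r > 1` in each generation
of the branching chain; `r⁻ⁿ ∑ g` over generation `n` is then a submartingale. -/
structure IsStrictSubsolution (ν : Measure α) (K : α → α → ℝ≥0∞) (c : ℝ≥0) (I : Set α) (r : ℝ≥0)
    (g : α → ℝ≥0∞) : Prop where
  measurable : Measurable g
  le_one : ∀ a, g a ≤ 1
  eq_zero_of_notMem : ∀ a ∉ I, g a = 0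
  measure_ne_zero : ν {a | g a ≠ 0} ≠ 0
  one_lt : 1 < r
  mul_le : ∀ a, r * g a ≤ c * transOp ν K g a

lemma cutOp_iUnion_iSup (hK : IsSymmDensity ν K) (c : ℝ≥0) {I : ℕ → Set α}
    (hI : Monotone I) (hIm : ∀ n, MeasurableSet (I n)) {f : ℕ → α → ℝ≥0∞} (hf : Monotone f)
    (hfm : ∀ n, Measurable (f n)) (a : α) :
    cutOp ν K c (⋃ n, I n) (fun z => ⨆ n, f n z) a = ⨆ n, cutOp ν K c (I n) (f n) a := by
  have hmono : Monotone fun n => (I n).indicator (f n) := fun m n hmn z =>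
    (Set.indicator_le_indicator (hf hmn z)).trans
      (Set.indicator_le_indicator_of_subset (hI hmn) (fun _ => zero_le) z)
  have hQ : transOp ν K ((⋃ n, I n).indicator fun z => ⨆ n, f n z) =
      fun a => ⨆ n, transOp ν K ((I n).indicator (f n)) a := funext fun a => by
    simp only [transOp, indicator_iUnion_iSup hI hf, ENNReal.mul_iSup]
    exact lintegral_iSup (fun n => (hK.measurable_right a).mul ((hfm n).indicator (hIm n)))
      fun m n hmn z => mul_le_mul_right (hmono hmn z) _
  unfold cutOp
  simp only [hQ, ENNReal.mul_iSup]
  exact indicator_iUnion_iSup hI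
    (fun m n hmn z => mul_le_mul_right (transOp_mono (hmono hmn) z) _) a

lemma exists_lt_lintegral_sq_cutOp [SFinite ν] (hK : IsSymmDensity ν K) (c : ℝ≥0) {I : ℕ → Set α}
    (hI : Monotone I) (hIm : ∀ n, MeasurableSet (I n)) {f : ℕ → α → ℝ≥0∞} (hf : Monotone f)
    (hfm : ∀ n, Measurable (f n)) {B : ℝ≥0∞}
    (hB : B < ∫⁻ a, cutOp ν K c (⋃ n, I n) (fun z => ⨆ n, f n z) a ^ 2 ∂ν) :
    ∃ n, B < ∫⁻ a, cutOp ν K c (I n) (f n) a ^ 2 ∂ν := by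
  simp only [cutOp_iUnion_iSup hK c hI hIm hf hfm, ENNReal.iSup_pow] at hB
  rw [lintegral_iSup (fun n => (measurable_cutOp hK c (hIm n) (hfm n)).pow_const 2)
    fun m n hmn z => pow_le_pow_left' (cutOp_le_cutOp c (hI hmn) (hf hmn) z) 2] at hB
  exact lt_iSup_iff.1 hB

lemma pow_two_pow_mul_le_of_sq_le {b : ℕ → ℝ≥0∞} {M N : ℝ≥0∞} (hN : N ≠ 0) (hN' : N ≠ ∞)
    (hsq : ∀ m, b m ^ 2 ≤ N * b (m + m)) (h2 : M * N ≤ b 2) (k : ℕ) :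
    M ^ 2 ^ k * N ≤ b (2 ^ (k + 1)) := by
  induction k with
  | zero => simpa using h2
  | succ k ih =>
    refine (ENNReal.mul_le_mul_iff_right hN hN').1 ?_
    calc N * (M ^ 2 ^ (k + 1) * N) = (M ^ 2 ^ k * N) ^ 2 := by rw [pow_succ 2, pow_mul]; ring
      _ ≤ b (2 ^ (k + 1)) ^ 2 := pow_le_pow_left' ih 2
      _ ≤ N * b (2 ^ (k + 1) + 2 ^ (k + 1)) := hsq _
      _ = N * b (2 ^ (k + 1 + 1)) := by rw [← two_mul, ← pow_succ']

lemma exists_lt_lintegral_mul_iterate [SFinite ν] (hK : IsSymmDensity ν K) {c : ℝ≥0} {I : Set α}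
    (hI : MeasurableSet I) {g : α → ℝ≥0∞} (hg : Measurable g) {M N : ℝ≥0∞} (hM : 1 < M)
    (hN : N ≠ ∞) (hgN : ∫⁻ a, g a ^ 2 ∂ν ≤ N) (h : M * N < ∫⁻ a, cutOp ν K c I g a ^ 2 ∂ν)
    {B : ℝ≥0∞} (hB : B ≠ ∞) : ∃ m : ℕ, B < ∫⁻ a, g a * (cutOp ν K c I)^[m] g a ∂ν := by
  set A := cutOp ν K c I
  set b : ℕ → ℝ≥0∞ := fun m => ∫⁻ a, g a * A^[m] g a ∂ν
  have hAm : ∀ m, Measurable (A^[m] g) := measurable_iterate_cutOp hK c hI hg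
  have hdouble (m : ℕ) : ∫⁻ a, A^[m] g a ^ 2 ∂ν = b (m + m) := by
    simp only [b, Function.iterate_add_apply, sq]
    exact (lintegral_mul_iterate_cutOp hK c hI hg (hAm m) m).symm
  have hsq (m : ℕ) : b m ^ 2 ≤ N * b (m + m) :=
    (sq_lintegral_mul_le hg (hAm m)).trans (mul_le_mul' hgN (hdouble m).le)
  have h2 : M * N < b 2 := h.trans_eq (hdouble 1)
  have hN0 : N ≠ 0 := by
    rintro rfl
    have hb2 : b 2 = 0 := by simpa using hsq 2
    exact not_lt_zero (h2.trans_eq hb2)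
  have hlim : Tendsto (fun k : ℕ => M ^ 2 ^ k * N) atTop (𝓝 ∞) := by
    have hpow := (ENNReal.tendsto_pow_atTop_nhds_top_iff.2 hM).comp
      (tendsto_pow_atTop_atTop_of_one_lt one_lt_two)
    simpa only [ENNReal.top_mul hN0, Function.comp_def] using
      ENNReal.Tendsto.mul_const (b := N) hpow (.inl ENNReal.top_ne_zero)
  obtain ⟨k, hk⟩ := (hlim.eventually (lt_mem_nhds hB.lt_top)).exists
  exact ⟨2 ^ (k + 1), hk.trans_le (pow_two_pow_mul_le_of_sq_le hN0 hN hsq h2.le k)⟩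

lemma iterate_cutOp_indicator_one_le (hK : IsSymmDensity ν K) (c : ℝ≥0) (I : Set α) (j : ℕ)
    (a : α) : (cutOp ν K c I)^[j] (I.indicator 1) a ≤ c ^ j := by
  induction j generalizing a with
  | zero => simpa using Set.indicator_le_self I (1 : α → ℝ≥0∞) a
  | succ j ih =>
    rw [Function.iterate_succ_apply', pow_succ']
    exact (cutOp_le _ _ _ _).trans (mul_le_mul_right (transOp_le_const hK ih a) _)

lemma iterate_cutOp_indicator_one_of_notMem (c : ℝ≥0) {I : Set α} (j : ℕ) {a : α} (ha : a ∉ I) :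
    (cutOp ν K c I)^[j] (I.indicator 1) a = 0 := by
  cases j with
  | zero => exact Set.indicator_of_notMem ha _
  | succ j => rw [Function.iterate_succ_apply', cutOp_of_notMem ha]

lemma lintegral_mul_iterate_cutOp_le {c : ℝ≥0} {I : Set α} (hI : MeasurableSet I)
    {g : α → ℝ≥0∞} {t : ℝ≥0∞} (ht : t ≠ ∞) (hg : ∀ a, g a ≤ t * I.indicator 1 a) (m : ℕ) :
    ∫⁻ a, g a * (cutOp ν K c I)^[m] g a ∂ν ≤
      t ^ 2 * ∫⁻ a in I, (cutOp ν K c I)^[m] (I.indicator 1) a ∂ν := by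
  rw [← lintegral_const_mul' _ _ (ENNReal.pow_ne_top ht), ← lintegral_indicator hI]
  refine lintegral_mono fun a => (mul_le_mul' (hg a) ((cutOp_mono c I).iterate m hg a)).trans ?_
  rw [iterate_cutOp_const_mul c I ht]
  by_cases ha : a ∈ I
  · simp only [Set.indicator_of_mem ha, Pi.one_apply, mul_one, sq, mul_assoc, le_refl]
  · simp only [Set.indicator_of_notMem ha, mul_zero, zero_mul, le_refl]

lemma mul_setLIntegral_le_iterate_cutOp_succ {c : ℝ≥0} {I : Set α} (hI : MeasurableSet I)
    {k : ℝ≥0∞} (hk : k ≠ ∞) (hkK : ∀ a ∈ I, ∀ z ∈ I, k ≤ K a z) (m : ℕ) {a : α} (ha : a ∈ I) :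
    c * k * ∫⁻ z in I, (cutOp ν K c I)^[m] (I.indicator 1) z ∂ν ≤
      (cutOp ν K c I)^[m + 1] (I.indicator 1) a := by
  rw [Function.iterate_succ_apply', cutOp_of_mem ha, mul_assoc, ← lintegral_const_mul' _ _ hk,
    ← lintegral_indicator hI]
  refine mul_le_mul_right (lintegral_mono fun z => ?_) _
  by_cases hz : z ∈ I
  · rw [Set.indicator_of_mem hz, Set.indicator_of_mem hz]
    exact mul_le_mul_left (hkK a ha z hz) _
  · rw [Set.indicator_of_notMem hz]
    exact zero_le

lemma IsStrictSubsolution.const_mul {c r C : ℝ≥0} (hC : C ≠ 0) {I : Set α} {G : α → ℝ≥0∞}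
    (hGm : Measurable G) (hGC : ∀ a, G a ≤ C) (hGI : ∀ a ∉ I, G a = 0)
    (hG : ν {a | G a ≠ 0} ≠ 0) (hr : 1 < r) (hle : ∀ a, r * G a ≤ c * transOp ν K G a) :
    IsStrictSubsolution ν K c I r fun a => (C : ℝ≥0∞)⁻¹ * G a := by
  have hC0 : (C : ℝ≥0∞) ≠ 0 := ENNReal.coe_ne_zero.2 hC
  refine ⟨hGm.const_mul _, fun a => ?_, fun a ha => by rw [hGI a ha, mul_zero], ?_, hr,
    fun a => ?_⟩
  · exact (mul_le_mul_right (hGC a) _).trans_eq (ENNReal.inv_mul_cancel hC0 ENNReal.coe_ne_top)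
  · simpa only [mul_ne_zero_iff, ne_eq, ENNReal.inv_eq_zero, ENNReal.coe_ne_top,
      not_false_eq_true, true_and] using hG
  · rw [transOp_const_mul (ENNReal.inv_ne_top.2 hC0), mul_left_comm, mul_left_comm (c : ℝ≥0∞)]
    exact mul_le_mul_right (hle a) _

/-- The maximum over `j ≤ m` of `sʲ` times the expected number of individuals alive in generation
`j`. Taking a maximum in place of the usual sum makes monotonicity of the operator suffice. -/
noncomputable def discountedMax (ν : Measure α) (K : α → α → ℝ≥0∞) (c : ℝ≥0) (I : Set α) (s : ℝ≥0)
    (m : ℕ) (a : α) : ℝ≥0∞ :=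
  ⨆ j : Fin (m + 1), (s : ℝ≥0∞) ^ (j : ℕ) * (cutOp ν K c I)^[j] (I.indicator 1) a

lemma measurable_discountedMax [SFinite ν] (hK : IsSymmDensity ν K) (c : ℝ≥0) {I : Set α}
    (hI : MeasurableSet I) (s : ℝ≥0) (m : ℕ) : Measurable (discountedMax ν K c I s m) :=
  .iSup fun j => (measurable_iterate_cutOp hK c hI (measurable_one.indicator hI) j).const_mul _

lemma discountedMax_le (hK : IsSymmDensity ν K) (c : ℝ≥0) (I : Set α) {s : ℝ≥0} (hs : s ≤ 1) (m : ℕ)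
    (a : α) : discountedMax ν K c I s m a ≤ (max 1 c ^ m : ℝ≥0) := iSup_le fun j => by
  have hj : c ^ (j : ℕ) ≤ max 1 c ^ m :=
    (pow_le_pow_left' (le_max_right _ _) _).trans
      (pow_le_pow_right₀ (le_max_left _ _) (Nat.lt_succ_iff.1 j.2))
  calc (s : ℝ≥0∞) ^ (j : ℕ) * (cutOp ν K c I)^[j] (I.indicator 1) a ≤ 1 * c ^ (j : ℕ) :=
        mul_le_mul' (pow_le_one' (by exact_mod_cast hs) _)
          (iterate_cutOp_indicator_one_le hK c I j a)
    _ ≤ (max 1 c ^ m : ℝ≥0) := by rw [one_mul]; exact_mod_cast hj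

lemma one_le_discountedMax (c : ℝ≥0) {I : Set α} (s : ℝ≥0) (m : ℕ) {a : α} (ha : a ∈ I) :
    1 ≤ discountedMax ν K c I s m a :=
  le_iSup_of_le 0 (by simp [ha])

lemma discountedMax_of_notMem (c : ℝ≥0) {I : Set α} (s : ℝ≥0) (m : ℕ) {a : α} (ha : a ∉ I) :
    discountedMax ν K c I s m a = 0 := by
  simp only [discountedMax, iterate_cutOp_indicator_one_of_notMem c _ ha, mul_zero, iSup_const]

lemma mul_discountedMax_le_cutOp {c : ℝ≥0} {I : Set α} {m : ℕ}
    (h2 : ∀ a ∈ I, 2 ≤ (cutOp ν K c I)^[m + 1] (I.indicator 1) a) {r : ℝ≥0}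
    (hr : r ^ (m + 1) = 2) (a : α) :
    r * discountedMax ν K c I r⁻¹ m a ≤ cutOp ν K c I (discountedMax ν K c I r⁻¹ m) a := by
  have hr0 : r ≠ 0 := fun h => two_ne_zero (hr.symm.trans (by rw [h, zero_pow m.succ_ne_zero]))
  set u : ℕ → α → ℝ≥0∞ := fun j a =>
    ((r⁻¹ : ℝ≥0) : ℝ≥0∞) ^ j * (cutOp ν K c I)^[j] (I.indicator 1) a with hu
  have apply_u (j : ℕ) : r * u (j + 1) a = cutOp ν K c I (u j) a := by
    rw [hu, cutOp_const_mul c I (ENNReal.pow_ne_top ENNReal.coe_ne_top),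
      ← Function.iterate_succ_apply' (cutOp ν K c I), ← mul_assoc, pow_succ', ← mul_assoc,
      ← ENNReal.coe_mul, mul_inv_cancel₀ hr0, ENNReal.coe_one, one_mul]
  have wrap_around : u 0 a ≤ u (m + 1) a := by
    by_cases ha : a ∈ I
    · calc u 0 a = ((r⁻¹ : ℝ≥0) : ℝ≥0∞) ^ (m + 1) * 2 := by
            rw [← ENNReal.coe_pow, inv_pow, hr, ← ENNReal.coe_ofNat, ← ENNReal.coe_mul,
              inv_mul_cancel₀ two_ne_zero]
            simp [u, ha]
        _ ≤ u (m + 1) a := mul_le_mul_right (h2 a ha) _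
    · simp [u, ha]
  have apply_u_le (j : Fin (m + 1)) :
      cutOp ν K c I (u j) a ≤ cutOp ν K c I (discountedMax ν K c I r⁻¹ m) a :=
    cutOp_mono c I (fun z => le_iSup (fun j : Fin (m + 1) => u j z) j) a
  rw [discountedMax, ENNReal.mul_iSup]
  refine iSup_le fun j => ?_
  induction j using Fin.cases with
  | zero => exact
    (mul_le_mul_right wrap_around _).trans ((apply_u m).trans_le (apply_u_le (.last m)))
  | succ j => exact (apply_u j).trans_le (apply_u_le j.castSucc)

lemma exists_isStrictSubsolution_of_two_le [SFinite ν] (hK : IsSymmDensity ν K) {c : ℝ≥0}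
    {I : Set α} (hI : MeasurableSet I) (hν : ν I ≠ 0) {m : ℕ}
    (h2 : ∀ a ∈ I, 2 ≤ (cutOp ν K c I)^[m + 1] (I.indicator 1) a) :
    ∃ r g, IsStrictSubsolution ν K c I r g := by
  have hr : 1 < (2 : ℝ≥0) ^ (1 / ((m + 1 : ℕ) : ℝ)) := NNReal.one_lt_rpow one_lt_two (by positivity)
  have hrm : ((2 : ℝ≥0) ^ (1 / ((m + 1 : ℕ) : ℝ))) ^ (m + 1) = 2 := by
    rw [one_div, NNReal.rpow_inv_natCast_pow _ m.succ_ne_zero]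
  refine ⟨_, _, .const_mul (pow_ne_zero m (zero_lt_one.trans_le (le_max_left 1 c)).ne')
    (measurable_discountedMax hK c hI _ m)
    (discountedMax_le hK c I (inv_le_one_of_one_le₀ hr.le) m)
    (fun _ => discountedMax_of_notMem c _ m) (fun h0 => hν ?_) hr
    fun a => (mul_discountedMax_le_cutOp h2 hrm a).trans (cutOp_le c I _ a)⟩
  exact measure_mono_null
    (fun a ha => (zero_lt_one.trans_le (one_le_discountedMax c _ m ha)).ne') h0

lemma exists_isStrictSubsolution_of_lintegral_sq_lt [SFinite ν] (hK : IsSymmDensity ν K)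
    {c : ℝ≥0} (hc : c ≠ 0) {I : Set α} (hI : MeasurableSet I) {k : ℝ≥0} (hk : k ≠ 0)
    (hkK : ∀ a ∈ I, ∀ z ∈ I, k ≤ K a z) {g : α → ℝ≥0∞} (hg : Measurable g) {t : ℝ≥0∞} (ht : t ≠ ∞)
    (hgt : ∀ a, g a ≤ t * I.indicator 1 a) {M N : ℝ≥0∞} (hM : 1 < M) (hN : N ≠ ∞)
    (hgN : ∫⁻ a, g a ^ 2 ∂ν ≤ N) (hgrow : M * N < ∫⁻ a, cutOp ν K c I g a ^ 2 ∂ν) :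
    ∃ r g, IsStrictSubsolution ν K c I r g := by
  have hck : (c * k : ℝ≥0∞) ≠ 0 := by exact_mod_cast mul_ne_zero hc hk
  have hν : ν I ≠ 0 := fun h0 => by
    rw [lintegral_sq_cutOp hI, Measure.restrict_eq_zero.2 h0, lintegral_zero_measure,
      mul_zero] at hgrow
    exact not_lt_zero hgrow
  obtain ⟨m, hm⟩ := exists_lt_lintegral_mul_iterate hK hI hg hM hN hgN hgrow
    (B := t ^ 2 * (2 * (c * k : ℝ≥0∞)⁻¹))
    (ENNReal.mul_ne_top (ENNReal.pow_ne_top ht)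
      (ENNReal.mul_ne_top ENNReal.ofNat_ne_top (ENNReal.inv_ne_top.2 hck)))
  have hmass : 2 * (c * k : ℝ≥0∞)⁻¹ ≤ ∫⁻ z in I, (cutOp ν K c I)^[m] (I.indicator 1) z ∂ν :=
    (lt_of_mul_lt_mul_left' (hm.trans_le (lintegral_mul_iterate_cutOp_le hI ht hgt m))).le
  refine exists_isStrictSubsolution_of_two_le hK hI hν (m := m) fun a ha => ?_
  calc (2 : ℝ≥0∞) = c * k * (2 * (c * k : ℝ≥0∞)⁻¹) := by
        rw [mul_left_comm, ENNReal.mul_inv_cancel hck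
          (ENNReal.mul_ne_top ENNReal.coe_ne_top ENNReal.coe_ne_top), mul_one]
    _ ≤ c * k * ∫⁻ z in I, (cutOp ν K c I)^[m] (I.indicator 1) z ∂ν := by gcongr
    _ ≤ _ := mul_setLIntegral_le_iterate_cutOp_succ hI ENNReal.coe_ne_top hkK m ha

lemma IsStrictSubsolution.mono {c r : ℝ≥0} {I J : Set α} {g : α → ℝ≥0∞}
    (hg : IsStrictSubsolution ν K c I r g) (hIJ : I ⊆ J) : IsStrictSubsolution ν K c J r g :=
  { hg with eq_zero_of_notMem := fun a ha => hg.eq_zero_of_notMem a fun h => ha (hIJ h) }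

lemma HasProductBounds.exists_isStrictSubsolution [SFinite ν] {ρ κ : α → ℝ≥0∞}
    (hb : HasProductBounds ν K ρ κ) (hK : IsSymmDensity ν K) {c : ℝ≥0} (hc : c ≠ 0) {J : Set α}
    (hJ : MeasurableSet J) {g : α → ℝ≥0∞} (hg : Measurable g) (hg2 : ∫⁻ a, g a ^ 2 ∂ν ≠ ∞)
    {M : ℝ≥0∞} (hM : 1 < M)
    (hgrow : M * ∫⁻ a, g a ^ 2 ∂ν < ∫⁻ a, cutOp ν K c J g a ^ 2 ∂ν) :
    ∃ r g, IsStrictSubsolution ν K c J r g := by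
  let k (n : ℕ) : ℝ≥0 := (n + 1)⁻¹
  have hk (n : ℕ) : k n ≠ 0 := inv_ne_zero (by positivity)
  let I (n : ℕ) : Set α := J ∩ {z | k n ≤ ρ z}
  have hIm (n : ℕ) : MeasurableSet (I n) :=
    hJ.inter (measurableSet_le measurable_const hb.measurable_lower)
  have hImono : Monotone I := fun m n hmn z hz =>
    ⟨hz.1, (ENNReal.coe_le_coe.2 (inv_anti₀ (by positivity) (by gcongr))).trans hz.2⟩
  have hIJ : ⋃ n, I n = J := by
    refine (Set.iUnion_subset fun n => Set.inter_subset_left).antisymm fun z hz => ?_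
    obtain ⟨n, hn⟩ := ENNReal.exists_inv_nat_lt (hb.lower_ne_zero z)
    refine Set.mem_iUnion.2 ⟨n, hz, le_trans ?_ hn.le⟩
    rw [ENNReal.coe_inv (by positivity), ENNReal.inv_le_inv]
    push_cast
    exact le_self_add
  have hsup : (fun z => ⨆ n : ℕ, min (g z) n) = g := funext fun z => by
    rw [← inf_iSup_eq, ENNReal.iSup_natCast, inf_top_eq]
  obtain ⟨n, hn⟩ := exists_lt_lintegral_sq_cutOp hK c hImono hIm
    (f := fun n z => min (g z) n) (fun m n hmn z => min_le_min_left _ (Nat.cast_le.2 hmn))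
    (fun n => hg.min measurable_const) (by rwa [hIJ, hsup])
  have hkK : ∀ a ∈ I n, ∀ z ∈ I n, (k n * k n : ℝ≥0) ≤ K a z := fun a ha z hz =>
    (ENNReal.coe_mul _ _).trans_le ((mul_le_mul' ha.2 hz.2).trans (hb.lower_le a z))
  rw [← cutOp_indicator] at hn
  have hle (a : α) : (I n).indicator (fun z => min (g z) n) a ≤ n * (I n).indicator 1 a := by
    by_cases ha : a ∈ I n <;> simp [ha]
  obtain ⟨r, g', hg'⟩ := exists_isStrictSubsolution_of_lintegral_sq_lt hK hc (hIm n)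
    (mul_ne_zero (hk n) (hk n)) hkK ((hg.min measurable_const).indicator (hIm n))
    (ENNReal.natCast_ne_top n) hle hM hg2
    (lintegral_mono fun a => pow_le_pow_left'
      ((Set.indicator_le_self (I n) (fun z => min (g z) n) a).trans (min_le_left _ _)) 2) hn
  exact ⟨r, g', hg'.mono Set.inter_subset_left⟩

end Subsolution

section Extinction

variable {α : Type*} [MeasurableSpace α] {ν : Measure α} {K : α → α → ℝ≥0∞}

/-- The recursion satisfied by the extinction probabilities of the branching chain with `d`
offspring, as a function of the position of the ancestor. -/
noncomputable def extinctionMap (ν : Measure α) (K : α → α → ℝ≥0∞) (d : ℕ) (f : α → ℝ≥0∞) (a : α) :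
    ℝ≥0∞ :=
  transOp ν K f a ^ d

/-- A nontrivial supersolution of the fixed-point equation of `extinctionMap` for the chain killed
outside `I`. -/
structure IsExtinctionSupersolution (ν : Measure α) (K : α → α → ℝ≥0∞) (d : ℕ) (I : Set α)
    (s : α → ℝ≥0∞) : Prop where
  measurable : Measurable s
  le_one : ∀ a, s a ≤ 1
  eq_one_of_notMem : ∀ a ∉ I, s a = 1
  measure_ne_zero : ν {a | s a < 1} ≠ 0
  extinctionMap_le : extinctionMap ν K d s ≤ s

lemma pow_add_le_one {d : ℕ} {q x y r : ℝ≥0∞} (hqx : q + x = 1) (hr : r ≠ ∞) (hxr : 1 + d * x ≤ r)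
    (hyx : r * y ≤ d * x) : q ^ d + y ≤ 1 := by
  have hdx : 1 + d * x ≠ ∞ := ne_top_of_le_ne_top hr hxr
  have hq : q ^ d * (1 + d * x) ≤ 1 := calc
    q ^ d * (1 + d * x) ≤ q ^ d * (1 + x) ^ d := by
      gcongr
      exact one_add_mul_le_pow_of_sq_nonneg zero_le zero_le zero_le d
    _ = (q + q * x) ^ d := by rw [← mul_pow, mul_add, mul_one]
    _ ≤ 1 := pow_le_one' (hqx.le.trans' (add_le_add_right
      (mul_le_of_le_one_left' (le_self_add.trans hqx.le)) q)) d
  refine (ENNReal.mul_le_mul_iff_left (by simp) hdx).1 ?_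
  calc (q ^ d + y) * (1 + d * x) = q ^ d * (1 + d * x) + (1 + d * x) * y := by ring
    _ ≤ 1 + r * y := by gcongr
    _ ≤ 1 * (1 + d * x) := by rw [one_mul]; gcongr

lemma exists_pos_le_one_one_add_mul_le (d : ℕ) {r : ℝ≥0} (hr : 1 < r) :
    ∃ ε : ℝ≥0, 0 < ε ∧ ε ≤ 1 ∧ 1 + d * ε ≤ r := by
  have hpos : 0 < d + r := by positivity
  refine ⟨(r - 1) / (d + r), div_pos (tsub_pos_of_lt hr) hpos,
    div_le_one_of_le₀ (tsub_le_self.trans le_add_self) hpos.le, ?_⟩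
  calc 1 + d * ((r - 1) / (d + r)) = 1 + (r - 1) * (d / (d + r)) := by rw [mul_div_left_comm]
    _ ≤ 1 + (r - 1) := add_le_add_right
      (mul_le_of_le_one_right' (div_le_one_of_le₀ le_self_add hpos.le)) 1
    _ = r := add_tsub_cancel_of_le hr.le

lemma transOp_one_sub_add (hK : IsSymmDensity ν K) {f : α → ℝ≥0∞} (hf : Measurable f)
    (hf1 : ∀ a, f a ≤ 1) (a : α) : transOp ν K (fun z => 1 - f z) a + transOp ν K f a = 1 := by
  refine (lintegral_add_right _ ((hK.measurable_right a).mul hf)).symm.trans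
    ((lintegral_congr fun z => ?_).trans (hK.lintegral_eq_one a))
  rw [Pi.mul_apply, ← mul_add, tsub_add_cancel_of_le (hf1 z), mul_one]

lemma IsStrictSubsolution.exists_isExtinctionSupersolution {d : ℕ} {I : Set α} {r : ℝ≥0}
    {g : α → ℝ≥0∞} (hg : IsStrictSubsolution ν K d I r g) (hK : IsSymmDensity ν K) :
    ∃ s, IsExtinctionSupersolution ν K d I s := by
  obtain ⟨ε, hε0, hε1, hεr⟩ := exists_pos_le_one_one_add_mul_le d hg.one_lt
  have hε0' : (ε : ℝ≥0∞) ≠ 0 := ENNReal.coe_ne_zero.2 hε0.ne'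
  have hεg (a : α) : ε * g a ≤ 1 := mul_le_one' (by exact_mod_cast hε1) (hg.le_one a)
  have hεgm : Measurable fun a => ε * g a := hg.measurable.const_mul _
  refine ⟨fun a => 1 - ε * g a, measurable_const.sub hεgm, fun a => tsub_le_self, fun a ha => ?_,
    fun h0 => hg.measure_ne_zero (measure_mono_null (fun a ha => ?_) h0), fun a => ?_⟩
  · simp only [hg.eq_zero_of_notMem a ha, mul_zero, tsub_zero]
  · exact ENNReal.sub_lt_self ENNReal.one_ne_top one_ne_zero (mul_ne_zero hε0' ha)
  · refine ENNReal.le_sub_of_add_le_right (ne_top_of_le_ne_top ENNReal.one_ne_top (hεg a)) ?_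
    refine pow_add_le_one (transOp_one_sub_add hK hεgm hεg a) (r := r) ENNReal.coe_ne_top ?_ ?_
    · rw [transOp_const_mul ENNReal.coe_ne_top]
      calc 1 + d * (ε * transOp ν K g a) ≤ 1 + d * (ε * 1) := by
            gcongr
            exact transOp_le_const hK hg.le_one a
        _ ≤ r := by rw [mul_one]; exact_mod_cast hεr
    · rw [transOp_const_mul ENNReal.coe_ne_top, mul_left_comm, mul_left_comm (d : ℝ≥0∞)]
      exact mul_le_mul_right (hg.mul_le a) _

lemma measurable_extinctionMap [SFinite ν] (hK : IsSymmDensity ν K) (d : ℕ) {f : α → ℝ≥0∞}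
    (hf : Measurable f) : Measurable (extinctionMap ν K d f) :=
  (measurable_transOp hK hf).pow_const d

lemma extinctionMap_mono (d : ℕ) : Monotone (extinctionMap ν K d) :=
  fun _ _ h a => pow_le_pow_left' (transOp_mono h a) d

lemma measurable_iterate_extinctionMap [SFinite ν] (hK : IsSymmDensity ν K) (d : ℕ)
    {f : α → ℝ≥0∞} (hf : Measurable f) (n : ℕ) : Measurable ((extinctionMap ν K d)^[n] f) := by
  induction n with
  | zero => exact hf
  | succ n ih =>
    rw [Function.iterate_succ_apply']
    exact measurable_extinctionMap hK d ih

lemma tendsto_transOp (hK : IsSymmDensity ν K) {u : ℕ → α → ℝ≥0∞} (hu : ∀ n, Measurable (u n))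
    (hu1 : ∀ n a, u n a ≤ 1) {w : α → ℝ≥0∞} (hw : ∀ a, Tendsto (fun n => u n a) atTop (𝓝 (w a)))
    (a : α) : Tendsto (fun n => transOp ν K (u n) a) atTop (𝓝 (transOp ν K w a)) := by
  have htop : ∫⁻ z, K a z ∂ν ≠ ∞ := by rw [hK.lintegral_eq_one]; exact ENNReal.one_ne_top
  refine tendsto_lintegral_of_dominated_convergence (K a)
    (fun n => (hK.measurable_right a).mul (hu n))
    (fun n => .of_forall fun z => mul_le_of_le_one_right' (hu1 n z)) htop ?_
  filter_upwards [ae_lt_top (hK.measurable_right a) htop] with z hz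
  exact ENNReal.Tendsto.const_mul (hw z) (.inr hz.ne)

lemma transOp_ne_zero (hK : IsSymmDensity ν K) (hpos : ∀ a z, K a z ≠ 0) {f : α → ℝ≥0∞}
    (hf : Measurable f) (hf0 : ∫⁻ a, f a ∂ν ≠ 0) (a : α) : transOp ν K f a ≠ 0 := fun h0 => by
  refine hf0 ((lintegral_eq_zero_iff hf).2 ?_)
  filter_upwards [(lintegral_eq_zero_iff ((hK.measurable_right a).mul hf)).1 h0] with z hz
  exact (mul_eq_zero.1 hz).resolve_left (hpos a z)

/- Since `w = (Kw)ᵈ ≤ Kw` while `w` and `Kw` have the same integral, `w = wᵈ` almost everywhere, so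
that `w` only takes the values `0` and `1`; where it is `0`, so is `Kw`. -/
lemma lintegral_eq_zero_of_extinctionMap_eq [IsFiniteMeasure ν] (hK : IsSymmDensity ν K)
    (hpos : ∀ a z, K a z ≠ 0) {d : ℕ} (hd : 2 ≤ d) {w : α → ℝ≥0∞} (hw : Measurable w)
    (hw1 : ∀ a, w a ≤ 1) (hlt : ν {a | w a < 1} ≠ 0) (hfix : extinctionMap ν K d w = w) :
    ∫⁻ a, w a ∂ν = 0 := by
  by_contra hne
  have hfix' (a : α) : transOp ν K w a ^ d = w a := congrFun hfix a
  have hint : ∫⁻ a, w a ∂ν ≠ ∞ := ne_top_of_le_ne_top (by simp) (lintegral_mono hw1)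
  have heq : w =ᵐ[ν] transOp ν K w := by
    refine ae_eq_of_ae_le_of_lintegral_le (.of_forall fun a => ?_) hint
      (measurable_transOp hK hw).aemeasurable (lintegral_transOp hK hw).le
    rw [← hfix' a]
    exact pow_le_of_le_one zero_le (transOp_le_const hK hw1 a) (by lia)
  refine hlt (measure_eq_zero_iff_ae_notMem.2 ?_)
  filter_upwards [heq] with a ha (hlt : w a < 1)
  have hw0 : w a ≠ 0 := ha.trans_ne (transOp_ne_zero hK hpos hw hne a)
  obtain ⟨k, rfl⟩ := Nat.exists_eq_add_of_le' hd
  have hpow : w a ^ (k + 1) * w a < 1 * w a :=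
    ENNReal.mul_lt_mul_left hw0 (hlt.trans ENNReal.one_lt_top).ne (pow_lt_one' hlt k.succ_ne_zero)
  rw [one_mul, ← pow_succ] at hpow
  exact hpow.ne ((congrArg (· ^ (k + 2)) ha).trans (hfix' a))

lemma IsExtinctionSupersolution.tendsto_lintegral_iterate [IsFiniteMeasure ν]
    (hK : IsSymmDensity ν K) (hpos : ∀ a z, K a z ≠ 0) {d : ℕ} (hd : 2 ≤ d) {I : Set α}
    {s : α → ℝ≥0∞} (hs : IsExtinctionSupersolution ν K d I s) :
    Tendsto (fun n => ∫⁻ a, (extinctionMap ν K d)^[n] s a ∂ν) atTop (𝓝 0) := by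
  set u : ℕ → α → ℝ≥0∞ := fun n => (extinctionMap ν K d)^[n] s
  have hu (n : ℕ) : Measurable (u n) := measurable_iterate_extinctionMap hK d hs.measurable n
  have hanti : Antitone u := (extinctionMap_mono d).antitone_iterate_of_map_le hs.extinctionMap_le
  have hus (n : ℕ) : u n ≤ s := hanti n.zero_le
  have hu1 (n : ℕ) (a : α) : u n a ≤ 1 := (hus n a).trans (hs.le_one a)
  have hlim (a : α) : Tendsto (fun n => u n a) atTop (𝓝 (⨅ n, u n a)) :=
    tendsto_atTop_iInf fun m n hmn => hanti hmn a
  have hfix : extinctionMap ν K d (fun a => ⨅ n, u n a) = fun a => ⨅ n, u n a := funext fun a => by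
    refine tendsto_nhds_unique (ENNReal.Tendsto.pow (tendsto_transOp hK hu hu1 hlim a))
      (((hlim a).comp (tendsto_add_atTop_nat 1)).congr fun n => ?_)
    exact congrFun (Function.iterate_succ_apply' _ n s) a
  have hws (a : α) : ⨅ n, u n a ≤ s a := iInf_le _ 0
  rw [← lintegral_eq_zero_of_extinctionMap_eq hK hpos hd (.iInf hu)
    (fun a => (hws a).trans (hs.le_one a))
    (fun h0 => hs.measure_ne_zero (measure_mono_null (fun a ha => (hws a).trans_lt ha) h0)) hfix]
  exact tendsto_lintegral_of_dominated_convergence 1 hu (fun n => .of_forall (hu1 n))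
    (by simp) (.of_forall hlim)

end Extinction

section CutOperator

variable {α : Type*} [MeasurableSpace α] {ν : Measure α} {K : α → α → ℝ≥0∞}

/-- `T` is the operator `f ↦ 1_I c K (1_I f)` on `L²(ν)`, the counterpart of `cutOp` whose norm is
`λ_h` for the half-line `I = [h, ∞)`. -/
def IsCutOperator (ν : Measure α) (K : α → α → ℝ≥0∞) (c : ℝ≥0) (I : Set α)
    (T : Lp ℝ 2 ν →L[ℝ] Lp ℝ 2 ν) : Prop :=
  ∀ f : Lp ℝ 2 ν, T f =ᵐ[ν] I.indicator fun a => c * ∫ z, (K a z).toReal * I.indicator f z ∂ν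

lemma enorm_sq_eq_lintegral (f : Lp ℝ 2 ν) : ‖f‖ₑ ^ 2 = ∫⁻ a, ‖f a‖ₑ ^ 2 ∂ν := by
  simpa only [NNReal.coe_ofNat, ENNReal.coe_ofNat, ENNReal.rpow_ofNat, Lp.enorm_def] using
    eLpNorm_nnreal_pow_eq_lintegral (f := f) (μ := ν) (two_ne_zero (α := ℝ≥0))

lemma ae_lt_top_of_lintegral_sq_ne_top {F : α → ℝ≥0∞} (hF : Measurable F)
    (hF2 : ∫⁻ a, F a ^ 2 ∂ν ≠ ∞) : ∀ᵐ a ∂ν, F a < ∞ := by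
  filter_upwards [ae_lt_top (hF.pow_const 2) hF2] with a ha
  exact (ENNReal.pow_lt_top_iff.1 ha).resolve_right two_ne_zero

lemma exists_Lp_ae_eq_toReal {F : α → ℝ≥0∞} (hF : Measurable F) (hF2 : ∫⁻ a, F a ^ 2 ∂ν ≠ ∞) :
    ∃ f : Lp ℝ 2 ν, f =ᵐ[ν] (fun a => (F a).toReal) ∧ ‖f‖ₑ ^ 2 = ∫⁻ a, F a ^ 2 ∂ν := by
  have heq : ∫⁻ a, ‖(F a).toReal‖ₑ ^ 2 ∂ν = ∫⁻ a, F a ^ 2 ∂ν := lintegral_congr_ae <| by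
    filter_upwards [ae_lt_top_of_lintegral_sq_ne_top hF hF2] with a ha
    rw [Real.enorm_toReal ha.ne]
  have hmem : MemLp (fun a => (F a).toReal) 2 ν := by
    refine ⟨hF.ennreal_toReal.aestronglyMeasurable, ?_⟩
    rw [eLpNorm_lt_top_iff_lintegral_rpow_enorm_lt_top two_ne_zero ENNReal.ofNat_ne_top]
    simpa only [ENNReal.toReal_ofNat, ENNReal.rpow_ofNat, heq] using hF2.lt_top
  refine ⟨hmem.toLp, hmem.coeFn_toLp, ?_⟩
  rw [enorm_sq_eq_lintegral, ← heq]
  refine lintegral_congr_ae ?_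
  filter_upwards [hmem.coeFn_toLp] with a ha
  rw [ha]

lemma lintegral_ne_top_of_lintegral_sq_ne_top [IsFiniteMeasure ν] {F : α → ℝ≥0∞}
    (hF : Measurable F) (hF2 : ∫⁻ a, F a ^ 2 ∂ν ≠ ∞) : ∫⁻ a, F a ∂ν ≠ ∞ := by
  have hsq := sq_lintegral_mul_le (ν := ν) (f := 1) measurable_one hF
  simp only [Pi.one_apply, one_mul, one_pow, lintegral_one] at hsq
  exact fun htop => ENNReal.mul_ne_top (measure_ne_top ν _) hF2
    (top_le_iff.1 (by simpa [htop] using hsq))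

namespace IsCutOperator

lemma enorm_apply_le {c : ℝ≥0} {I : Set α} {T : Lp ℝ 2 ν →L[ℝ] Lp ℝ 2 ν}
    (hT : IsCutOperator ν K c I T) (f : Lp ℝ 2 ν) :
    ∀ᵐ a ∂ν, ‖T f a‖ₑ ≤ cutOp ν K c I (fun z => ‖f z‖ₑ) a := by
  filter_upwards [hT f] with a ha
  rw [ha, cutOp, enorm_indicator_eq_indicator_enorm]
  refine Set.indicator_le_indicator ?_
  rw [enorm_mul, Real.enorm_of_nonneg c.coe_nonneg, ENNReal.ofReal_coe_nnreal]
  refine mul_le_mul_right ((enorm_integral_le_lintegral_enorm _).trans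
    (lintegral_mono fun z => ?_)) _
  rw [enorm_mul, Real.enorm_of_nonneg ENNReal.toReal_nonneg, enorm_indicator_eq_indicator_enorm]
  exact mul_le_mul_left ENNReal.ofReal_toReal_le _

lemma enorm_apply_eq [IsFiniteMeasure ν] (hK : IsSymmDensity ν K) {c : ℝ≥0} {I : Set α}
    (hI : MeasurableSet I) {T : Lp ℝ 2 ν →L[ℝ] Lp ℝ 2 ν} (hT : IsCutOperator ν K c I T)
    {F : α → ℝ≥0∞} (hF : Measurable F) (hF2 : ∫⁻ a, F a ^ 2 ∂ν ≠ ∞) {f : Lp ℝ 2 ν}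
    (hf : f =ᵐ[ν] fun a => (F a).toReal) : ∀ᵐ a ∂ν, ‖T f a‖ₑ = cutOp ν K c I F a := by
  have hFI : Measurable (I.indicator F) := hF.indicator hI
  have hfin : ∫⁻ a, transOp ν K (I.indicator F) a ∂ν ≠ ∞ := by
    rw [lintegral_transOp hK hFI]
    exact ne_top_of_le_ne_top (lintegral_ne_top_of_lintegral_sq_ne_top hF hF2)
      (lintegral_mono (Set.indicator_le_self I F))
  filter_upwards [hT f, ae_lt_top (measurable_transOp hK hFI) hfin] with a ha hQ
  have hKF : Measurable fun z => K a z * I.indicator F z := (hK.measurable_right a).mul hFI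
  have hint : ∫ z, (K a z).toReal * I.indicator f z ∂ν =
      (transOp ν K (I.indicator F) a).toReal := by
    rw [transOp, ← integral_toReal hKF.aemeasurable (ae_lt_top hKF hQ.ne)]
    refine integral_congr_ae ?_
    filter_upwards [hf] with z hz
    by_cases hzI : z ∈ I <;> simp [hzI, hz]
  rw [ha, cutOp, enorm_indicator_eq_indicator_enorm]
  by_cases haI : a ∈ I
  · rw [Set.indicator_of_mem haI, Set.indicator_of_mem haI, hint, enorm_mul,
      Real.enorm_toReal hQ.ne, Real.enorm_of_nonneg c.coe_nonneg, ENNReal.ofReal_coe_nnreal]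
  · rw [Set.indicator_of_notMem haI, Set.indicator_of_notMem haI]

lemma lintegral_sq_cutOp_le [IsFiniteMeasure ν] (hK : IsSymmDensity ν K) {c : ℝ≥0} {I : Set α}
    (hI : MeasurableSet I) {T : Lp ℝ 2 ν →L[ℝ] Lp ℝ 2 ν} (hT : IsCutOperator ν K c I T)
    {F : α → ℝ≥0∞} (hF : Measurable F) (hF2 : ∫⁻ a, F a ^ 2 ∂ν ≠ ∞) :
    ∫⁻ a, cutOp ν K c I F a ^ 2 ∂ν ≤ ‖T‖ₑ ^ 2 * ∫⁻ a, F a ^ 2 ∂ν := by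
  obtain ⟨f, hf, hfF⟩ := exists_Lp_ae_eq_toReal hF hF2
  calc ∫⁻ a, cutOp ν K c I F a ^ 2 ∂ν = ‖T f‖ₑ ^ 2 := by
        rw [enorm_sq_eq_lintegral]
        refine lintegral_congr_ae ?_
        filter_upwards [hT.enorm_apply_eq hK hI hF hF2 hf] with a ha
        rw [ha]
    _ ≤ (‖T‖ₑ * ‖f‖ₑ) ^ 2 := pow_le_pow_left' (T.le_opENorm f) 2
    _ = ‖T‖ₑ ^ 2 * ∫⁻ a, F a ^ 2 ∂ν := by rw [mul_pow, hfF]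

lemma exists_lt_lintegral_sq_cutOp {c : ℝ≥0} {I : Set α} (hI : MeasurableSet I)
    {T : Lp ℝ 2 ν →L[ℝ] Lp ℝ 2 ν} (hT : IsCutOperator ν K c I T) {r : ℝ≥0} (hr : r < ‖T‖₊) :
    ∃ F : α → ℝ≥0∞, Measurable F ∧ (∀ a ∉ I, F a = 0) ∧ ∫⁻ a, F a ^ 2 ∂ν ≠ ∞ ∧
      r ^ 2 * ∫⁻ a, F a ^ 2 ∂ν < ∫⁻ a, cutOp ν K c I F a ^ 2 ∂ν := by
  obtain ⟨f, hf⟩ := T.exists_mul_lt_apply_of_lt_opNNNorm hr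
  have hfm : Measurable fun a => ‖f a‖ₑ := (Lp.stronglyMeasurable f).measurable.enorm
  have hle : ∫⁻ a, I.indicator (fun z => ‖f z‖ₑ) a ^ 2 ∂ν ≤ ‖f‖ₑ ^ 2 :=
    (lintegral_mono fun a => pow_le_pow_left' (Set.indicator_le_self _ _ a) 2).trans_eq
      (enorm_sq_eq_lintegral f).symm
  refine ⟨I.indicator fun a => ‖f a‖ₑ, hfm.indicator hI, fun a ha => Set.indicator_of_notMem ha _,
    ne_top_of_le_ne_top (by finiteness) hle, ?_⟩
  calc r ^ 2 * ∫⁻ a, I.indicator (fun z => ‖f z‖ₑ) a ^ 2 ∂ν ≤ (r * ‖f‖ₑ) ^ 2 := by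
        rw [mul_pow]
        exact mul_le_mul_right hle _
    _ < ‖T f‖ₑ ^ 2 := ENNReal.pow_right_strictMono two_ne_zero (by
        rw [enorm_eq_nnnorm, enorm_eq_nnnorm]; exact_mod_cast hf)
    _ ≤ ∫⁻ a, cutOp ν K c I (I.indicator fun z => ‖f z‖ₑ) a ^ 2 ∂ν := by
        rw [enorm_sq_eq_lintegral, cutOp_indicator]
        refine lintegral_mono_ae ?_
        filter_upwards [hT.enorm_apply_le f] with a ha
        exact pow_le_pow_left' ha 2

lemma exists_sq_add_le [IsFiniteMeasure ν] {ρ κ : α → ℝ≥0∞} (hK : IsSymmDensity ν K)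
    (hb : HasProductBounds ν K ρ κ) {c : ℝ≥0} (hc : c ≠ 0) {I J : Set α} (hI : MeasurableSet I)
    (hJ : MeasurableSet J) (hIJ : I ⊆ J) (hν : ν (J \ I) ≠ 0) {S T : Lp ℝ 2 ν →L[ℝ] Lp ℝ 2 ν}
    (hS : IsCutOperator ν K c I S) (hT : IsCutOperator ν K c J T) (hS0 : S ≠ 0) :
    ∃ δ : ℝ≥0∞, δ ≠ 0 ∧ ∀ r : ℝ≥0, ‖S‖₊ / 2 ≤ r → r < ‖S‖₊ → r ^ 2 + δ ≤ ‖T‖ₑ ^ 2 := by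
  obtain ⟨δ, hδ, hgain⟩ := hb.exists_lintegral_sq_cutOp_add_le hc hI hJ hIJ hν
    (ε := ((‖S‖₊ / 2 : ℝ≥0) : ℝ≥0∞) ^ 2) (by simpa using hS0) (by finiteness)
  refine ⟨δ, hδ, fun r hr hrS => ?_⟩
  obtain ⟨F, hF, hFI, hF2, hlt⟩ := hS.exists_lt_lintegral_sq_cutOp hI hrS
  have hF0 : ∫⁻ a, F a ^ 2 ∂ν ≠ 0 := fun h0 => by
    have hle := hS.lintegral_sq_cutOp_le hK hI hF hF2
    rw [h0, mul_zero] at hle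
    exact not_lt_zero (hlt.trans_le hle)
  refine (ENNReal.mul_le_mul_iff_left hF0 hF2).1 ?_
  calc (r ^ 2 + δ) * ∫⁻ a, F a ^ 2 ∂ν = r ^ 2 * ∫⁻ a, F a ^ 2 ∂ν + δ * ∫⁻ a, F a ^ 2 ∂ν :=
        add_mul _ _ _
    _ ≤ ∫⁻ a, cutOp ν K c I F a ^ 2 ∂ν + δ * ∫⁻ a, F a ^ 2 ∂ν := by gcongr
    _ ≤ ∫⁻ a, cutOp ν K c J F a ^ 2 ∂ν := hgain F hF hF2 hFI (hlt.le.trans' (by gcongr))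
    _ ≤ ‖T‖ₑ ^ 2 * ∫⁻ a, F a ^ 2 ∂ν := hT.lintegral_sq_cutOp_le hK hJ hF hF2

theorem norm_lt_norm [IsFiniteMeasure ν] {ρ κ : α → ℝ≥0∞} (hK : IsSymmDensity ν K)
    (hb : HasProductBounds ν K ρ κ) {c : ℝ≥0} (hc : c ≠ 0) {I J : Set α} (hI : MeasurableSet I)
    (hJ : MeasurableSet J) (hIJ : I ⊆ J) (hν : ν (J \ I) ≠ 0) {S T : Lp ℝ 2 ν →L[ℝ] Lp ℝ 2 ν}
    (hS : IsCutOperator ν K c I S) (hT : IsCutOperator ν K c J T) (hS0 : S ≠ 0) :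
    ‖S‖ < ‖T‖ := by
  obtain ⟨δ, hδ, hadd⟩ := exists_sq_add_le hK hb hc hI hJ hIJ hν hS hT hS0
  have hpos : 0 < ‖S‖₊ := nnnorm_pos.2 hS0
  have : (𝓝[<] ‖S‖₊).NeBot := nhdsLT_neBot_of_exists_lt ⟨0, hpos⟩
  have hlim : Tendsto (fun r : ℝ≥0 => (r : ℝ≥0∞) ^ 2 + δ) (𝓝[<] ‖S‖₊) (𝓝 (‖S‖ₑ ^ 2 + δ)) :=
    (Continuous.tendsto (by fun_prop) _).mono_left nhdsWithin_le_nhds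
  have hle : ‖S‖ₑ ^ 2 + δ ≤ ‖T‖ₑ ^ 2 := by
    refine le_of_tendsto hlim ?_
    filter_upwards [Ioo_mem_nhdsLT (NNReal.half_lt_self hpos.ne')] with r hr
    exact hadd r hr.1.le hr.2
  have hlt : ‖S‖ₑ ^ 2 < ‖T‖ₑ ^ 2 := (ENNReal.lt_add_right (by finiteness) hδ).trans_le hle
  exact enorm_lt_coe.1 (lt_of_pow_lt_pow_left' 2 hlt)

theorem tendsto_lintegral_iterate_cutOp [IsFiniteMeasure ν] (hK : IsSymmDensity ν K) {c : ℝ≥0}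
    {I : Set α} (hI : MeasurableSet I) {T : Lp ℝ 2 ν →L[ℝ] Lp ℝ 2 ν}
    (hT : IsCutOperator ν K c I T) (hlt : ‖T‖ < 1) :
    Tendsto (fun n => ∫⁻ a, (cutOp ν K c I)^[n] (I.indicator 1) a ∂ν) atTop (𝓝 0) := by
  set u : ℕ → α → ℝ≥0∞ := fun n => (cutOp ν K c I)^[n] (I.indicator 1)
  have hu : ∀ n, Measurable (u n) :=
    measurable_iterate_cutOp hK c hI (measurable_one.indicator hI)
  have hsq (n : ℕ) : ∫⁻ a, u n a ^ 2 ∂ν ≤ (‖T‖ₑ ^ n) ^ 2 * ν Set.univ := by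
    induction n with
    | zero =>
      refine (lintegral_mono (g := 1) fun a => ?_).trans (by simp)
      exact pow_le_one' (Set.indicator_le_self I (1 : α → ℝ≥0∞) a) 2
    | succ n ih =>
      simp only [u, Function.iterate_succ_apply']
      have hun := ne_top_of_le_ne_top (by finiteness) ih
      refine (hT.lintegral_sq_cutOp_le hK hI (hu n) hun).trans ?_
      rw [pow_succ' _ n, mul_pow, mul_assoc]
      exact mul_le_mul_right ih _
  have hle (n : ℕ) : ∫⁻ a, u n a ∂ν ≤ ν Set.univ * ‖T‖ₑ ^ n := by
    refine (ENNReal.pow_le_pow_left_iff two_ne_zero).1 ?_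
    have hcs := sq_lintegral_mul_le (ν := ν) (f := 1) measurable_one (hu n)
    simp only [Pi.one_apply, one_mul, one_pow, lintegral_one] at hcs
    calc (∫⁻ a, u n a ∂ν) ^ 2 ≤ ν Set.univ * ((‖T‖ₑ ^ n) ^ 2 * ν Set.univ) :=
          hcs.trans (mul_le_mul_right (hsq n) _)
      _ = (ν Set.univ * ‖T‖ₑ ^ n) ^ 2 := by ring
  have hpow : Tendsto (fun n => ‖T‖ₑ ^ n) atTop (𝓝 0) :=
    ENNReal.tendsto_pow_atTop_nhds_zero_of_lt_one (by rwa [← ofReal_norm, ENNReal.ofReal_lt_one])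
  refine tendsto_of_tendsto_of_tendsto_of_le_of_le tendsto_const_nhds ?_ (fun _ => zero_le) hle
  simpa only [mul_zero] using ENNReal.Tendsto.const_mul hpow (.inr (measure_ne_top ν _))

theorem exists_isExtinctionSupersolution [SFinite ν] {ρ κ : α → ℝ≥0∞} (hK : IsSymmDensity ν K)
    (hb : HasProductBounds ν K ρ κ) {d : ℕ} (hd : d ≠ 0) {I : Set α} (hI : MeasurableSet I)
    {T : Lp ℝ 2 ν →L[ℝ] Lp ℝ 2 ν} (hT : IsCutOperator ν K d I T) (hlt : 1 < ‖T‖) :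
    ∃ s, IsExtinctionSupersolution ν K d I s := by
  obtain ⟨r, hr1, hr⟩ := exists_between (show (1 : ℝ≥0) < ‖T‖₊ from hlt)
  obtain ⟨F, hF, -, hF2, hgrow⟩ := hT.exists_lt_lintegral_sq_cutOp hI hr
  obtain ⟨r', g, hg⟩ := hb.exists_isStrictSubsolution hK (Nat.cast_ne_zero.2 hd) hI hF hF2
    (one_lt_pow' (ENNReal.one_lt_coe_iff.2 hr1) two_ne_zero) hgrow
  exact hg.exists_isExtinctionSupersolution hK

end IsCutOperator

end CutOperator

section Mehler

/-- The one-vertex marginal of the Gaussian free field on the `(d+1)`-regular tree. -/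
noncomputable def siteLaw (d : ℕ) : Measure ℝ :=
  gaussianReal 0 (Real.toNNReal ((d : ℝ) / ((d : ℝ) ^ 2 - 1)))

/-- The Mehler kernel: the density of the transition `a ↦ N(a/d, 1/d)` with respect to
`siteLaw d`. -/
noncomputable def mehler (d : ℕ) (a z : ℝ) : ℝ≥0∞ :=
  ENNReal.ofReal (d / √((d : ℝ) ^ 2 - 1) * Real.exp (a * z - (a ^ 2 + z ^ 2) / (2 * d)))

instance (d : ℕ) : IsProbabilityMeasure (siteLaw d) :=
  inferInstanceAs (IsProbabilityMeasure (gaussianReal _ _))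

variable {d : ℕ}

lemma sq_sub_one_pos (hd : 2 ≤ d) : 0 < (d : ℝ) ^ 2 - 1 := by
  have : (2 : ℝ) ≤ d := by exact_mod_cast hd
  nlinarith

lemma siteVar_ne_zero (hd : 2 ≤ d) : Real.toNNReal ((d : ℝ) / ((d : ℝ) ^ 2 - 1)) ≠ 0 := by
  have := sq_sub_one_pos hd
  simp only [ne_eq, Real.toNNReal_eq_zero, not_le]
  positivity

lemma measurable_mehler (d : ℕ) : Measurable (Function.uncurry (mehler d)) := by
  unfold Function.uncurry mehler
  fun_prop

lemma mehler_ne_top (a z : ℝ) : mehler d a z ≠ ∞ :=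
  ENNReal.ofReal_ne_top

lemma mehler_ne_zero (hd : 2 ≤ d) (a z : ℝ) : mehler d a z ≠ 0 := by
  have := sq_sub_one_pos hd
  simp only [mehler, ne_eq, ENNReal.ofReal_eq_zero, not_le]
  positivity

lemma gaussianPDF_mul_mehler (hd : 2 ≤ d) (a z : ℝ) :
    gaussianPDF 0 (Real.toNNReal ((d : ℝ) / ((d : ℝ) ^ 2 - 1))) z * mehler d a z =
      gaussianPDF (a / d) (Real.toNNReal (1 / d)) z := by
  have hD := sq_sub_one_pos hd
  have hd0 : (0 : ℝ) < d := by positivity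
  have hconst : √(2 * Real.pi * (d / ((d : ℝ) ^ 2 - 1))) =
      √(2 * Real.pi * (1 / d)) * (d / √((d : ℝ) ^ 2 - 1)) := by
    rw [← Real.sqrt_sq hd0.le, ← Real.sqrt_div (by positivity), Real.sqrt_sq hd0.le,
      ← Real.sqrt_mul (by positivity)]
    congr 1
    field_simp
  have hexp : Real.exp (-(z - a / d) ^ 2 / (2 * (1 / d))) =
      Real.exp (-(z - 0) ^ 2 / (2 * (d / ((d : ℝ) ^ 2 - 1)))) *
        Real.exp (a * z - (a ^ 2 + z ^ 2) / (2 * d)) := by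
    rw [← Real.exp_add]
    congr 1
    field_simp
    ring
  rw [mehler, gaussianPDF, gaussianPDF, ← ENNReal.ofReal_mul (gaussianPDFReal_nonneg _ _ _),
    gaussianPDFReal, gaussianPDFReal, Real.coe_toNNReal _ (by positivity),
    Real.coe_toNNReal _ (by positivity), hconst, hexp]
  congr 1
  field_simp

lemma withDensity_mehler (hd : 2 ≤ d) (a : ℝ) :
    (siteLaw d).withDensity (mehler d a) = gaussianReal (a / d) (Real.toNNReal (1 / d)) := by
  have hv : Real.toNNReal (1 / (d : ℝ)) ≠ 0 := by simpa using by omega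
  have hm : Measurable (mehler d a) := (measurable_mehler d).of_uncurry_left
  rw [siteLaw, gaussianReal_of_var_ne_zero _ (siteVar_ne_zero hd),
    gaussianReal_of_var_ne_zero _ hv, ← withDensity_mul _ (measurable_gaussianPDF _ _) hm]
  exact congrArg _ (funext (gaussianPDF_mul_mehler hd a))

lemma transOp_mehler (hd : 2 ≤ d) {f : ℝ → ℝ≥0∞} (hf : Measurable f) (a : ℝ) :
    transOp (siteLaw d) (mehler d) f a =
      ∫⁻ x, f x ∂gaussianReal (a / d) (Real.toNNReal (1 / d)) := by
  rw [← withDensity_mehler hd,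
    lintegral_withDensity_eq_lintegral_mul _ (measurable_mehler d).of_uncurry_left hf]
  rfl

lemma lintegral_const_add_gaussianReal (hd : 2 ≤ d) {f : ℝ → ℝ≥0∞} (hf : Measurable f) (a : ℝ) :
    ∫⁻ x, f (a / d + x) ∂gaussianReal 0 (Real.toNNReal (1 / d)) =
      transOp (siteLaw d) (mehler d) f a := by
  rw [transOp_mehler hd hf, ← lintegral_map hf (by fun_prop : Measurable fun x => a / d + x),
    gaussianReal_map_const_add, zero_add]

lemma map_siteLaw (hd : 2 ≤ d) (a : ℝ) :
    (siteLaw d).map (fun y => a / d + √(1 - 1 / (d : ℝ) ^ 2) * y) =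
      gaussianReal (a / d) (Real.toNNReal (1 / d)) := by
  have hD := sq_sub_one_pos hd
  have hsqrt : 0 ≤ 1 - 1 / (d : ℝ) ^ 2 := by
    rw [sub_nonneg, div_le_one (by positivity)]
    linarith
  have hcomp : (fun y : ℝ => a / d + √(1 - 1 / (d : ℝ) ^ 2) * y) =
      (fun x => a / d + x) ∘ fun y => √(1 - 1 / (d : ℝ) ^ 2) * y := rfl
  rw [hcomp, ← Measure.map_map (by fun_prop) (by fun_prop), siteLaw, gaussianReal_map_const_mul,
    gaussianReal_map_const_add, mul_zero, zero_add]
  congr 1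
  ext
  simp only [NNReal.coe_mul, NNReal.coe_mk]
  rw [Real.sq_sqrt hsqrt, Real.coe_toNNReal _ (by positivity), Real.coe_toNNReal _ (by positivity)]
  field_simp

lemma isSymmDensity_mehler (hd : 2 ≤ d) : IsSymmDensity (siteLaw d) (mehler d) where
  measurable := measurable_mehler d
  symm a z := by rw [mehler, mehler, mul_comm a z, add_comm (a ^ 2)]
  lintegral_eq_one a := by
    simpa [transOp] using transOp_mehler hd (measurable_const (a := (1 : ℝ≥0∞))) a

lemma lintegral_exp_mul_sq_gaussianReal_ne_top {v : ℝ≥0} (hv : v ≠ 0) {t : ℝ}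
    (ht : 2 * t * v < 1) : ∫⁻ z, ENNReal.ofReal (Real.exp (t * z ^ 2)) ∂gaussianReal 0 v ≠ ∞ := by
  have hv0 : (0 : ℝ) < v := NNReal.coe_pos.2 (pos_iff_ne_zero.2 hv)
  have hb : 0 < 1 / (2 * (v : ℝ)) - t := by
    rw [sub_pos, lt_div_iff₀ (mul_pos two_pos hv0)]
    linarith
  rw [gaussianReal_of_var_ne_zero _ hv,
    lintegral_withDensity_eq_lintegral_mul _ (measurable_gaussianPDF _ _) (by fun_prop)]
  refine (lintegral_congr fun z => ?_).trans_ne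
    ((integrable_exp_neg_mul_sq hb).const_mul (√(2 * Real.pi * v))⁻¹).lintegral_lt_top.ne
  rw [Pi.mul_apply, gaussianPDF, ← ENNReal.ofReal_mul (gaussianPDFReal_nonneg _ _ _),
    gaussianPDFReal, mul_assoc, ← Real.exp_add]
  congr 3
  field_simp
  ring

/- Since `|az| ≤ (a² + z²) / 2`, the exponent of the Mehler kernel lies between
`-(1 + 1/d) (a² + z²) / 2` and `(1 - 1/d) (a² + z²) / 2`. -/
lemma hasProductBounds_mehler (hd : 2 ≤ d) : HasProductBounds (siteLaw d) (mehler d)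
    (fun z => ENNReal.ofReal (√(d / √((d : ℝ) ^ 2 - 1)) * Real.exp (-((1 + 1 / d) / 2) * z ^ 2)))
    (fun z => ENNReal.ofReal (√(d / √((d : ℝ) ^ 2 - 1)) * Real.exp ((1 - 1 / d) / 2 * z ^ 2))) := by
  have hD := sq_sub_one_pos hd
  have hd1 : (1 : ℝ) < d := by exact_mod_cast hd
  set c := d / √((d : ℝ) ^ 2 - 1) with hc_def
  have hc : 0 < c := by positivity
  have hprod (t a z : ℝ) : ENNReal.ofReal (√c * Real.exp (t * a ^ 2)) *
      ENNReal.ofReal (√c * Real.exp (t * z ^ 2)) =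
        ENNReal.ofReal (c * Real.exp (t * a ^ 2 + t * z ^ 2)) := by
    rw [← ENNReal.ofReal_mul (by positivity), Real.exp_add, mul_mul_mul_comm,
      Real.mul_self_sqrt hc.le]
  have hexponent (a z : ℝ) : a * z - (a ^ 2 + z ^ 2) / (2 * d) =
      a * z - 1 / d * ((a ^ 2 + z ^ 2) / 2) := by field_simp
  refine ⟨by fun_prop, by fun_prop, fun a => ?_, fun a => ENNReal.ofReal_ne_top, ?_,
    fun a z => ?_, fun a z => ?_⟩
  · simp only [ne_eq, ENNReal.ofReal_eq_zero, not_le]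
    positivity
  · simp_rw [pow_two (ENNReal.ofReal _), hprod, ← two_mul, ← mul_assoc,
      ENNReal.ofReal_mul hc.le]
    rw [lintegral_const_mul _ (by fun_prop)]
    refine ENNReal.mul_ne_top ENNReal.ofReal_ne_top
      (lintegral_exp_mul_sq_gaussianReal_ne_top (siteVar_ne_zero hd) ?_)
    rw [Real.coe_toNNReal _ (by positivity), ← sub_pos]
    have : 1 - 2 * (2 * ((1 - 1 / d) / 2)) * (d / ((d : ℝ) ^ 2 - 1)) =
        (d - 1) ^ 2 / ((d : ℝ) ^ 2 - 1) := by
      field_simp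
      ring
    rw [this]
    exact div_pos (pow_pos (sub_pos.2 hd1) 2) hD
  · rw [hprod, mehler, ← hc_def, hexponent]
    gcongr
    nlinarith [sq_nonneg (a + z)]
  · rw [hprod, mehler, ← hc_def, hexponent]
    gcongr
    nlinarith [sq_nonneg (a - z)]

lemma siteLaw_Ici_diff_Ici_ne_zero (hd : 2 ≤ d) {h h' : ℝ} (hh : h < h') :
    siteLaw d (Set.Ici h \ Set.Ici h') ≠ 0 := by
  have : (siteLaw d).IsOpenPosMeasure :=
    (gaussianReal_absolutelyContinuous' 0 (siteVar_ne_zero hd)).isOpenPosMeasure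
  rw [Set.Ici_sdiff_Ici]
  exact ((isOpen_Ioo.measure_pos (siteLaw d) (Set.nonempty_Ioo.2 hh)).trans_le
    (measure_mono Set.Ioo_subset_Ico_self)).ne'

lemma isCutOperator_mehler (hd : 2 ≤ d) {Q : Lp ℝ 2 (siteLaw d) →L[ℝ] Lp ℝ 2 (siteLaw d)}
    (hQ : ∀ f : Lp ℝ 2 (siteLaw d), (Q f : ℝ → ℝ) =ᵐ[siteLaw d]
      fun a => ∫ y, f (a / d + √(1 - 1 / (d : ℝ) ^ 2) * y) ∂siteLaw d)
    {h : ℝ} {π : Lp ℝ 2 (siteLaw d) →L[ℝ] Lp ℝ 2 (siteLaw d)}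
    (hπ : ∀ f : Lp ℝ 2 (siteLaw d), (π f : ℝ → ℝ) =ᵐ[siteLaw d] fun a => if h ≤ a then f a else 0) :
    IsCutOperator (siteLaw d) (mehler d) d (Set.Ici h) (π ∘L ((d : ℝ) • Q) ∘L π) := fun f => by
  have hsmul := Lp.coeFn_smul (d : ℝ) (Q (π f))
  filter_upwards [hπ (((d : ℝ) • Q) (π f)), hsmul, hQ (π f)] with a houter hsmul hQa
  have hintegral : ∫ y, π f (a / d + √(1 - 1 / (d : ℝ) ^ 2) * y) ∂siteLaw d =
      ∫ z, (mehler d a z).toReal * (Set.Ici h).indicator f z ∂siteLaw d := by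
    rw [← integral_map (φ := fun y => a / d + √(1 - 1 / (d : ℝ) ^ 2) * y) (by fun_prop)
      (Lp.stronglyMeasurable (π f)).aestronglyMeasurable, map_siteLaw hd,
      ← withDensity_mehler hd, integral_withDensity_eq_integral_toReal_smul
        (measurable_mehler d).of_uncurry_left (ae_of_all _ fun z => (mehler_ne_top a z).lt_top)]
    refine integral_congr_ae ?_
    filter_upwards [hπ f] with z hz
    rw [hz, smul_eq_mul, Set.indicator_apply]
    rfl
  rw [ContinuousLinearMap.comp_apply, ContinuousLinearMap.comp_apply, houter,
    Set.indicator_apply, smul_apply, hsmul, Pi.smul_apply, hQa, hintegral]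
  rfl

end Mehler

section Tree

variable {V : Type*} {G : SimpleGraph V} {o x y z : V}

open Classical in
/-- The neighbour of `y` closer to the root `o`; it is `y` itself when there is none, as for
`y = o`. -/
noncomputable def parent (G : SimpleGraph V) (o y : V) : V :=
  if h : ∃ x, G.Adj x y ∧ G.dist o y = G.dist o x + 1 then h.choose else y

lemma exists_adj_dist_eq_add_one (hG : G.Connected) (hy : y ≠ o) :
    ∃ x, G.Adj x y ∧ G.dist o y = G.dist o x + 1 := by
  obtain ⟨p, hp⟩ := hG.exists_walk_length_eq_dist y o
  obtain ⟨x, hyx, q, rfl⟩ := p.exists_eq_cons_of_ne hy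
  refine ⟨x, hyx.symm, ?_⟩
  rw [SimpleGraph.Walk.length_cons] at hp
  have hle : G.dist x o ≤ q.length := SimpleGraph.dist_le q
  have htri : G.dist y o ≤ G.dist y x + G.dist x o := hG.dist_triangle
  rw [SimpleGraph.dist_eq_one_iff_adj.2 hyx] at htri
  rw [G.dist_comm (u := o), G.dist_comm (u := o)]
  omega

lemma parent_adj (hG : G.Connected) (hy : y ≠ o) : G.Adj (parent G o y) y := by
  have h := exists_adj_dist_eq_add_one hG hy
  rw [parent, dif_pos h]
  exact h.choose_spec.1

lemma dist_eq_dist_root_parent_add_one (hG : G.Connected) (hy : y ≠ o) :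
    G.dist o y = G.dist o (parent G o y) + 1 := by
  have h := exists_adj_dist_eq_add_one hG hy
  rw [parent, dif_pos h]
  exact h.choose_spec.2

lemma ne_root_of_dist_eq_add_one {n : ℕ} (h : G.dist o y = n + 1) : y ≠ o := by
  rintro rfl
  simp at h

lemma exists_isPath_penultimate_eq (hG : G.Connected) (hadj : G.Adj x y)
    (hdist : G.dist o y = G.dist o x + 1) : ∃ p : G.Walk o y, p.IsPath ∧ p.penultimate = x := by
  obtain ⟨p, hp⟩ := hG.exists_walk_length_eq_dist o x
  refine ⟨p.concat hadj, ?_, p.penultimate_concat hadj⟩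
  apply SimpleGraph.Walk.isPath_of_length_eq_dist
  rw [SimpleGraph.Walk.length_concat, hp, hdist]

lemma penultimate_eq_parent (hG : G.IsTree) (hy : y ≠ o) {p : G.Walk o y} (hp : p.IsPath) :
    p.penultimate = parent G o y := by
  obtain ⟨q, hq, hq_parent⟩ := exists_isPath_penultimate_eq hG.connected
    (parent_adj hG.connected hy) (dist_eq_dist_root_parent_add_one hG.connected hy)
  have hpq := (hG.isAcyclic.subsingleton_path o y).elim ⟨p, hp⟩ ⟨q, hq⟩
  rw [← hq_parent, Subtype.mk.inj hpq]

lemma eq_parent (hG : G.IsTree) (hadj : G.Adj x y) (hdist : G.dist o y = G.dist o x + 1) :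
    x = parent G o y := by
  obtain ⟨p, hp, hpx⟩ := exists_isPath_penultimate_eq hG.connected hadj hdist
  rw [← hpx, penultimate_eq_parent hG (ne_root_of_dist_eq_add_one hdist) hp]

lemma dist_root_eq_add (hG : G.IsTree) (hadj : G.Adj x y) (hdist : G.dist o y = G.dist o x + 1)
    (hz : G.dist z x = G.dist z y + 1) : G.dist o z = G.dist o y + G.dist z y := by
  obtain ⟨k, hk⟩ : ∃ k, G.dist z y = k := ⟨_, rfl⟩
  induction k generalizing x y with
  | zero =>
    obtain rfl := hG.connected.dist_eq_zero_iff.1 hk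
    simp
  | succ k ih =>
    obtain ⟨y', hadj', hy'⟩ :=
      exists_adj_dist_eq_add_one hG.connected (ne_root_of_dist_eq_add_one hk)
    have hup : G.dist o y' = G.dist o y + 1 := by
      refine (hG.dist_eq_dist_add_one_of_adj o hadj').resolve_right fun hdown => ?_
      obtain rfl : y' = x := (eq_parent hG hadj' hdown).trans (eq_parent hG hadj hdist).symm
      omega
    rw [ih hadj'.symm hup hy' (by omega)]
    omega

lemma dist_eq_dist_parent_add_one (hG : G.IsTree) (hy : y ≠ o) (hzy : z ≠ y)
    (hz : G.dist o z ≤ G.dist o y) : G.dist z y = G.dist z (parent G o y) + 1 := by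
  have hadj := parent_adj hG.connected hy
  refine (hG.dist_eq_dist_add_one_of_adj z hadj).resolve_left fun hfar => hzy ?_
  have hadd :=
    dist_root_eq_add hG hadj (dist_eq_dist_root_parent_add_one hG.connected hy) hfar
  exact hG.connected.dist_eq_zero_iff.1 (by omega)

lemma parent_mem_of_connected (hG : G.IsTree) {S : Set V} (hS : (G.induce S).Connected)
    (ho : o ∈ S) (hy : y ∈ S) (hyo : y ≠ o) : parent G o y ∈ S := by
  classical
  obtain ⟨p⟩ := hS.preconnected ⟨o, ho⟩ ⟨y, hy⟩
  let q : G.Walk o y := p.map (SimpleGraph.Embedding.induce S).toHom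
  have hqsupp : q.support = p.support.map (↑) := SimpleGraph.Walk.support_map _ p
  have hq : ∀ v ∈ q.support, v ∈ S := fun v hv => by
    rw [hqsupp] at hv
    obtain ⟨w, -, rfl⟩ := List.mem_map.1 hv
    exact w.2
  rw [← penultimate_eq_parent hG hyo q.bypass_isPath]
  exact hq _ (q.support_bypass_subset_support (SimpleGraph.Walk.getVert_mem_support _ _))

variable [G.LocallyFinite]

/-- The neighbours of `x` farther from the root `o`. -/
noncomputable def children (G : SimpleGraph V) [G.LocallyFinite] (o x : V) : Finset V :=
  (G.neighborFinset x).filter fun y => G.dist o y = G.dist o x + 1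

lemma mem_children (hG : G.IsTree) : y ∈ children G o x ↔ y ≠ o ∧ parent G o y = x := by
  rw [children, Finset.mem_filter, SimpleGraph.mem_neighborFinset]
  constructor
  · rintro ⟨hadj, hdist⟩
    exact ⟨ne_root_of_dist_eq_add_one hdist, (eq_parent hG hadj hdist).symm⟩
  · rintro ⟨hy, rfl⟩
    exact ⟨parent_adj hG.connected hy, dist_eq_dist_root_parent_add_one hG.connected hy⟩

lemma card_children_root : (children G o o).card = G.degree o := by
  rw [← SimpleGraph.card_neighborFinset_eq_degree, children, Finset.filter_true_of_mem]
  intro y hy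
  rw [SimpleGraph.mem_neighborFinset] at hy
  simp [SimpleGraph.dist_eq_one_iff_adj.2 hy]

lemma card_children_add_one (hG : G.IsTree) (hx : x ≠ o) :
    (children G o x).card + 1 = G.degree x := by
  classical
  have hchildren : children G o x = (G.neighborFinset x).erase (parent G o x) := by
    ext y
    rw [children, Finset.mem_filter, Finset.mem_erase, SimpleGraph.mem_neighborFinset, and_comm]
    refine and_congr_left fun hadj => ⟨?_, fun hne => ?_⟩
    · rintro hdist rfl
      have := dist_eq_dist_root_parent_add_one hG.connected hx
      omega
    · exact (hG.dist_eq_dist_add_one_of_adj o hadj).resolve_left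
        fun hdown => hne (eq_parent hG hadj.symm hdown)
  rw [hchildren, Finset.card_erase_add_one, SimpleGraph.card_neighborFinset_eq_degree]
  exact (SimpleGraph.mem_neighborFinset _ _ _).2 (parent_adj hG.connected hx).symm

lemma le_card_children (hG : G.IsTree) {d : ℕ} (hdeg : d < G.degree x) :
    d ≤ (children G o x).card := by
  by_cases hx : x = o
  · rw [hx, card_children_root, ← hx]
    exact hdeg.le
  · rw [← card_children_add_one hG hx] at hdeg
    exact Nat.lt_succ_iff.1 hdeg

lemma pairwiseDisjoint_children (hG : G.IsTree) (o : V) (s : Set V) :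
    s.PairwiseDisjoint (children G o) := by
  refine fun x _ x' _ hne => Finset.disjoint_left.2 fun y hy hy' => hne ?_
  rw [← ((mem_children hG).1 hy).2, ((mem_children hG).1 hy').2]

/-- The vertices at distance `n` from the root `o`. -/
noncomputable def sphere (G : SimpleGraph V) [G.LocallyFinite] (o : V) : ℕ → Finset V
  | 0 => {o}
  | n + 1 => open Classical in (sphere G o n).biUnion (children G o)

lemma mem_sphere (hG : G.IsTree) {n : ℕ} : y ∈ sphere G o n ↔ G.dist o y = n := by
  classical
  induction n generalizing y with
  | zero => rw [sphere, Finset.mem_singleton, hG.connected.dist_eq_zero_iff, eq_comm]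
  | succ n ih =>
    rw [sphere, Finset.mem_biUnion]
    constructor
    · rintro ⟨x, hx, hy⟩
      rw [← ih.1 hx]
      exact (Finset.mem_filter.1 hy).2
    · intro hdist
      have hy := ne_root_of_dist_eq_add_one hdist
      have := dist_eq_dist_root_parent_add_one hG.connected hy
      exact ⟨parent G o y, ih.2 (by omega), (mem_children hG).2 ⟨hy, rfl⟩⟩

lemma countable_of_isTree (hG : G.IsTree) : Countable V := by
  obtain ⟨o⟩ := hG.connected.nonempty
  have hcover : (Set.univ : Set V) ⊆ ⋃ n, (sphere G o n : Set V) := fun y _ =>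
    Set.mem_iUnion.2 ⟨_, (mem_sphere hG).2 rfl⟩
  exact Set.countable_univ_iff.1
    ((Set.countable_iUnion fun n => (sphere G o n).countable_toSet).mono hcover)

lemma iterate_parent_mem_sphere (hG : G.IsTree) {n i : ℕ} (hy : y ∈ sphere G o (n + i)) :
    (parent G o)^[i] y ∈ sphere G o n := by
  induction i generalizing y with
  | zero => exact hy
  | succ i ih =>
    refine ih ?_
    rw [mem_sphere hG] at hy ⊢
    have := dist_eq_dist_root_parent_add_one hG.connected (ne_root_of_dist_eq_add_one hy)
    omega

/-- The vertices of level `n + k` whose ancestral line up to level `n` stays in `A`. -/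
noncomputable def survivors (G : SimpleGraph V) [G.LocallyFinite] (o : V) (A : Set V)
    (n k : ℕ) : Finset V :=
  open Classical in (sphere G o (n + k)).filter fun y => ∀ i ≤ k, (parent G o)^[i] y ∈ A

variable {A : Set V} {n k : ℕ}

lemma mem_survivors : y ∈ survivors G o A n k ↔
    y ∈ sphere G o (n + k) ∧ ∀ i ≤ k, (parent G o)^[i] y ∈ A := by
  simp only [survivors, Finset.mem_filter]

lemma survivors_subset_sphere : survivors G o A n k ⊆ sphere G o (n + k) :=
  fun _ hy => (mem_survivors.1 hy).1

lemma mem_of_mem_survivors (hy : y ∈ survivors G o A n k) : y ∈ A :=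
  (mem_survivors.1 hy).2 0 k.zero_le

lemma mem_survivors_zero : y ∈ survivors G o A n 0 ↔ y ∈ sphere G o n ∧ y ∈ A := by
  simp [mem_survivors]

lemma mem_survivors_succ (hG : G.IsTree) : y ∈ survivors G o A n (k + 1) ↔
    (y ≠ o ∧ parent G o y ∈ survivors G o A n k) ∧ y ∈ A := by
  rw [mem_survivors, mem_survivors, mem_sphere hG, mem_sphere hG]
  constructor
  · rintro ⟨hdist, hA⟩
    have hy := ne_root_of_dist_eq_add_one hdist
    have := dist_eq_dist_root_parent_add_one hG.connected hy
    exact ⟨⟨hy, by omega, fun i hi => hA (i + 1) (by omega)⟩, hA 0 (by omega)⟩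
  · rintro ⟨⟨hy, hdist, hA⟩, hyA⟩
    have := dist_eq_dist_root_parent_add_one hG.connected hy
    refine ⟨by omega, fun i hi => ?_⟩
    cases i with
    | zero => exact hyA
    | succ i => exact hA i (by omega)

open Classical in
lemma survivors_succ (hG : G.IsTree) : survivors G o A n (k + 1) =
    ((survivors G o A n k).biUnion (children G o)).filter (· ∈ A) := by
  ext y
  simp only [mem_survivors_succ hG, Finset.mem_filter, Finset.mem_biUnion, mem_children hG]
  refine and_congr_left fun _ => ⟨fun hy => ⟨_, hy.2, hy.1, rfl⟩, ?_⟩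
  rintro ⟨x, hx, hy, rfl⟩
  exact ⟨hy, hx⟩

/-- The part of the cluster of `x` in `A` consisting of `x` and its descendants, for `x ∈ A` at
distance `n` from the root `o`. -/
def progeny (G : SimpleGraph V) [G.LocallyFinite] (o : V) (A : Set V) (n : ℕ) (x : V) : Set V :=
  {z | ∃ k, z ∈ survivors G o A n k ∧ (parent G o)^[k] z = x}

lemma connected_induce_progeny (hG : G.IsTree) (hx : x ∈ sphere G o n) (hxA : x ∈ A) :
    (G.induce (progeny G o A n x)).Connected := by
  rw [SimpleGraph.connected_iff_exists_forall_reachable]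
  refine ⟨⟨x, 0, mem_survivors_zero.2 ⟨hx, hxA⟩, rfl⟩, ?_⟩
  rintro ⟨z, k, hz, hzx⟩
  induction k generalizing z with
  | zero =>
    obtain rfl : z = x := hzx
    exact SimpleGraph.Reachable.rfl
  | succ k ih =>
    obtain ⟨⟨hzo, hparent⟩, -⟩ := (mem_survivors_succ hG).1 hz
    refine (ih _ hparent hzx).trans (SimpleGraph.Adj.reachable ?_)
    exact parent_adj hG.connected hzo

lemma exists_infinite_progeny (hG : G.IsTree) (hne : ∀ k, (survivors G o A n k).Nonempty) :
    ∃ x ∈ sphere G o n, x ∈ A ∧ (progeny G o A n x).Infinite := by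
  choose y hy using hne
  have hroot : ∀ k, (parent G o)^[k] (y k) ∈ sphere G o n := fun k =>
    iterate_parent_mem_sphere hG (mem_survivors.1 (hy k)).1
  obtain ⟨⟨x, hx⟩, hfiber⟩ := Finite.exists_infinite_fiber
    fun k => (⟨_, hroot k⟩ : {v // v ∈ sphere G o n})
  have hyx : ∀ k ∈ (fun k => (⟨_, hroot k⟩ : {v // v ∈ sphere G o n})) ⁻¹' {⟨x, hx⟩},
      (parent G o)^[k] (y k) = x := fun k hk => congrArg Subtype.val hk
  refine ⟨x, hx, ?_, ?_⟩
  · obtain ⟨⟨k, hk⟩⟩ := hfiber.nonempty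
    rw [← hyx k hk]
    exact (mem_survivors.1 (hy k)).2 k le_rfl
  · have hinj : Function.Injective y := fun k l hkl => by
      have hk := (mem_sphere hG).1 (mem_survivors.1 (hy k)).1
      have hl := (mem_sphere hG).1 (mem_survivors.1 (hy l)).1
      rw [hkl] at hk
      omega
    refine ((Set.infinite_coe_iff.1 hfiber).image hinj.injOn).mono ?_
    rintro _ ⟨k, hk, rfl⟩
    exact ⟨k, hy k, hyx k hk⟩

theorem exists_infinite_connected (hG : G.IsTree) (hne : ∀ k, (survivors G o A n k).Nonempty) :
    ∃ S : Set V, S.Infinite ∧ (∀ x ∈ S, x ∈ A) ∧ (G.induce S).Connected := by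
  obtain ⟨x, hx, hxA, hinf⟩ := exists_infinite_progeny hG hne
  exact ⟨progeny G o A n x, hinf, fun z ⟨_, hz, _⟩ => mem_of_mem_survivors hz,
    connected_induce_progeny hG hx hxA⟩

lemma iterate_parent_mem_of_connected (hG : G.IsTree) {S : Set V} (hS : (G.induce S).Connected)
    (ho : o ∈ S) (hy : y ∈ S) {i : ℕ} (hi : i ≤ G.dist o y) : (parent G o)^[i] y ∈ S := by
  induction i with
  | zero => exact hy
  | succ i ih =>
    rw [Function.iterate_succ_apply']
    refine parent_mem_of_connected hG hS ho (ih (by omega)) ?_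
    have hlevel : (parent G o)^[i] y ∈ sphere G o (G.dist o y - i - 1 + 1) :=
      iterate_parent_mem_sphere hG ((mem_sphere hG).2 (by omega))
    exact ne_root_of_dist_eq_add_one ((mem_sphere hG).1 hlevel)

theorem survivors_nonempty_of_infinite (hG : G.IsTree) {S : Set V} (hS : (G.induce S).Connected)
    (hinf : S.Infinite) (hSA : ∀ x ∈ S, x ∈ A) (ho : o ∈ S) (n k : ℕ) :
    (survivors G o A n k).Nonempty := by
  classical
  obtain ⟨y, hyS, hy⟩ := hinf.exists_notMem_finset ((Finset.range (n + k)).biUnion (sphere G o))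
  have hlevel : n + k ≤ G.dist o y := by
    by_contra! hlt
    exact hy (Finset.mem_biUnion.2 ⟨_, Finset.mem_range.2 hlt, (mem_sphere hG).2 rfl⟩)
  refine ⟨(parent G o)^[G.dist o y - (n + k)] y, mem_survivors.2 ⟨?_, fun i hi => ?_⟩⟩
  · exact iterate_parent_mem_sphere hG ((mem_sphere hG).2 (by omega))
  · rw [← Function.iterate_add_apply]
    exact hSA _ (iterate_parent_mem_of_connected hG hS ho hyS (by omega))

end Tree

section TreeMarkov

variable {V Ω α : Type*} [MeasurableSpace α]

/-- The σ-algebra generated by the values of the process `φ` on `W`. -/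
abbrev past (φ : V → Ω → α) (W : Set V) : MeasurableSpace Ω :=
  MeasurableSpace.comap (fun ω (z : W) => φ z ω) MeasurableSpace.pi

lemma measurable_past {φ : V → Ω → α} {W : Set V} {z : V} (hz : z ∈ W) :
    Measurable[past φ W] (φ z) :=
  (measurable_pi_apply (⟨z, hz⟩ : W)).comp (comap_measurable fun ω (z : W) => φ z ω)

lemma past_le_iff {φ : V → Ω → α} {W : Set V} {m : MeasurableSpace Ω} :
    past φ W ≤ m ↔ ∀ z ∈ W, Measurable[m] (φ z) := by
  rw [← measurable_iff_comap_le, measurable_pi_iff]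
  exact Subtype.forall

lemma past_mono {φ : V → Ω → α} {W W' : Set V} (h : W ⊆ W') : past φ W ≤ past φ W' :=
  past_le_iff.2 fun _ hz => measurable_past (h hz)

/-- The process `φ` on the tree `G` is a Markov chain indexed by `G` with stationary law `ν`:
whichever root is chosen, given the generations up to that of `y`, the value at `y` has density
`K a` with respect to `ν`, where `a` is the value at the parent of `y`. -/
structure IsTreeMarkov (ν : Measure α) (K : α → α → ℝ≥0∞) (G : SimpleGraph V)
    [MeasurableSpace Ω] (P : Measure Ω) (φ : V → Ω → α) : Prop where
  measurable : ∀ x, Measurable (φ x)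
  map_eq : ∀ x, P.map (φ x) = ν
  lintegral_mul_comp : ∀ {o y : V}, y ≠ o → ∀ {Z : Ω → ℝ≥0∞},
    Measurable[past φ {z | z ≠ y ∧ G.dist o z ≤ G.dist o y}] Z →
      ∀ {f : α → ℝ≥0∞}, Measurable f →
        ∫⁻ ω, Z ω * f (φ y ω) ∂P = ∫⁻ ω, Z ω * transOp ν K f (φ (parent G o y) ω) ∂P

lemma lintegral_comp_eq_sum_indicator {ι : Type*} [MeasurableSpace Ω] {P : Measure Ω} {X : Ω → ι}
    {s : Finset ι} (hXs : ∀ ω, X ω ∈ s) (hX : ∀ i ∈ s, MeasurableSet {ω | X ω = i})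
    {F : ι → Ω → ℝ≥0∞} (hF : ∀ i ∈ s, Measurable (F i)) :
    ∫⁻ ω, F (X ω) ω ∂P = ∑ i ∈ s, ∫⁻ ω, {ω | X ω = i}.indicator 1 ω * F i ω ∂P := by
  have hmeas : ∀ i ∈ s, Measurable fun ω => {ω | X ω = i}.indicator 1 ω * F i ω := fun i hi =>
    (measurable_one.indicator (hX i hi)).mul (hF i hi)
  rw [← lintegral_finsetSum' _ fun i hi => (hmeas i hi).aemeasurable]
  refine lintegral_congr fun ω => ?_
  rw [Finset.sum_eq_single_of_mem _ (hXs ω)]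
  · simp
  · intro i _ hi
    rw [Set.indicator_of_notMem (by simpa using hi.symm), zero_mul]

variable {ν : Measure α} {K : α → α → ℝ≥0∞} {G : SimpleGraph V} {o : V} {n k d : ℕ}
  {φ : V → Ω → α} {f : α → ℝ≥0∞} {I : Set α}

section Survivors

variable [G.LocallyFinite]

lemma measurableSet_mem_survivors {m : MeasurableSpace Ω} (hG : G.IsTree) (hI : MeasurableSet I)
    (hφ : ∀ z, G.dist o z ≤ n + k → Measurable (φ z)) (y : V) :
    MeasurableSet {ω | y ∈ survivors G o ((φ · ω) ⁻¹' I) n k} := by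
  simp only [mem_survivors, Set.mem_preimage, Set.ofPred_and, Set.ofPred_forall]
  by_cases hy : y ∈ sphere G o (n + k)
  · refine (MeasurableSet.const _).inter
      (MeasurableSet.iInter fun i => MeasurableSet.iInter fun hi => hφ _ ?_ hI)
    have hlevel : (parent G o)^[i] y ∈ sphere G o (n + k - i) :=
      iterate_parent_mem_sphere hG (by rwa [Nat.sub_add_cancel (by omega)])
    rw [(mem_sphere hG).1 hlevel]
    omega
  · simp [hy]

lemma measurableSet_survivors_eq {m : MeasurableSpace Ω} (hG : G.IsTree) (hI : MeasurableSet I)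
    (hφ : ∀ z, G.dist o z ≤ n + k → Measurable (φ z)) (B : Finset V) :
    MeasurableSet {ω | survivors G o ((φ · ω) ⁻¹' I) n k = B} := by
  have := countable_of_isTree hG
  simp only [Finset.ext_iff, Set.ofPred_forall]
  exact MeasurableSet.iInter fun y =>
    (measurableSet_mem_survivors hG hI hφ y).iff (MeasurableSet.const _)

end Survivors

namespace IsTreeMarkov

variable [MeasurableSpace Ω] {P : Measure Ω}

lemma lintegral_comp (hφ : IsTreeMarkov ν K G P φ) (hf : Measurable f) (x : V) :
    ∫⁻ ω, f (φ x ω) ∂P = ∫⁻ a, f a ∂ν := by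
  rw [← hφ.map_eq x, lintegral_map hf (hφ.measurable x)]

lemma lintegral_mul_prod_comp [SFinite ν] (hφ : IsTreeMarkov ν K G P φ) (hK : IsSymmDensity ν K)
    (hG : G.Connected) {B : Finset V} (hB : ∀ y ∈ B, G.dist o y = n + 1) (hf : Measurable f)
    {Z : Ω → ℝ≥0∞} (hZ : Measurable[past φ {z | G.dist o z ≤ n}] Z) :
    ∫⁻ ω, Z ω * ∏ y ∈ B, f (φ y ω) ∂P =
      ∫⁻ ω, Z ω * ∏ y ∈ B, transOp ν K f (φ (parent G o y) ω) ∂P := by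
  classical
  induction B using Finset.induction_on generalizing Z with
  | empty => simp
  | insert y B hyB ih =>
    obtain ⟨hy, hB'⟩ := Finset.forall_mem_insert _ _ _ |>.1 hB
    have hyo := ne_root_of_dist_eq_add_one hy
    have hparent : G.dist o (parent G o y) ≤ n := by
      have := dist_eq_dist_root_parent_add_one hG hyo
      omega
    have hZB : Measurable[past φ {z | z ≠ y ∧ G.dist o z ≤ G.dist o y}]
        fun ω => Z ω * ∏ z ∈ B, f (φ z ω) := by
      refine (hZ.mono (past_mono fun z (hz : G.dist o z ≤ n) => ?_) le_rfl).mul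
        (Finset.measurable_prod _ fun z hz => hf.comp (measurable_past ?_))
      · exact ⟨by rintro rfl; omega, by omega⟩
      · exact ⟨by rintro rfl; exact hyB hz, by rw [hB' z hz, hy]⟩
    have hZparent : Measurable[past φ {z | G.dist o z ≤ n}]
        fun ω => Z ω * transOp ν K f (φ (parent G o y) ω) :=
      hZ.mul ((measurable_transOp hK hf).comp (measurable_past hparent))
    calc ∫⁻ ω, Z ω * ∏ z ∈ insert y B, f (φ z ω) ∂P
        = ∫⁻ ω, (Z ω * ∏ z ∈ B, f (φ z ω)) * f (φ y ω) ∂P := by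
          simp only [Finset.prod_insert hyB, mul_assoc, mul_comm (f (φ y _))]
      _ = ∫⁻ ω, (Z ω * transOp ν K f (φ (parent G o y) ω)) * ∏ z ∈ B, f (φ z ω) ∂P := by
          rw [hφ.lintegral_mul_comp hyo hZB hf]
          simp only [mul_right_comm]
      _ = ∫⁻ ω, Z ω * ∏ z ∈ insert y B, transOp ν K f (φ (parent G o z) ω) ∂P := by
          rw [ih hB' hZparent]
          simp only [Finset.prod_insert hyB, mul_assoc]

variable [G.LocallyFinite]

open Classical in
lemma lintegral_mul_prod_biUnion [SFinite ν] (hφ : IsTreeMarkov ν K G P φ) (hK : IsSymmDensity ν K)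
    (hG : G.IsTree) {B : Finset V} (hB : B ⊆ sphere G o n) (hf : Measurable f)
    {Z : Ω → ℝ≥0∞} (hZ : Measurable[past φ {z | G.dist o z ≤ n}] Z) :
    ∫⁻ ω, Z ω * ∏ y ∈ B.biUnion (children G o), f (φ y ω) ∂P =
      ∫⁻ ω, Z ω * ∏ x ∈ B, transOp ν K f (φ x ω) ^ (children G o x).card ∂P := by
  rw [hφ.lintegral_mul_prod_comp hK hG.connected _ hf hZ]
  · refine lintegral_congr fun ω => ?_
    rw [Finset.prod_biUnion (pairwiseDisjoint_children hG o _)]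
    congr 1
    refine Finset.prod_congr rfl fun x _ => Finset.prod_eq_pow_card fun y hy => ?_
    rw [((mem_children hG).1 hy).2]
  · intro y hy
    rw [← mem_sphere hG]
    exact Finset.biUnion_subset_biUnion_of_subset_left _ hB hy

open Classical in
lemma lintegral_mul_prod_biUnion_le [SFinite ν]
    (hφ : IsTreeMarkov ν K G P φ) (hK : IsSymmDensity ν K)
    (hG : G.IsTree) (hdeg : ∀ v, d < G.degree v) {B : Finset V} (hB : B ⊆ sphere G o n)
    (hf : Measurable f) (hf1 : ∀ a, f a ≤ 1)
    {Z : Ω → ℝ≥0∞} (hZ : Measurable[past φ {z | G.dist o z ≤ n}] Z) :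
    ∫⁻ ω, Z ω * ∏ y ∈ B.biUnion (children G o), f (φ y ω) ∂P ≤
      ∫⁻ ω, Z ω * ∏ x ∈ B, extinctionMap ν K d f (φ x ω) ∂P := by
  rw [hφ.lintegral_mul_prod_biUnion hK hG hB hf hZ]
  gcongr with ω x
  exact pow_le_pow_of_le_one zero_le (transOp_le_const hK hf1 _) (le_card_children hG (hdeg x))

lemma lintegral_prod_sphere_le [SFinite ν] (hφ : IsTreeMarkov ν K G P φ) (hK : IsSymmDensity ν K)
    (hG : G.IsTree) (hdeg : ∀ v, d < G.degree v) (hf : Measurable f) (hf1 : ∀ a, f a ≤ 1)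
    (o : V) (n : ℕ) :
    ∫⁻ ω, ∏ x ∈ sphere G o n, f (φ x ω) ∂P ≤ ∫⁻ a, (extinctionMap ν K d)^[n] f a ∂ν := by
  induction n generalizing f with
  | zero => simp [sphere, hφ.lintegral_comp hf o]
  | succ n ih =>
    have hstep := hφ.lintegral_mul_prod_biUnion_le hK hG hdeg (subset_refl (sphere G o n)) hf hf1
      (Z := 1) measurable_const
    simp only [Pi.one_apply, one_mul] at hstep
    exact hstep.trans (ih (measurable_extinctionMap hK d hf) fun a =>
      pow_le_one₀ zero_le (transOp_le_const hK hf1 a))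

variable {s : α → ℝ≥0∞}

lemma lintegral_prod_survivors_succ_le [SFinite ν]
    (hφ : IsTreeMarkov ν K G P φ) (hK : IsSymmDensity ν K)
    (hG : G.IsTree) (hdeg : ∀ v, d < G.degree v) (hI : MeasurableSet I)
    (hs : IsExtinctionSupersolution ν K d I s) (o : V) (n k : ℕ) :
    ∫⁻ ω, ∏ x ∈ survivors G o ((φ · ω) ⁻¹' I) n (k + 1), s (φ x ω) ∂P ≤
      ∫⁻ ω, ∏ x ∈ survivors G o ((φ · ω) ⁻¹' I) n k, s (φ x ω) ∂P := by
  classical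
  have hkilled : ∀ ω, ∏ x ∈ survivors G o ((φ · ω) ⁻¹' I) n (k + 1), s (φ x ω) =
      ∏ x ∈ (survivors G o ((φ · ω) ⁻¹' I) n k).biUnion (children G o), s (φ x ω) := fun ω => by
    rw [survivors_succ hG]
    refine Finset.prod_filter_of_ne fun x _ hx => ?_
    contrapose! hx
    exact hs.eq_one_of_notMem _ hx
  have hX : ∀ B ∈ (sphere G o (n + k)).powerset,
      MeasurableSet {ω | survivors G o ((φ · ω) ⁻¹' I) n k = B} := fun B _ =>
    measurableSet_survivors_eq hG hI (fun z _ => hφ.measurable z) B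
  have hmem : ∀ ω, survivors G o ((φ · ω) ⁻¹' I) n k ∈ (sphere G o (n + k)).powerset := fun ω =>
    Finset.mem_powerset.2 survivors_subset_sphere
  have hprod : ∀ B : Finset V, Measurable fun ω => ∏ x ∈ B, s (φ x ω) := fun B =>
    Finset.measurable_prod _ fun x _ => hs.measurable.comp (hφ.measurable x)
  simp only [hkilled]
  rw [lintegral_comp_eq_sum_indicator (F := fun B ω => ∏ x ∈ B.biUnion (children G o), s (φ x ω))
      hmem hX fun B _ => hprod _,
    lintegral_comp_eq_sum_indicator (F := fun B ω => ∏ x ∈ B, s (φ x ω)) hmem hX fun B _ => hprod B]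
  refine Finset.sum_le_sum fun B hB => ?_
  have hZ : Measurable[past φ {z | G.dist o z ≤ n + k}]
      ({ω | survivors G o ((φ · ω) ⁻¹' I) n k = B}.indicator (1 : Ω → ℝ≥0∞)) :=
    measurable_const.indicator (measurableSet_survivors_eq hG hI (fun z hz => measurable_past hz) B)
  refine (hφ.lintegral_mul_prod_biUnion_le hK hG hdeg (Finset.mem_powerset.1 hB)
    hs.measurable hs.le_one hZ).trans ?_
  gcongr with ω x
  exact hs.extinctionMap_le _

lemma measure_survivors_eq_empty_le [SFinite ν]
    (hφ : IsTreeMarkov ν K G P φ) (hK : IsSymmDensity ν K)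
    (hG : G.IsTree) (hdeg : ∀ v, d < G.degree v) (hI : MeasurableSet I)
    (hs : IsExtinctionSupersolution ν K d I s) (o : V) (n k : ℕ) :
    P {ω | survivors G o ((φ · ω) ⁻¹' I) n k = ∅} ≤
      ∫⁻ a, (extinctionMap ν K d)^[n] s a ∂ν := by
  have hprod : ∫⁻ ω, ∏ x ∈ survivors G o ((φ · ω) ⁻¹' I) n k, s (φ x ω) ∂P ≤
      ∫⁻ a, (extinctionMap ν K d)^[n] s a ∂ν := by
    induction k with
    | zero =>
      refine le_of_eq_of_le (lintegral_congr fun ω => ?_)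
        (hφ.lintegral_prod_sphere_le hK hG hdeg hs.measurable hs.le_one o n)
      refine Finset.prod_subset survivors_subset_sphere fun x hx hx' => hs.eq_one_of_notMem _ ?_
      exact fun hxI => hx' (mem_survivors_zero.2 ⟨hx, hxI⟩)
    | succ k ih => exact (hφ.lintegral_prod_survivors_succ_le hK hG hdeg hI hs o n k).trans ih
  refine le_trans ?_ hprod
  rw [← lintegral_indicator_one
    (measurableSet_survivors_eq hG hI (fun z _ => hφ.measurable z) ∅)]
  refine lintegral_mono (Set.indicator_le fun ω hω => ?_)
  rw [Set.mem_ofPred_eq] at hω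
  simp [hω]

lemma measure_iUnion_survivors_eq_empty_le [SFinite ν] (hφ : IsTreeMarkov ν K G P φ)
    (hK : IsSymmDensity ν K) (hG : G.IsTree) (hdeg : ∀ v, d < G.degree v) (hI : MeasurableSet I)
    (hs : IsExtinctionSupersolution ν K d I s) (o : V) (n : ℕ) :
    P (⋃ k, {ω | survivors G o ((φ · ω) ⁻¹' I) n k = ∅}) ≤
      ∫⁻ a, (extinctionMap ν K d)^[n] s a ∂ν := by
  have hmono : Monotone fun k => {ω | survivors G o ((φ · ω) ⁻¹' I) n k = ∅} := by
    classical
    refine monotone_nat_of_le_succ fun k ω hω => ?_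
    rw [Set.mem_ofPred_eq] at hω ⊢
    rw [survivors_succ hG, hω, Finset.biUnion_empty, Finset.filter_empty]
  rw [hmono.measure_iUnion]
  exact iSup_le (hφ.measure_survivors_eq_empty_le hK hG hdeg hI hs o n)

theorem ae_exists_infinite [SFinite ν] (hφ : IsTreeMarkov ν K G P φ) (hK : IsSymmDensity ν K)
    (hG : G.IsTree) (hdeg : ∀ v, d < G.degree v) (hI : MeasurableSet I)
    (hs : IsExtinctionSupersolution ν K d I s)
    (hlim : Tendsto (fun n => ∫⁻ a, (extinctionMap ν K d)^[n] s a ∂ν) atTop (𝓝 0)) :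
    ∀ᵐ ω ∂P, ∃ S : Set V, S.Infinite ∧ (∀ x ∈ S, φ x ω ∈ I) ∧ (G.induce S).Connected := by
  obtain ⟨o⟩ := hG.connected.nonempty
  refine ae_iff.2 (le_antisymm (ge_of_tendsto' hlim fun n => ?_) zero_le)
  refine (measure_mono fun ω hω => ?_).trans
    (hφ.measure_iUnion_survivors_eq_empty_le hK hG hdeg hI hs o n)
  by_contra hne
  have hsurvive : ∀ k, (survivors G o ((φ · ω) ⁻¹' I) n k).Nonempty := fun k =>
    Finset.nonempty_iff_ne_empty.2 fun hk => hne (Set.mem_iUnion.2 ⟨k, hk⟩)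
  exact hω (exists_infinite_connected hG hsurvive)

lemma lintegral_sum_survivors (hφ : IsTreeMarkov ν K G P φ) (hG : G.IsTree)
    (hI : MeasurableSet I) (hf : Measurable f) (o : V) (n k : ℕ) :
    ∫⁻ ω, ∑ y ∈ survivors G o ((φ · ω) ⁻¹' I) n k, f (φ y ω) ∂P =
      ∑ y ∈ sphere G o (n + k),
        ∫⁻ ω, {ω | y ∈ survivors G o ((φ · ω) ⁻¹' I) n k}.indicator 1 ω * f (φ y ω) ∂P := by
  classical
  have hmeas : ∀ y, Measurable fun ω =>
      {ω | y ∈ survivors G o ((φ · ω) ⁻¹' I) n k}.indicator 1 ω * f (φ y ω) := fun y =>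
    have hy := measurableSet_mem_survivors hG hI (fun z _ => hφ.measurable z) y
    (measurable_one.indicator hy).mul (hf.comp (hφ.measurable y))
  rw [← lintegral_finsetSum _ fun y _ => hmeas y]
  refine lintegral_congr fun ω => ?_
  simp only [Set.indicator_apply, Set.mem_ofPred_eq, Pi.one_apply, ite_mul, one_mul, zero_mul]
  rw [← Finset.sum_filter, Finset.filter_mem_eq_inter,
    Finset.inter_eq_right.2 survivors_subset_sphere]

lemma lintegral_indicator_survivors_succ (hφ : IsTreeMarkov ν K G P φ) (hG : G.IsTree)
    (hI : MeasurableSet I) (hf : Measurable f) {x y : V} (hy : y ∈ children G o x)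
    (hx : x ∈ sphere G o (n + k)) :
    ∫⁻ ω, {ω | y ∈ survivors G o ((φ · ω) ⁻¹' I) n (k + 1)}.indicator 1 ω * f (φ y ω) ∂P =
      ∫⁻ ω, {ω | x ∈ survivors G o ((φ · ω) ⁻¹' I) n k}.indicator 1 ω *
        transOp ν K (I.indicator f) (φ x ω) ∂P := by
  classical
  obtain ⟨hyo, rfl⟩ := (mem_children hG).1 hy
  have hlevel := dist_eq_dist_root_parent_add_one hG.connected hyo
  rw [(mem_sphere hG).1 hx] at hlevel
  rw [← hφ.lintegral_mul_comp hyo _ (hf.indicator hI)]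
  · refine lintegral_congr fun ω => ?_
    by_cases hyI : φ y ω ∈ I <;> simp [Set.indicator_apply, mem_survivors_succ hG, hyo, hyI]
  · refine measurable_const.indicator
      (measurableSet_mem_survivors hG hI (fun z hz => measurable_past ?_) _)
    exact ⟨by rintro rfl; omega, by omega⟩

lemma lintegral_sum_survivors_succ_le [SFinite ν]
    (hφ : IsTreeMarkov ν K G P φ) (hK : IsSymmDensity ν K)
    (hG : G.IsTree) (hdeg : ∀ v, G.degree v ≤ d + 1) (hI : MeasurableSet I) (hf : Measurable f)
    (hn : n ≠ 0) (o : V) (k : ℕ) :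
    ∫⁻ ω, ∑ y ∈ survivors G o ((φ · ω) ⁻¹' I) n (k + 1), f (φ y ω) ∂P ≤
      ∫⁻ ω, ∑ x ∈ survivors G o ((φ · ω) ⁻¹' I) n k, cutOp ν K d I f (φ x ω) ∂P := by
  classical
  rw [hφ.lintegral_sum_survivors hG hI hf,
    hφ.lintegral_sum_survivors hG hI (measurable_cutOp hK d hI hf), ← add_assoc, sphere,
    Finset.sum_biUnion (pairwiseDisjoint_children hG o _)]
  refine Finset.sum_le_sum fun x hx => ?_
  have hxo : x ≠ o := by
    rintro rfl
    have := (mem_sphere hG).1 hx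
    simp only [SimpleGraph.dist_self] at this
    omega
  have hcard : (children G o x).card ≤ d := by
    have := hdeg x
    rw [← card_children_add_one hG hxo] at this
    omega
  rw [Finset.sum_congr rfl fun y hy => hφ.lintegral_indicator_survivors_succ hG hI hf hy hx,
    Finset.sum_const, nsmul_eq_mul, ← lintegral_const_mul' _ _ (ENNReal.natCast_ne_top _)]
  refine lintegral_mono fun ω => ?_
  by_cases hmem : x ∈ survivors G o ((φ · ω) ⁻¹' I) n k
  · have hxI : φ x ω ∈ I := mem_of_mem_survivors (A := (φ · ω) ⁻¹' I) hmem
    rw [cutOp_of_mem hxI, ENNReal.coe_natCast, mul_left_comm]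
    gcongr
  · simp [hmem]

lemma lintegral_sum_survivors_le [SFinite ν] (hφ : IsTreeMarkov ν K G P φ) (hK : IsSymmDensity ν K)
    (hG : G.IsTree) (hdeg : ∀ v, G.degree v ≤ d + 1) (hI : MeasurableSet I) (hf : Measurable f)
    (hn : n ≠ 0) (o : V) (k : ℕ) :
    ∫⁻ ω, ∑ y ∈ survivors G o ((φ · ω) ⁻¹' I) n k, f (φ y ω) ∂P ≤
      (sphere G o n).card * ∫⁻ a, (cutOp ν K d I)^[k] (I.indicator f) a ∂ν := by
  induction k generalizing f with
  | zero =>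
    rw [hφ.lintegral_sum_survivors hG hI hf, ← nsmul_eq_mul, ← Finset.sum_const]
    refine Finset.sum_le_sum fun y _ => ?_
    rw [Function.iterate_zero_apply, ← hφ.lintegral_comp (hf.indicator hI) y]
    refine lintegral_mono fun ω => ?_
    by_cases hmem : y ∈ survivors G o ((φ · ω) ⁻¹' I) n 0
    · have hyI : φ y ω ∈ I := (mem_survivors_zero.1 hmem).2
      simp [hmem, hyI]
    · simp [hmem]
  | succ k ih =>
    refine (hφ.lintegral_sum_survivors_succ_le hK hG hdeg hI hf hn o k).trans
      ((ih (measurable_cutOp hK d hI hf)).trans_eq ?_)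
    rw [Function.iterate_succ_apply, cutOp_indicator, cutOp, Set.indicator_indicator,
      Set.inter_self]

lemma measure_survivors_nonempty_le [SFinite ν]
    (hφ : IsTreeMarkov ν K G P φ) (hK : IsSymmDensity ν K)
    (hG : G.IsTree) (hdeg : ∀ v, G.degree v ≤ d + 1) (hI : MeasurableSet I) (hn : n ≠ 0) (o : V)
    (k : ℕ) :
    P {ω | (survivors G o ((φ · ω) ⁻¹' I) n k).Nonempty} ≤
      (sphere G o n).card * ∫⁻ a, (cutOp ν K d I)^[k] (I.indicator 1) a ∂ν := by
  refine le_trans ?_ (hφ.lintegral_sum_survivors_le hK hG hdeg hI measurable_one hn o k)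
  have hmeas : MeasurableSet {ω | (survivors G o ((φ · ω) ⁻¹' I) n k).Nonempty} := by
    simp only [Finset.nonempty_iff_ne_empty]
    exact (measurableSet_survivors_eq hG hI (fun z _ => hφ.measurable z) ∅).compl
  rw [← lintegral_indicator_one hmeas]
  refine lintegral_mono (Set.indicator_le fun ω hω => ?_)
  have hcard : 1 ≤ (survivors G o ((φ · ω) ⁻¹' I) n k).card := Finset.card_pos.2 hω
  simpa only [Pi.one_apply, Finset.sum_const, nsmul_eq_mul, mul_one, Nat.one_le_cast] using hcard

theorem ae_forall_finite [SFinite ν] (hφ : IsTreeMarkov ν K G P φ) (hK : IsSymmDensity ν K)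
    (hG : G.IsTree) (hdeg : ∀ v, G.degree v ≤ d + 1) (hI : MeasurableSet I)
    (hlim : Tendsto (fun k => ∫⁻ a, (cutOp ν K d I)^[k] (I.indicator 1) a ∂ν) atTop (𝓝 0)) :
    ∀ᵐ ω ∂P, ∀ S : Set V, ((∀ x ∈ S, φ x ω ∈ I) ∧ (G.induce S).Connected) → S.Finite := by
  have := countable_of_isTree hG
  have hextinct : ∀ᵐ ω ∂P, ∀ o, ¬ ∀ k, (survivors G o ((φ · ω) ⁻¹' I) 1 k).Nonempty := by
    refine ae_all_iff.2 fun o => ?_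
    have hlim' := ENNReal.Tendsto.const_mul hlim
      (Or.inr (ENNReal.natCast_ne_top (sphere G o 1).card))
    rw [mul_zero] at hlim'
    refine ae_iff.2 (le_antisymm (ge_of_tendsto' hlim' fun k => ?_) zero_le)
    refine (measure_mono fun ω hω => ?_).trans
      (hφ.measure_survivors_nonempty_le hK hG hdeg hI one_ne_zero o k)
    exact not_not.1 hω k
  filter_upwards [hextinct] with ω hω S ⟨hSI, hconn⟩
  by_contra hinf
  obtain ⟨⟨o, ho⟩⟩ := hconn.nonempty
  exact hω o (survivors_nonempty_of_infinite hG hconn hinf hSI ho 1)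

end IsTreeMarkov

end TreeMarkov

section FreeField

lemma lintegral_comp_prodMk_of_indepFun {Ω β γ : Type*} [MeasurableSpace Ω] [MeasurableSpace β]
    [MeasurableSpace γ] {P : Measure Ω} [IsFiniteMeasure P] {U : Ω → β} {X : Ω → γ}
    (hUX : IndepFun U X P) (hU : Measurable U) (hX : Measurable X) {g : β × γ → ℝ≥0∞}
    (hg : Measurable g) :
    ∫⁻ ω, g (U ω, X ω) ∂P = ∫⁻ ω, ∫⁻ x, g (U ω, x) ∂P.map X ∂P := by
  rw [indepFun_iff_map_prod_eq_prod_map_map hU.aemeasurable hX.aemeasurable] at hUX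
  rw [← lintegral_map hg (hU.prodMk hX), hUX, lintegral_prod _ hg.aemeasurable,
    lintegral_map hg.lintegral_prod_right' hU]

/-- `φ` is a Gaussian free field on the `(d+1)`-regular tree `G`: its finite linear combinations
are centered Gaussian, with covariance the Green function `d / (d² - 1) * d ^ (-dist x y)`. -/
structure IsFreeField (d : ℕ) {V Ω : Type*} (G : SimpleGraph V) [MeasurableSpace Ω] (P : Measure Ω)
    (φ : V → Ω → ℝ) : Prop where
  measurable : ∀ x, Measurable (φ x)
  map_sum : ∀ (s : Finset V) (c : V → ℝ),
    P.map (fun ω => ∑ x ∈ s, c x * φ x ω) =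
      gaussianReal 0 (Real.toNNReal (∑ x ∈ s, ∑ y ∈ s,
        c x * c y * (((d : ℝ) / ((d : ℝ) ^ 2 - 1)) * (1 / (d : ℝ)) ^ G.dist x y)))

/-- The innovation of the field `φ` at `y`: the part of `φ y` which is not predicted by the value
at the parent of `y` in the tree `G` rooted at `o`. -/
noncomputable def innov {V Ω : Type*} (d : ℕ) (G : SimpleGraph V) (φ : V → Ω → ℝ) (o y : V)
    (ω : Ω) : ℝ :=
  φ y ω - 1 / d * φ (parent G o y) ω

namespace IsFreeField

variable {d : ℕ} {V Ω : Type*} {G : SimpleGraph V} [MeasurableSpace Ω] {P : Measure Ω}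
  {φ : V → Ω → ℝ} {o y : V}

lemma map_eq (hφ : IsFreeField d G P φ) (x : V) : P.map (φ x) = siteLaw d := by
  simpa [siteLaw] using hφ.map_sum {x} fun _ => 1

lemma isGaussianProcess (hφ : IsFreeField d G P φ) : IsGaussianProcess φ P := by
  classical
  refine ⟨fun I => ⟨isGaussian_of_map_eq_gaussianReal fun L => ?_⟩⟩
  have hmeas : Measurable fun ω => I.restrict (φ · ω) :=
    measurable_pi_lambda _ fun i => hφ.measurable i
  rw [Measure.map_map L.continuous.measurable hmeas]
  refine ⟨_, _, Eq.trans ?_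
    (hφ.map_sum I fun x => if hx : x ∈ I then L (Pi.single ⟨x, hx⟩ 1) else 0)⟩
  congr 1
  ext ω
  have hbasis : I.restrict (φ · ω) = ∑ x : I, φ x ω • (Pi.single x 1 : I → ℝ) := by
    ext i
    simp [Pi.single_apply, Finset.sum_apply]
  rw [Function.comp_apply, hbasis, _root_.map_sum, ← Finset.sum_coe_sort I]
  refine Finset.sum_congr rfl fun x _ => ?_
  rw [map_smul, smul_eq_mul, mul_comm, dif_pos x.2]

lemma memLp_two (hφ : IsFreeField d G P φ) (x : V) : MemLp (φ x) 2 P :=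
  (hφ.isGaussianProcess.hasGaussianLaw_eval x).memLp_two

lemma variance_sum (hφ : IsFreeField d G P φ) (s : Finset V) (c : V → ℝ) :
    Var[fun ω => ∑ x ∈ s, c x * φ x ω; P] = Real.toNNReal (∑ x ∈ s, ∑ y ∈ s,
      c x * c y * (((d : ℝ) / ((d : ℝ) ^ 2 - 1)) * (1 / (d : ℝ)) ^ G.dist x y)) := by
  have hmeas : Measurable fun ω => ∑ x ∈ s, c x * φ x ω :=
    Finset.measurable_sum _ fun x _ => (hφ.measurable x).const_mul _
  rw [← variance_id_gaussianReal (μ := 0), ← hφ.map_sum,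
    variance_map aemeasurable_id hmeas.aemeasurable, Function.id_comp]

lemma covariance_eq (hφ : IsFreeField d G P φ) (hd : 2 ≤ d) (x y : V) :
    cov[φ x, φ y; P] = ((d : ℝ) / ((d : ℝ) ^ 2 - 1)) * (1 / (d : ℝ)) ^ G.dist x y := by
  classical
  have := hφ.isGaussianProcess.isProbabilityMeasure
  have hD := sq_sub_one_pos hd
  have hvar : ∀ x, Var[φ x; P] = (d : ℝ) / ((d : ℝ) ^ 2 - 1) := fun x => by
    have hpos : 0 ≤ (d : ℝ) / ((d : ℝ) ^ 2 - 1) := by positivity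
    simpa [hpos] using hφ.variance_sum {x} fun _ => 1
  obtain rfl | hxy := eq_or_ne x y
  · rw [covariance_self (hφ.measurable x).aemeasurable, hvar, SimpleGraph.dist_self, pow_zero,
      mul_one]
  · have hsum := hφ.variance_sum {x, y} fun _ => 1
    simp only [Finset.sum_pair hxy, one_mul, SimpleGraph.dist_self, pow_zero, mul_one,
      G.dist_comm (u := y) (v := x)] at hsum
    rw [Real.coe_toNNReal _ (by positivity), variance_fun_add (hφ.memLp_two x) (hφ.memLp_two y),
      hvar, hvar] at hsum
    linarith

lemma measurable_innov (hφ : IsFreeField d G P φ) (o y : V) : Measurable (innov d G φ o y) :=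
  (hφ.measurable y).sub ((hφ.measurable _).const_mul _)

lemma map_innov (hφ : IsFreeField d G P φ) (hd : 2 ≤ d) (hG : G.Connected) (hy : y ≠ o) :
    P.map (innov d G φ o y) = gaussianReal 0 (Real.toNNReal (1 / d)) := by
  classical
  have hadj := parent_adj hG hy
  have hne : y ≠ parent G o y := hadj.ne'
  have hD := (sq_sub_one_pos hd).ne'
  have hmap := hφ.map_sum {y, parent G o y} fun x => if x = y then 1 else -(1 / d)
  simp only [Finset.sum_pair hne, if_true, if_neg hne.symm, SimpleGraph.dist_self,
    SimpleGraph.dist_eq_one_iff_adj.2 hadj, SimpleGraph.dist_eq_one_iff_adj.2 hadj.symm] at hmap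
  convert hmap using 2
  · ext ω
    simp only [innov]
    ring
  · congr 1
    field_simp
    ring

lemma isGaussianProcess_innov_sumElim (hφ : IsFreeField d G P φ) (o y : V) (W : Set V) :
    IsGaussianProcess (Sum.elim (fun _ : Unit => innov d G φ o y) fun z : W => φ z) P := by
  classical
  refine hφ.isGaussianProcess.of_isGaussianProcess ?_
  rintro (_ | z)
  · refine ⟨{y, parent G o y},
      ContinuousLinearMap.proj (R := ℝ) (φ := fun _ => ℝ) ⟨y, by simp⟩ -
        (1 / d : ℝ) • ContinuousLinearMap.proj (R := ℝ) (φ := fun _ => ℝ)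
          ⟨parent G o y, by simp⟩, fun ω => ?_⟩
    simp [innov]
  · exact ⟨{z.1}, ContinuousLinearMap.proj (R := ℝ) (φ := fun _ => ℝ) ⟨z.1, by simp⟩,
      fun ω => by simp⟩

lemma covariance_innov_eq_zero (hφ : IsFreeField d G P φ) (hd : 2 ≤ d) (hG : G.IsTree)
    (hy : y ≠ o) {z : V} (hzy : z ≠ y) (hz : G.dist o z ≤ G.dist o y) :
    cov[innov d G φ o y, φ z; P] = 0 := by
  have := hφ.isGaussianProcess.isProbabilityMeasure
  have hinnov : innov d G φ o y = φ y - fun ω => (1 / d : ℝ) * φ (parent G o y) ω := rfl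
  rw [hinnov, covariance_sub_left (hφ.memLp_two _) ((hφ.memLp_two _).const_mul _)
      (hφ.memLp_two _), covariance_const_mul_left, hφ.covariance_eq hd, hφ.covariance_eq hd,
    G.dist_comm (v := z), G.dist_comm (v := z), dist_eq_dist_parent_add_one hG hy hzy hz, pow_succ]
  ring

lemma indep_past_innov (hφ : IsFreeField d G P φ) (hd : 2 ≤ d) (hG : G.IsTree) (hy : y ≠ o) :
    Indep (past φ {z | z ≠ y ∧ G.dist o z ≤ G.dist o y})
      (MeasurableSpace.comap (innov d G φ o y) inferInstance) P := by
  have hind := (hφ.isGaussianProcess_innov_sumElim o y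
    {z | z ≠ y ∧ G.dist o z ≤ G.dist o y}).indepFun_of_covariance_eq_zero
    (fun _ => (hφ.measurable_innov o y).aemeasurable) (fun z => (hφ.measurable z).aemeasurable)
    fun _ z => hφ.covariance_innov_eq_zero hd hG hy z.2.1 z.2.2
  rw [IndepFun_iff_Indep] at hind
  refine (indep_of_indep_of_le_left hind (measurable_iff_comap_le.1 ?_)).symm
  exact (measurable_pi_apply ()).comp (comap_measurable fun ω (_ : Unit) => innov d G φ o y ω)

theorem isTreeMarkov (hφ : IsFreeField d G P φ) (hd : 2 ≤ d) (hG : G.IsTree) :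
    IsTreeMarkov (siteLaw d) (mehler d) G P φ where
  measurable := hφ.measurable
  map_eq := hφ.map_eq
  lintegral_mul_comp {o y} hy {Z} hZ {f} hf := by
    have := hφ.isGaussianProcess.isProbabilityMeasure
    have hpar : parent G o y ∈ {z | z ≠ y ∧ G.dist o z ≤ G.dist o y} :=
      ⟨(parent_adj hG.connected hy).ne,
        (dist_eq_dist_root_parent_add_one hG.connected hy).symm ▸ Nat.le_succ _⟩
    have hU : Measurable[past φ {z | z ≠ y ∧ G.dist o z ≤ G.dist o y}]
        fun ω => (Z ω, φ (parent G o y) ω) :=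
      hZ.prodMk (measurable_past hpar)
    have hindep : IndepFun (fun ω => (Z ω, φ (parent G o y) ω)) (innov d G φ o y) P :=
      (IndepFun_iff_Indep _ _ _).2 <|
        indep_of_indep_of_le_left (hφ.indep_past_innov hd hG hy) (measurable_iff_comap_le.1 hU)
    have hg : Measurable fun p : (ℝ≥0∞ × ℝ) × ℝ => p.1.1 * f (p.1.2 / d + p.2) := by fun_prop
    calc ∫⁻ ω, Z ω * f (φ y ω) ∂P
        = ∫⁻ ω, Z ω * f (φ (parent G o y) ω / d + innov d G φ o y ω) ∂P := by
          refine lintegral_congr fun ω => ?_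
          rw [innov, one_div_mul_eq_div, add_sub_cancel]
      _ = ∫⁻ ω, ∫⁻ x, Z ω * f (φ (parent G o y) ω / d + x) ∂P.map (innov d G φ o y) ∂P :=
          lintegral_comp_prodMk_of_indepFun hindep
            (hU.mono (past_le_iff.2 fun z _ => hφ.measurable z) le_rfl)
            (hφ.measurable_innov o y) hg
      _ = ∫⁻ ω, Z ω * transOp (siteLaw d) (mehler d) f (φ (parent G o y) ω) ∂P := by
          refine lintegral_congr fun ω => ?_
          rw [hφ.map_innov hd hG.connected hy, lintegral_const_mul _ (by fun_prop),
            lintegral_const_add_gaussianReal hd hf]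

end IsFreeField

end FreeField

end TreeGFF

/-- Let φ be the Gaussian free field on the (d+1)-regular tree T
(centered Gaussian with covariance (d/(d²-1))·d^{-dist(x,y)}), d ≥ 2, and let h_*
be the unique real with λ_{h_*} = 1, where λ_h = ‖π_h(dQ_{log d})π_h‖ on
L²(N(0, d/(d²-1))). Then for h < h_*, a.s. the level set {φ ≥ h} has an infinite
connected component, while for h > h_*, a.s. all its components are finite. -/
theorem stmt_15 (d : ℕ) (hd : 2 ≤ d)
    {V : Type*} (G : SimpleGraph V) [∀ v : V, Fintype (G.neighborSet v)]
    (htree : G.IsTree) (hreg : G.IsRegularOfDegree (d + 1))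
    {Ω : Type*} [MeasurableSpace Ω] (P : Measure Ω) [IsProbabilityMeasure P]
    (φ : V → Ω → ℝ) (hφm : ∀ x, Measurable (φ x))
    (hGauss : ∀ (s : Finset V) (c : V → ℝ),
      Measure.map (fun ω => ∑ x ∈ s, c x * φ x ω) P =
        gaussianReal 0 (Real.toNNReal (∑ x ∈ s, ∑ y ∈ s,
          c x * c y * (((d : ℝ) / ((d : ℝ) ^ 2 - 1)) * (1 / (d : ℝ)) ^ (G.dist x y)))))
    (ν : Measure ℝ) (hν : ν = gaussianReal 0 (Real.toNNReal ((d : ℝ) / ((d : ℝ) ^ 2 - 1))))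
    (Q : Lp ℝ 2 ν →L[ℝ] Lp ℝ 2 ν)
    (hQ : ∀ f : Lp ℝ 2 ν, (Q f : ℝ → ℝ) =ᵐ[ν]
      fun a => ∫ y, (f : ℝ → ℝ) (a / d + Real.sqrt (1 - 1 / (d : ℝ) ^ 2) * y) ∂ν)
    (Ph : ℝ → (Lp ℝ 2 ν →L[ℝ] Lp ℝ 2 ν))
    (hPh : ∀ (h : ℝ) (f : Lp ℝ 2 ν), (Ph h f : ℝ → ℝ) =ᵐ[ν]
      fun a => if h ≤ a then (f : ℝ → ℝ) a else 0)
    (lam : ℝ → ℝ) (hlam : ∀ h : ℝ, lam h = ‖Ph h ∘L ((d : ℝ) • Q) ∘L Ph h‖)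
    (hstar : ℝ) (hstar_eq : lam hstar = 1) :
    (∀ h : ℝ, h < hstar → ∀ᵐ ω ∂P,
      ∃ S : Set V, S.Infinite ∧ (∀ x ∈ S, h ≤ φ x ω) ∧ (G.induce S).Connected) ∧
    (∀ h : ℝ, hstar < h → ∀ᵐ ω ∂P,
      ∀ S : Set V, ((∀ x ∈ S, h ≤ φ x ω) ∧ (G.induce S).Connected) → S.Finite) := by
  obtain rfl : ν = TreeGFF.siteLaw d := hν
  have hφ : TreeGFF.IsTreeMarkov (TreeGFF.siteLaw d) (TreeGFF.mehler d) G P φ :=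
    TreeGFF.IsFreeField.isTreeMarkov ⟨hφm, hGauss⟩ hd htree
  have hK := TreeGFF.isSymmDensity_mehler hd
  have hcut h := TreeGFF.isCutOperator_mehler hd hQ (hPh h)
  have hmono {h h'} (hh : h < h') (hne : lam h' ≠ 0) : lam h' < lam h := by
    rw [hlam, norm_ne_zero_iff] at hne
    rw [hlam, hlam]
    exact TreeGFF.IsCutOperator.norm_lt_norm hK (TreeGFF.hasProductBounds_mehler hd)
      (by positivity) measurableSet_Ici measurableSet_Ici (Set.Ici_subset_Ici.2 hh.le)
      (TreeGFF.siteLaw_Ici_diff_Ici_ne_zero hd hh) (hcut h') (hcut h) hne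
  refine ⟨fun h hh => ?_, fun h hh => ?_⟩
  · have hlt : 1 < lam h := hstar_eq ▸ hmono hh (by simp [hstar_eq])
    obtain ⟨s, hs⟩ := TreeGFF.IsCutOperator.exists_isExtinctionSupersolution hK
      (TreeGFF.hasProductBounds_mehler hd) (by positivity) measurableSet_Ici (hcut h)
      (hlam h ▸ hlt)
    exact hφ.ae_exists_infinite hK htree (fun v => by simp [hreg v]) measurableSet_Ici hs
      (hs.tendsto_lintegral_iterate hK (TreeGFF.mehler_ne_zero hd) hd)
  · have hlt : lam h < 1 := by
      obtain h0 | h0 := eq_or_ne (lam h) 0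
      · exact h0 ▸ one_pos
      · exact hstar_eq ▸ hmono hh h0
    exact hφ.ae_forall_finite hK htree (fun v => (hreg v).le) measurableSet_Ici
      (TreeGFF.IsCutOperator.tendsto_lintegral_iterate_cutOp hK measurableSet_Ici (hcut h)
        (hlam h ▸ hlt))
end

section
/- For all h ≥ 0 and d ≥ 2, λ_h ≤ λ_0 · exp(−h²(d−1)²/(2d)) < d · exp(−h²(d−1)²/(2d)), where λ_h = ‖π_h(dQ_{log d})π_h‖ on L²(N(0, d/(d²−1))). -/
open MeasureTheory ProbabilityTheory

/-!
The operator `Q` has a symmetric density `k(a, y)` with respect to `ν = N(0, D / (D² - 1))`, the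
density of `N(a / D, 1 / D)`.

Translation by `h`, weighted by the square root `w` of the Cameron–Martin density, maps
`L²([h, ∞), ν)` isometrically onto `L²([0, ∞), ν)` and turns `k` into
`w(s) w(t) k(s + h, t + h) = exp(-(h² + h (s + t)) (D - 1)² / (2 D)) k(s, t)`, which for `s, t ≥ 0`
is at most `exp(-h² (D - 1)² / (2 D)) k(s, t)`. All kernels being nonnegative, the same factor
separates the operator norms.

For `λ_0 < D`, split `k` on `[0, ∞)` into its even and odd parts in `y`. Folding the half-line back
onto `ℝ` shows that they have the positive eigenfunctions `1` and `y`, with eigenvalues `1 / 2` and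
`1 / (2 D)`, so the Schur test bounds `λ_0` by `D (1 / 2 + 1 / (2 D)) = (D + 1) / 2`.
-/

open scoped ENNReal NNReal

section SchurTest

variable {α : Type*} [MeasurableSpace α] {μ : Measure α} {K : α → α → ℝ≥0∞} {u v w : α → ℝ≥0∞}

/-- The integral operator with nonnegative kernel `K`, acting on nonnegative functions. Working in
`ℝ≥0∞` makes it meaningful without any integrability. -/
noncomputable def kernelOp (μ : Measure α) (K : α → α → ℝ≥0∞) (u : α → ℝ≥0∞) (a : α) : ℝ≥0∞ :=
  ∫⁻ y, K a y * u y ∂μ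

lemma measurable_kernelOp [SFinite μ] (hK : Measurable (Function.uncurry K)) (hu : Measurable u) :
    Measurable (kernelOp μ K u) :=
  Measurable.lintegral_prod_right (hK.mul (hu.comp measurable_snd))

lemma eLpNorm_two_sq {E : Type*} [ENorm E] (f : α → E) :
    eLpNorm f 2 μ ^ 2 = ∫⁻ a, ‖f a‖ₑ ^ 2 ∂μ := by
  simpa using eLpNorm_nnreal_pow_eq_lintegral (f := f) (μ := μ) (p := 2) two_ne_zero

lemma lintegral_mul_kernelOp_comm [SFinite μ] (hK : Measurable (Function.uncurry K))
    (hsymm : ∀ a y, K a y = K y a) (hu : Measurable u) (hv : Measurable v) :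
    ∫⁻ a, u a * kernelOp μ K v a ∂μ = ∫⁻ a, v a * kernelOp μ K u a ∂μ := by
  have hpull {f g : α → ℝ≥0∞} (hg : Measurable g) (a : α) :
      f a * kernelOp μ K g a = ∫⁻ y, f a * (K a y * g y) ∂μ :=
    (lintegral_const_mul _ (hK.of_uncurry_left.mul hg)).symm
  simp_rw [hpull hu, hpull hv]
  rw [lintegral_lintegral_swap (by fun_prop)]
  refine lintegral_congr fun a => lintegral_congr fun y => ?_
  rw [hsymm a y]; ring

lemma kernelOp_sq_le (hK : Measurable (Function.uncurry K)) (hu : Measurable u) (hw : Measurable w)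
    (hw0 : ∀ᵐ y ∂μ, w y ≠ 0) (hwtop : ∀ᵐ y ∂μ, w y ≠ ∞) (a : α) :
    kernelOp μ K u a ^ 2 ≤ kernelOp μ K w a * kernelOp μ K (fun y => u y ^ 2 / w y) a := by
  have hKa : Measurable (K a) := hK.of_uncurry_left
  have hsqrt (x : ℝ≥0∞) : (x ^ 2) ^ (1 / 2 : ℝ) = x := by
    rw [← ENNReal.rpow_natCast, ← ENNReal.rpow_mul]; norm_num
  have hfactor : ∀ᵐ y ∂μ,
      K a y * u y = (K a y * w y) ^ (1 / 2 : ℝ) * (K a y * (u y ^ 2 / w y)) ^ (1 / 2 : ℝ) := by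
    filter_upwards [hw0, hwtop] with y h0 htop
    rw [← ENNReal.mul_rpow_of_nonneg _ _ (by norm_num), mul_mul_mul_comm,
      ENNReal.mul_div_cancel h0 htop, ← sq, ← mul_pow, hsqrt]
  calc kernelOp μ K u a ^ 2
      ≤ (kernelOp μ K w a ^ (1 / 2 : ℝ) *
          kernelOp μ K (fun y => u y ^ 2 / w y) a ^ (1 / 2 : ℝ)) ^ 2 := by
        gcongr
        rw [kernelOp, lintegral_congr_ae hfactor]
        exact ENNReal.lintegral_mul_norm_pow_le (by fun_prop) (by fun_prop) (by norm_num)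
          (by norm_num) (by norm_num)
    _ = _ := by
        rw [← ENNReal.mul_rpow_of_nonneg _ _ (by norm_num), ← ENNReal.rpow_natCast,
          ← ENNReal.rpow_mul]
        norm_num

theorem eLpNorm_kernelOp_le_of_kernelOp_le [SFinite μ] (hK : Measurable (Function.uncurry K))
    (hsymm : ∀ a y, K a y = K y a) (hw : Measurable w) (hw0 : ∀ᵐ y ∂μ, w y ≠ 0)
    (hwtop : ∀ᵐ y ∂μ, w y ≠ ∞) {C : ℝ≥0∞} (hKw : ∀ᵐ a ∂μ, kernelOp μ K w a ≤ C * w a)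
    (hu : Measurable u) :
    eLpNorm (kernelOp μ K u) 2 μ ≤ C * eLpNorm u 2 μ := by
  have hv : Measurable fun y => u y ^ 2 / w y := by fun_prop
  rw [← ENNReal.pow_le_pow_left_iff two_ne_zero, mul_pow, eLpNorm_two_sq, eLpNorm_two_sq]
  simp only [enorm_eq_self]
  calc ∫⁻ a, kernelOp μ K u a ^ 2 ∂μ
      ≤ ∫⁻ a, C * (w a * kernelOp μ K (fun y => u y ^ 2 / w y) a) ∂μ := by
        refine lintegral_mono_ae (hKw.mono fun a ha => ?_)
        rw [← mul_assoc]
        exact (kernelOp_sq_le hK hu hw hw0 hwtop a).trans (by gcongr)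
    _ = C * ∫⁻ a, u a ^ 2 / w a * kernelOp μ K w a ∂μ := by
        rw [lintegral_const_mul _ (hw.fun_mul (measurable_kernelOp hK hv)),
          lintegral_mul_kernelOp_comm hK hsymm hw hv]
    _ ≤ C * ∫⁻ a, C * u a ^ 2 ∂μ := by
        refine mul_le_mul_right (lintegral_mono_ae ?_) _
        filter_upwards [hKw, hw0, hwtop] with a ha h0 htop
        calc u a ^ 2 / w a * kernelOp μ K w a ≤ u a ^ 2 / w a * (C * w a) := by gcongr
          _ = C * u a ^ 2 := by rw [mul_left_comm, ENNReal.div_mul_cancel h0 htop]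
    _ = C ^ 2 * ∫⁻ a, u a ^ 2 ∂μ := by
        rw [lintegral_const_mul _ (by fun_prop), ← mul_assoc, sq]

end SchurTest

/-- The stationary law `N(0, D / (D² - 1))` of the Mehler operator of correlation `1 / D`. -/
noncomputable abbrev mehlerMeasure (D : ℝ) : Measure ℝ :=
  gaussianReal 0 (D / (D ^ 2 - 1)).toNNReal

/-- The density of `N(a / D, 1 / D)` with respect to `mehlerMeasure D`: the symmetric kernel of the
Mehler operator `f ↦ 𝔼[f(a / D + √(1 - 1 / D²) Y)]`, `Y ∼ mehlerMeasure D`. -/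
noncomputable def mehlerKernel (D a y : ℝ) : ℝ :=
  D / √(D ^ 2 - 1) * Real.exp (a * y - (a ^ 2 + y ^ 2) / (2 * D))

section MehlerKernel

variable {D : ℝ}

lemma mehlerVariance_pos (hD : 1 < D) : 0 < D / (D ^ 2 - 1) :=
  div_pos (by linarith) (by nlinarith)

lemma toNNReal_mehlerVariance_ne_zero (hD : 1 < D) : (D / (D ^ 2 - 1)).toNNReal ≠ 0 :=
  (Real.toNNReal_pos.2 (mehlerVariance_pos hD)).ne'

lemma mehlerKernel_pos (hD : 1 < D) (a y : ℝ) : 0 < mehlerKernel D a y := by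
  have : 0 < D ^ 2 - 1 := by nlinarith
  unfold mehlerKernel; positivity

lemma mehlerKernel_comm (D a y : ℝ) : mehlerKernel D a y = mehlerKernel D y a := by
  rw [mehlerKernel, mehlerKernel, mul_comm a, add_comm (a ^ 2)]

lemma mehlerKernel_neg_right (D a y : ℝ) : mehlerKernel D a (-y) = mehlerKernel D (-a) y := by
  simp only [mehlerKernel, mul_neg, neg_mul, even_two.neg_pow]

lemma measurable_uncurry_mehlerKernel (D : ℝ) :
    Measurable (Function.uncurry (mehlerKernel D)) := by
  unfold mehlerKernel Function.uncurry; fun_prop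

lemma measurable_mehlerKernel (D a : ℝ) : Measurable (mehlerKernel D a) :=
  (measurable_uncurry_mehlerKernel D).of_uncurry_left

lemma mehlerKernel_le (hD : 1 < D) (a y : ℝ) :
    mehlerKernel D a y ≤ D / √(D ^ 2 - 1) * Real.exp (D * a ^ 2 / 2) := by
  have : 0 < D := by linarith
  unfold mehlerKernel
  gcongr
  have hsq : D * a ^ 2 / 2 - (a * y - (a ^ 2 + y ^ 2) / (2 * D)) =
      ((y - D * a) ^ 2 + a ^ 2) / (2 * D) := by
    field_simp; ring
  have : 0 ≤ ((y - D * a) ^ 2 + a ^ 2) / (2 * D) := by positivity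
  linarith

lemma memLp_mehlerKernel (hD : 1 < D) (a : ℝ) (p : ℝ≥0∞) {μ : Measure ℝ} [IsFiniteMeasure μ] :
    MemLp (mehlerKernel D a) p μ :=
  .of_bound (measurable_mehlerKernel D a).aestronglyMeasurable _ <| .of_forall fun y => by
    rw [Real.norm_of_nonneg (mehlerKernel_pos hD a y).le]
    exact mehlerKernel_le hD a y

lemma gaussianPDFReal_mul_mehlerKernel (hD : 1 < D) (a y : ℝ) :
    gaussianPDFReal 0 (D / (D ^ 2 - 1)).toNNReal y * mehlerKernel D a y =
      gaussianPDFReal (a / D) (1 / D).toNNReal y := by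
  have hD0 : 0 < D := by linarith
  have hD2 : 0 < D ^ 2 - 1 := by nlinarith
  have hconst : (√(2 * Real.pi * (D / (D ^ 2 - 1))))⁻¹ * (D / √(D ^ 2 - 1)) =
      (√(2 * Real.pi * (1 / D)))⁻¹ := by
    have hquot : D / √(D ^ 2 - 1) = √(D ^ 2 / (D ^ 2 - 1)) := by
      rw [Real.sqrt_div (by positivity), Real.sqrt_sq hD0.le]
    rw [hquot, ← Real.sqrt_inv, ← Real.sqrt_inv, ← Real.sqrt_mul (by positivity)]
    congr 1
    field_simp
  simp only [gaussianPDFReal_def, mehlerKernel]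
  rw [Real.coe_toNNReal _ (mehlerVariance_pos hD).le, Real.coe_toNNReal _ (by positivity),
    mul_mul_mul_comm, hconst, ← Real.exp_add]
  congr 2
  field_simp
  ring

lemma withDensity_mehlerKernel (hD : 1 < D) (a : ℝ) :
    (mehlerMeasure D).withDensity (fun y => .ofReal (mehlerKernel D a y)) =
      gaussianReal (a / D) (1 / D).toNNReal := by
  have hv : (1 / D).toNNReal ≠ 0 := (Real.toNNReal_pos.2 (by positivity)).ne'
  rw [mehlerMeasure, gaussianReal_of_var_ne_zero _ (toNNReal_mehlerVariance_ne_zero hD),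
    gaussianReal_of_var_ne_zero _ hv,
    ← withDensity_mul _ (measurable_gaussianPDF _ _) (measurable_mehlerKernel D a).ennreal_ofReal]
  congr 1
  ext y
  rw [Pi.mul_apply, gaussianPDF, gaussianPDF, ← gaussianPDFReal_mul_mehlerKernel hD,
    ENNReal.ofReal_mul (gaussianPDFReal_nonneg _ _ _)]

lemma integral_mehlerKernel_mul (hD : 1 < D) (a : ℝ) (f : ℝ → ℝ) :
    ∫ y, mehlerKernel D a y * f y ∂mehlerMeasure D =
      ∫ y, f y ∂gaussianReal (a / D) (1 / D).toNNReal := by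
  rw [← withDensity_mehlerKernel hD, integral_withDensity_eq_integral_toReal_smul
    (measurable_mehlerKernel D a).ennreal_ofReal (.of_forall fun _ => ENNReal.ofReal_lt_top)]
  simp only [ENNReal.toReal_ofReal (mehlerKernel_pos hD a _).le, smul_eq_mul]

lemma map_add_mul_mehlerMeasure (hD : 1 < D) (a : ℝ) :
    (mehlerMeasure D).map (fun y => a / D + √(1 - 1 / D ^ 2) * y) =
      gaussianReal (a / D) (1 / D).toNNReal := by
  have hD2 : 0 < D ^ 2 - 1 := by nlinarith
  have hs : 0 ≤ 1 - 1 / D ^ 2 := by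
    rw [show 1 - 1 / D ^ 2 = (D ^ 2 - 1) / D ^ 2 by field_simp]; positivity
  rw [← Function.comp_def (a / D + ·) (√(1 - 1 / D ^ 2) * ·),
    ← Measure.map_map (by fun_prop) (by fun_prop), gaussianReal_map_const_mul,
    gaussianReal_map_const_add, mul_zero, zero_add]
  congr 1
  ext
  rw [NNReal.coe_mul, NNReal.coe_mk, Real.sq_sqrt hs, Real.coe_toNNReal _
    (mehlerVariance_pos hD).le, Real.coe_toNNReal _ (by positivity)]
  field_simp

lemma integral_comp_add_mul_mehlerMeasure (hD : 1 < D) (a : ℝ) {f : ℝ → ℝ}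
    (hf : StronglyMeasurable f) :
    ∫ y, f (a / D + √(1 - 1 / D ^ 2) * y) ∂mehlerMeasure D =
      ∫ y, mehlerKernel D a y * f y ∂mehlerMeasure D := by
  rw [integral_mehlerKernel_mul hD, ← map_add_mul_mehlerMeasure hD,
    integral_map (by fun_prop) hf.aestronglyMeasurable]

end MehlerKernel

section KernelOperatorNorm

variable {α : Type*} [MeasurableSpace α] {μ : Measure α} {s : Set α} {K : α → α → ℝ}
  {A : Lp ℝ 2 μ →L[ℝ] Lp ℝ 2 μ}

lemma enorm_apply_eq_eLpNorm_setIntegral (hs : MeasurableSet s) {f : Lp ℝ 2 μ}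
    (hA : A f =ᵐ[μ] s.indicator fun a => ∫ y in s, K a y * f y ∂μ) :
    ‖A f‖ₑ = eLpNorm (fun a => ∫ y in s, K a y * f y ∂μ) 2 (μ.restrict s) := by
  rw [Lp.enorm_def, eLpNorm_congr_ae hA, eLpNorm_indicator_eq_eLpNorm_restrict hs]

theorem enorm_le_of_eLpNorm_kernelOp_le (hs : MeasurableSet s) (hK0 : ∀ a y, 0 ≤ K a y)
    (hA : ∀ f : Lp ℝ 2 μ, A f =ᵐ[μ] s.indicator fun a => ∫ y in s, K a y * f y ∂μ) {M : ℝ≥0∞}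
    (hM : ∀ u : α → ℝ≥0∞, Measurable u → eLpNorm u 2 (μ.restrict s) ≠ ∞ →
      eLpNorm (kernelOp (μ.restrict s) (fun a y => .ofReal (K a y)) u) 2 (μ.restrict s) ≤
        M * eLpNorm u 2 (μ.restrict s)) :
    ‖A‖ₑ ≤ M := by
  refine A.opENorm_le_bound fun f => ?_
  calc ‖A f‖ₑ = eLpNorm (fun a => ∫ y in s, K a y * f y ∂μ) 2 (μ.restrict s) :=
        enorm_apply_eq_eLpNorm_setIntegral hs (hA f)
    _ ≤ eLpNorm (kernelOp (μ.restrict s) (fun a y => .ofReal (K a y)) (‖f ·‖ₑ)) 2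
          (μ.restrict s) := by
        refine eLpNorm_mono_enorm fun a => (enorm_integral_le_lintegral_enorm _).trans_eq ?_
        simp only [enorm_mul, Real.enorm_of_nonneg (hK0 a _), kernelOp, enorm_eq_self]
    _ ≤ M * eLpNorm f 2 (μ.restrict s) := by
        rw [← eLpNorm_enorm (f := f)]
        exact hM _ (Lp.stronglyMeasurable f).enorm
          (by rw [eLpNorm_enorm]; exact ((Lp.memLp f).restrict s).eLpNorm_ne_top)
    _ ≤ M * ‖f‖ₑ := by
        rw [Lp.enorm_def]
        gcongr
        exact Measure.restrict_le_self

lemma ae_ne_top_of_eLpNorm_two_ne_top {u : α → ℝ≥0∞} (hu : Measurable u)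
    (hu2 : eLpNorm u 2 μ ≠ ∞) : ∀ᵐ a ∂μ, u a ≠ ∞ := by
  have hsq : ∫⁻ a, u a ^ 2 ∂μ ≠ ∞ := by
    simpa only [eLpNorm_two_sq, enorm_eq_self] using ENNReal.pow_ne_top (n := 2) hu2
  filter_upwards [ae_lt_top (hu.pow_const 2) hsq] with a ha
  exact fun h => by simp [h] at ha

lemma kernelOp_ofReal_eq_enorm_integral {a : α} (hK0 : ∀ y, 0 ≤ K a y) {f : α → ℝ}
    (hKf : Integrable (fun y => K a y * f y) μ) {u : α → ℝ≥0∞} (hu : ∀ᵐ y ∂μ, u y ≠ ∞)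
    (hf : f =ᵐ[μ] fun y => (u y).toReal) :
    kernelOp μ (fun a y => .ofReal (K a y)) u a = ‖∫ y, K a y * f y ∂μ‖ₑ := by
  have hnonneg : ∀ᵐ y ∂μ, 0 ≤ K a y * f y := by
    filter_upwards [hf] with y hy
    exact mul_nonneg (hK0 y) (hy ▸ ENNReal.toReal_nonneg)
  rw [Real.enorm_of_nonneg (integral_nonneg_of_ae hnonneg),
    ofReal_integral_eq_lintegral_ofReal hKf hnonneg]
  refine lintegral_congr_ae ?_
  filter_upwards [hu, hf] with y huy hfy
  rw [hfy, ENNReal.ofReal_mul (hK0 y), ENNReal.ofReal_toReal huy]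

theorem eLpNorm_kernelOp_le_enorm_mul (hs : MeasurableSet s) (hK0 : ∀ a y, 0 ≤ K a y)
    (hK : ∀ a, MemLp (K a) 2 μ)
    (hA : ∀ f : Lp ℝ 2 μ, A f =ᵐ[μ] s.indicator fun a => ∫ y in s, K a y * f y ∂μ)
    {u : α → ℝ≥0∞} (hu : Measurable u) (hu2 : eLpNorm u 2 (μ.restrict s) ≠ ∞) :
    eLpNorm (kernelOp (μ.restrict s) (fun a y => .ofReal (K a y)) u) 2 (μ.restrict s) ≤
      ‖A‖ₑ * eLpNorm u 2 (μ.restrict s) := by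
  have hfin := ae_ne_top_of_eLpNorm_two_ne_top hu hu2
  have hfu : (fun a => ‖(u a).toReal‖ₑ) =ᵐ[μ.restrict s] u := by
    filter_upwards [hfin] with a ha
    rw [Real.enorm_of_nonneg ENNReal.toReal_nonneg, ENNReal.ofReal_toReal ha]
  have hnorm : eLpNorm (fun a => (u a).toReal) 2 (μ.restrict s) = eLpNorm u 2 (μ.restrict s) := by
    rw [← eLpNorm_enorm, eLpNorm_congr_ae hfu]
  have hg : MemLp (s.indicator fun a => (u a).toReal) 2 μ := by
    rw [memLp_indicator_iff_restrict hs]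
    exact ⟨hu.ennreal_toReal.aestronglyMeasurable, hnorm ▸ hu2.lt_top⟩
  set f := hg.toLp
  have hf : f =ᵐ[μ.restrict s] fun a => (u a).toReal :=
    Filter.EventuallyEq.trans (ae_restrict_of_ae hg.coeFn_toLp) (indicator_ae_eq_restrict hs)
  have hop (a : α) : kernelOp (μ.restrict s) (fun a y => .ofReal (K a y)) u a =
      ‖∫ y in s, K a y * f y ∂μ‖ₑ :=
    kernelOp_ofReal_eq_enorm_integral (hK0 a)
      (((hK a).restrict s).integrable_mul ((Lp.memLp f).restrict s)) hfin hf
  calc eLpNorm (kernelOp (μ.restrict s) (fun a y => .ofReal (K a y)) u) 2 (μ.restrict s)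
      = ‖A f‖ₑ := by
        rw [enorm_apply_eq_eLpNorm_setIntegral hs (hA f), funext hop, eLpNorm_enorm]
    _ ≤ ‖A‖ₑ * ‖f‖ₑ := A.le_opENorm f
    _ = ‖A‖ₑ * eLpNorm u 2 (μ.restrict s) := by
        rw [Lp.enorm_toLp, eLpNorm_indicator_eq_eLpNorm_restrict hs, hnorm]

end KernelOperatorNorm

section Translation

variable {D h : ℝ}

lemma gaussianPDFReal_add (m h x : ℝ) {v : ℝ≥0} (hv : v ≠ 0) :
    gaussianPDFReal m v (x + h) =
      gaussianPDFReal m v x * Real.exp (-(h * (x - m) + h ^ 2 / 2) / v) := by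
  simp only [gaussianPDFReal_def]
  rw [mul_assoc _ (Real.exp _), ← Real.exp_add]
  congr 2
  have : (v : ℝ) ≠ 0 := by exact_mod_cast hv
  field_simp
  ring

theorem lintegral_gaussianReal_eq_lintegral_add (m h : ℝ) {v : ℝ≥0} (hv : v ≠ 0) {F : ℝ → ℝ≥0∞}
    (hF : Measurable F) :
    ∫⁻ x, F x ∂gaussianReal m v = ∫⁻ x,
      .ofReal (Real.exp (-(h * (x - m) + h ^ 2 / 2) / v)) * F (x + h) ∂gaussianReal m v := by
  rw [gaussianReal_of_var_ne_zero m hv,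
    lintegral_withDensity_eq_lintegral_mul _ (measurable_gaussianPDF m v) hF,
    lintegral_withDensity_eq_lintegral_mul _ (measurable_gaussianPDF m v) (by fun_prop),
    ← lintegral_add_right_eq_self _ h]
  refine lintegral_congr fun x => ?_
  simp only [Pi.mul_apply, gaussianPDF]
  rw [gaussianPDFReal_add m h x hv, ENNReal.ofReal_mul (gaussianPDFReal_nonneg m v x), mul_assoc]

/-- The law `mehlerMeasure D` restricted to the half-line `[h, ∞)`. -/
noncomputable abbrev mehlerMeasureIci (D h : ℝ) : Measure ℝ :=
  (mehlerMeasure D).restrict (Set.Ici h)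

/-- The Mehler operator on the half-line `[h, ∞)`, acting on nonnegative functions. -/
noncomputable abbrev halfLineOp (D h : ℝ) : (ℝ → ℝ≥0∞) → ℝ → ℝ≥0∞ :=
  kernelOp (mehlerMeasureIci D h) fun a y => .ofReal (mehlerKernel D a y)

lemma measurable_halfLineOp {u : ℝ → ℝ≥0∞} (hu : Measurable u) : Measurable (halfLineOp D h u) :=
  measurable_kernelOp (K := fun a y => .ofReal (mehlerKernel D a y))
    (measurable_uncurry_mehlerKernel D).ennreal_ofReal hu

/-- The square root of the Cameron–Martin density of `mehlerMeasure D` translated by `h`. -/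
noncomputable def sqrtCameronMartin (D h t : ℝ) : ℝ :=
  Real.exp (-((D - 1 / D) * (h * t + h ^ 2 / 2)) / 2)

/-- The translation `L²([h, ∞)) → L²([0, ∞))` made unitary by the Cameron–Martin weight. -/
noncomputable def weightedShift (D h : ℝ) (u : ℝ → ℝ≥0∞) (t : ℝ) : ℝ≥0∞ :=
  .ofReal (sqrtCameronMartin D h t) * u (t + h)

lemma measurable_sqrtCameronMartin (D h : ℝ) : Measurable (sqrtCameronMartin D h) := by
  unfold sqrtCameronMartin; fun_prop

lemma measurable_weightedShift (D h : ℝ) {u : ℝ → ℝ≥0∞} (hu : Measurable u) :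
    Measurable (weightedShift D h u) :=
  (measurable_sqrtCameronMartin D h).ennreal_ofReal.mul (hu.comp (measurable_add_const h))

lemma lintegral_mehlerMeasureIci_eq (hD : 1 < D) {F : ℝ → ℝ≥0∞} (hF : Measurable F) :
    ∫⁻ y, F y ∂mehlerMeasureIci D h =
      ∫⁻ t, .ofReal (sqrtCameronMartin D h t) ^ 2 * F (t + h) ∂mehlerMeasureIci D 0 := by
  have hshift (t : ℝ) : (Set.Ici h).indicator F (t + h) =
      (Set.Ici 0).indicator (fun t => F (t + h)) t := by
    simp only [Set.indicator, Set.mem_Ici, le_add_iff_nonneg_left]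
  have hweight (t : ℝ) : .ofReal (Real.exp (-(h * (t - 0) + h ^ 2 / 2) /
      (D / (D ^ 2 - 1)).toNNReal)) = ENNReal.ofReal (sqrtCameronMartin D h t) ^ 2 := by
    have hD2 : D ^ 2 - 1 ≠ 0 := by nlinarith
    rw [sqrtCameronMartin, ← ENNReal.ofReal_pow (Real.exp_pos _).le, ← Real.exp_nat_mul,
      Real.coe_toNNReal _ (mehlerVariance_pos hD).le]
    congr 2
    push_cast
    field_simp
    ring
  rw [← lintegral_indicator measurableSet_Ici, ← lintegral_indicator measurableSet_Ici,
    mehlerMeasure, lintegral_gaussianReal_eq_lintegral_add 0 h (toNNReal_mehlerVariance_ne_zero hD)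
      (hF.indicator measurableSet_Ici)]
  refine lintegral_congr fun t => ?_
  rw [hweight, hshift]
  simp only [Set.indicator_apply, mul_ite, mul_zero]

lemma eLpNorm_weightedShift (hD : 1 < D) {u : ℝ → ℝ≥0∞} (hu : Measurable u) :
    eLpNorm (weightedShift D h u) 2 (mehlerMeasureIci D 0) =
      eLpNorm u 2 (mehlerMeasureIci D h) := by
  rw [← (ENNReal.pow_right_strictMono two_ne_zero).injective.eq_iff, eLpNorm_two_sq, eLpNorm_two_sq]
  simp only [enorm_eq_self]
  rw [lintegral_mehlerMeasureIci_eq hD (hu.pow_const 2)]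
  simp only [weightedShift, mul_pow]

lemma sqrtCameronMartin_mul_mehlerKernel_add_le (hD : 1 < D) (hh : 0 ≤ h) {s t : ℝ} (hs : 0 ≤ s)
    (ht : 0 ≤ t) :
    sqrtCameronMartin D h s * sqrtCameronMartin D h t * mehlerKernel D (s + h) (t + h) ≤
      Real.exp (-(h ^ 2 * (D - 1) ^ 2) / (2 * D)) * mehlerKernel D s t := by
  have : 0 < D := by linarith
  have hexp : -((D - 1 / D) * (h * s + h ^ 2 / 2)) / 2 + -((D - 1 / D) * (h * t + h ^ 2 / 2)) / 2 +
        ((s + h) * (t + h) - ((s + h) ^ 2 + (t + h) ^ 2) / (2 * D)) =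
      -(h ^ 2 * (D - 1) ^ 2) / (2 * D) + (s * t - (s ^ 2 + t ^ 2) / (2 * D)) -
        h * (s + t) * (D - 1) ^ 2 / (2 * D) := by
    field_simp
    ring
  have hdrop : 0 ≤ h * (s + t) * (D - 1) ^ 2 / (2 * D) := by positivity
  unfold mehlerKernel sqrtCameronMartin
  rw [mul_left_comm, mul_left_comm (Real.exp _), ← Real.exp_add, ← Real.exp_add, ← Real.exp_add,
    hexp]
  gcongr
  linarith

lemma weightedShift_halfLineOp_le (hD : 1 < D) (hh : 0 ≤ h) {u : ℝ → ℝ≥0∞} (hu : Measurable u)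
    {s : ℝ} (hs : 0 ≤ s) :
    weightedShift D h (halfLineOp D h u) s ≤
      .ofReal (Real.exp (-(h ^ 2 * (D - 1) ^ 2) / (2 * D))) *
        halfLineOp D 0 (weightedShift D h u) s := by
  have hk (a : ℝ) : Measurable fun y => ENNReal.ofReal (mehlerKernel D a y) :=
    (measurable_mehlerKernel D a).ennreal_ofReal
  have hw0 (t : ℝ) : 0 ≤ sqrtCameronMartin D h t := (Real.exp_pos _).le
  rw [weightedShift, halfLineOp, halfLineOp, kernelOp, kernelOp,
    lintegral_mehlerMeasureIci_eq hD ((hk _).fun_mul hu), ← lintegral_const_mul' _ _ (by simp),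
    ← lintegral_const_mul' _ _ (by simp)]
  refine setLIntegral_mono' measurableSet_Ici fun t ht => ?_
  calc _ = .ofReal (sqrtCameronMartin D h s * sqrtCameronMartin D h t *
          mehlerKernel D (s + h) (t + h)) * weightedShift D h u t := by
        rw [ENNReal.ofReal_mul (mul_nonneg (hw0 s) (hw0 t)), ENNReal.ofReal_mul (hw0 s),
          weightedShift]
        ring
    _ ≤ .ofReal (Real.exp (-(h ^ 2 * (D - 1) ^ 2) / (2 * D)) * mehlerKernel D s t) *
          weightedShift D h u t := by
        gcongr ENNReal.ofReal ?_ * _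
        exact sqrtCameronMartin_mul_mehlerKernel_add_le hD hh hs ht
    _ = _ := by rw [ENNReal.ofReal_mul (Real.exp_pos _).le, mul_assoc]

theorem eLpNorm_halfLineOp_le (hD : 1 < D) (hh : 0 ≤ h) {u : ℝ → ℝ≥0∞} (hu : Measurable u) :
    eLpNorm (halfLineOp D h u) 2 (mehlerMeasureIci D h) ≤
      .ofReal (Real.exp (-(h ^ 2 * (D - 1) ^ 2) / (2 * D))) *
        eLpNorm (halfLineOp D 0 (weightedShift D h u)) 2 (mehlerMeasureIci D 0) := by
  rw [← eLpNorm_weightedShift hD (measurable_halfLineOp hu)]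
  refine eLpNorm_le_mul_eLpNorm_of_ae_le_mul' ?_ 2
  filter_upwards [ae_restrict_mem measurableSet_Ici] with s hs
  exact weightedShift_halfLineOp_le hD hh hu hs

end Translation

section Parity

variable {D ε : ℝ}

lemma map_neg_mehlerMeasure (D : ℝ) : (mehlerMeasure D).map Neg.neg = mehlerMeasure D := by
  rw [show (Neg.neg : ℝ → ℝ) = fun x => -x from rfl, gaussianReal_map_neg, neg_zero]

lemma setIntegral_Ici_add_comp_neg {μ : Measure ℝ} [NullSingletonClass μ]
    (hμ : μ.map Neg.neg = μ) {F : ℝ → ℝ} (hF : Integrable F μ) :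
    ∫ y in Set.Ici 0, (F y + F (-y)) ∂μ = ∫ y, F y ∂μ := by
  have hneg : MeasurePreserving Neg.neg μ μ := ⟨measurable_neg, hμ⟩
  have hreflect : ∫ y in Set.Ici 0, F (-y) ∂μ = ∫ y in (Set.Ici 0)ᶜ, F y ∂μ := by
    rw [Set.compl_Ici, Measure.restrict_congr_set Iio_ae_eq_Iic,
      ← hneg.setIntegral_preimage_emb (Homeomorph.neg ℝ).measurableEmbedding]
    simp
  rw [integral_add (g := fun y => F (-y)) hF.integrableOn
    (hneg.integrable_comp_of_integrable hF).integrableOn, hreflect,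
    integral_add_compl measurableSet_Ici hF]

/-- For `ε = 1` and `ε = -1`, the even and the odd part of the Mehler kernel. -/
noncomputable def parityKernel (D ε a y : ℝ) : ℝ :=
  (mehlerKernel D a y + ε * mehlerKernel D a (-y)) / 2

lemma parityKernel_comm (D ε a y : ℝ) : parityKernel D ε a y = parityKernel D ε y a := by
  rw [parityKernel, parityKernel, mehlerKernel_comm D a y, mehlerKernel_neg_right D a,
    mehlerKernel_comm D (-a)]

lemma measurable_uncurry_ofReal_parityKernel (D ε : ℝ) :
    Measurable (Function.uncurry fun a y => ENNReal.ofReal (parityKernel D ε a y)) := by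
  unfold parityKernel mehlerKernel Function.uncurry; fun_prop

lemma memLp_parityKernel (hD : 1 < D) (ε a : ℝ) (p : ℝ≥0∞) {μ : Measure ℝ} [IsFiniteMeasure μ] :
    MemLp (parityKernel D ε a) p μ := by
  have heq : parityKernel D ε a =
      (2⁻¹ : ℝ) • (mehlerKernel D a + ε • mehlerKernel D (-a)) := by
    ext y
    simp only [parityKernel, mehlerKernel_neg_right, Pi.smul_apply, Pi.add_apply, smul_eq_mul]
    ring
  rw [heq]
  exact ((memLp_mehlerKernel hD a p).add ((memLp_mehlerKernel hD (-a) p).const_smul ε)).const_smul _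

lemma mehlerKernel_eq_add_parityKernel (D a y : ℝ) :
    mehlerKernel D a y = parityKernel D 1 a y + parityKernel D (-1) a y := by
  unfold parityKernel; ring

lemma parityKernel_nonneg (hD : 1 < D) (hε : |ε| ≤ 1) {a y : ℝ} (ha : 0 ≤ a) (hy : 0 ≤ y) :
    0 ≤ parityKernel D ε a y := by
  have hle : mehlerKernel D a (-y) ≤ mehlerKernel D a y := by
    have := mul_nonneg ha hy
    unfold mehlerKernel
    rw [even_two.neg_pow]
    gcongr
    linarith
  have := mehlerKernel_pos hD a (-y)
  have := (abs_le.1 hε).1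
  unfold parityKernel
  nlinarith

lemma setIntegral_parityKernel_mul (hD : 1 < D) (a : ℝ) {w : ℝ → ℝ} (hw : ∀ y, w (-y) = ε * w y)
    (hw2 : MemLp w 2 (mehlerMeasure D)) :
    ∫ y in Set.Ici 0, parityKernel D ε a y * w y ∂mehlerMeasure D =
      (∫ y, w y ∂gaussianReal (a / D) (1 / D).toNNReal) / 2 := by
  have := nullSingletonClass_gaussianReal (μ := 0) (toNNReal_mehlerVariance_ne_zero hD)
  rw [← integral_mehlerKernel_mul hD, ← setIntegral_Ici_add_comp_neg
    (F := fun y => mehlerKernel D a y * w y) (map_neg_mehlerMeasure D)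
    ((memLp_mehlerKernel hD a 2).integrable_mul hw2), ← integral_div]
  refine integral_congr_ae (.of_forall fun y => ?_)
  simp only [parityKernel, hw]
  ring

lemma eLpNorm_kernelOp_parityKernel_le (hD : 1 < D) (hε : |ε| ≤ 1) {w : ℝ → ℝ} {C : ℝ}
    (hw : Measurable w) (hw2 : MemLp w 2 (mehlerMeasure D)) (hparity : ∀ y, w (-y) = ε * w y)
    (hpos : ∀ y, 0 < y → 0 < w y)
    (hC : ∀ a, (∫ y, w y ∂gaussianReal (a / D) (1 / D).toNNReal) / 2 = C * w a)
    {u : ℝ → ℝ≥0∞} (hu : Measurable u) :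
    eLpNorm (kernelOp (mehlerMeasureIci D 0) (fun a y => .ofReal (parityKernel D ε a y)) u) 2
      (mehlerMeasureIci D 0) ≤ .ofReal C * eLpNorm u 2 (mehlerMeasureIci D 0) := by
  have := nullSingletonClass_gaussianReal (μ := 0) (toNNReal_mehlerVariance_ne_zero hD)
  have hae : ∀ᵐ y ∂mehlerMeasureIci D 0, 0 < y := by
    rw [mehlerMeasureIci, ← restrict_Ioi_eq_restrict_Ici]
    exact ae_restrict_mem measurableSet_Ioi
  refine eLpNorm_kernelOp_le_of_kernelOp_le (w := fun y => .ofReal (w y))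
    (measurable_uncurry_ofReal_parityKernel D ε)
    (fun a y => congrArg _ (parityKernel_comm D ε a y)) hw.ennreal_ofReal
    (hae.mono fun y hy => (ENNReal.ofReal_pos.2 (hpos y hy)).ne')
    (.of_forall fun _ => ENNReal.ofReal_ne_top) (hae.mono fun a ha => le_of_eq ?_) hu
  have hnonneg : ∀ᵐ y ∂mehlerMeasureIci D 0, 0 ≤ parityKernel D ε a y * w y :=
    hae.mono fun y hy => mul_nonneg (parityKernel_nonneg hD hε ha.le hy.le) (hpos y hy).le
  have hint : Integrable (fun y => parityKernel D ε a y * w y) (mehlerMeasureIci D 0) :=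
    ((memLp_parityKernel hD ε a 2).restrict _).integrable_mul (hw2.restrict _)
  calc _ = ∫⁻ y, .ofReal (parityKernel D ε a y * w y) ∂mehlerMeasureIci D 0 :=
        lintegral_congr_ae <| hae.mono fun y hy =>
          (ENNReal.ofReal_mul (parityKernel_nonneg hD hε ha.le hy.le)).symm
    _ = .ofReal (C * w a) := by
        rw [← ofReal_integral_eq_lintegral_ofReal hint hnonneg,
          setIntegral_parityKernel_mul hD a hparity hw2, hC]
    _ = .ofReal C * .ofReal (w a) := ENNReal.ofReal_mul' (hpos a ha).le

lemma halfLineOp_le_add (D h : ℝ) {u : ℝ → ℝ≥0∞} (hu : Measurable u) (a : ℝ) :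
    halfLineOp D h u a ≤
      kernelOp (mehlerMeasureIci D h) (fun a y => .ofReal (parityKernel D 1 a y)) u a +
        kernelOp (mehlerMeasureIci D h) (fun a y => .ofReal (parityKernel D (-1) a y)) u a := by
  have hmeas : Measurable fun y => .ofReal (parityKernel D 1 a y) * u y :=
    (measurable_uncurry_ofReal_parityKernel D 1).of_uncurry_left.fun_mul hu
  unfold halfLineOp kernelOp
  rw [← lintegral_add_left hmeas]
  refine lintegral_mono fun y => ?_
  simp only [← add_mul, mehlerKernel_eq_add_parityKernel D a y]
  gcongr
  exact ENNReal.ofReal_add_le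

theorem eLpNorm_halfLineOp_zero_le (hD : 1 < D) {u : ℝ → ℝ≥0∞} (hu : Measurable u) :
    eLpNorm (halfLineOp D 0 u) 2 (mehlerMeasureIci D 0) ≤
      .ofReal ((1 + 1 / D) / 2) * eLpNorm u 2 (mehlerMeasureIci D 0) := by
  have hmeas (ε : ℝ) := measurable_kernelOp (μ := mehlerMeasureIci D 0)
    (measurable_uncurry_ofReal_parityKernel D ε) hu
  have heven := eLpNorm_kernelOp_parityKernel_le (ε := 1) (w := fun _ => 1) (C := 1 / 2) hD
    (by norm_num) measurable_const (memLp_const _) (by simp) (by simp) (by simp) hu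
  have hodd := eLpNorm_kernelOp_parityKernel_le (ε := -1) (w := fun y => y) (C := 1 / D / 2) hD
    (by norm_num) measurable_id (memLp_id_gaussianReal 2) (by simp) (by simp)
    (fun a => by rw [integral_id_gaussianReal]; ring) hu
  calc eLpNorm (halfLineOp D 0 u) 2 (mehlerMeasureIci D 0)
      ≤ eLpNorm (kernelOp (mehlerMeasureIci D 0) (fun a y => .ofReal (parityKernel D 1 a y)) u +
          kernelOp (mehlerMeasureIci D 0) (fun a y => .ofReal (parityKernel D (-1) a y)) u) 2
          (mehlerMeasureIci D 0) :=
        eLpNorm_mono_enorm (halfLineOp_le_add D 0 hu)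
    _ ≤ _ := eLpNorm_add_le (hmeas 1).aestronglyMeasurable (hmeas (-1)).aestronglyMeasurable
        one_le_two
    _ ≤ .ofReal (1 / 2) * eLpNorm u 2 (mehlerMeasureIci D 0) +
          .ofReal (1 / D / 2) * eLpNorm u 2 (mehlerMeasureIci D 0) := add_le_add heven hodd
    _ = _ := by
        rw [← add_mul, ← ENNReal.ofReal_add (by norm_num) (by positivity), add_div]

end Parity

section Compression

/-- `Q` is the operator `f ↦ 𝔼[f(· / D + √(1 - 1 / D²) Y)]` with `Y ∼ mehlerMeasure D`, that is,
the Ornstein–Uhlenbeck semigroup `Q_t` at time `t = log D`. -/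
def IsMehlerOperator (D : ℝ)
    (Q : Lp ℝ 2 (mehlerMeasure D) →L[ℝ] Lp ℝ 2 (mehlerMeasure D)) : Prop :=
  ∀ f : Lp ℝ 2 (mehlerMeasure D), Q f =ᵐ[mehlerMeasure D]
    fun a => ∫ y, f (a / D + √(1 - 1 / D ^ 2) * y) ∂mehlerMeasure D

/-- `P` is the projection `π_h` of `L²(μ)` onto the functions supported in `[h, ∞)`. -/
def IsHalfLineProjection {μ : Measure ℝ} (h : ℝ) (P : Lp ℝ 2 μ →L[ℝ] Lp ℝ 2 μ) : Prop :=
  ∀ f : Lp ℝ 2 μ, P f =ᵐ[μ] fun a => if h ≤ a then f a else 0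

variable {D h : ℝ} {Q P P₀ : Lp ℝ 2 (mehlerMeasure D) →L[ℝ] Lp ℝ 2 (mehlerMeasure D)}

lemma compression_ae_eq (hD : 1 < D) (hQ : IsMehlerOperator D Q) (hP : IsHalfLineProjection h P)
    (f : Lp ℝ 2 (mehlerMeasure D)) :
    (P ∘L Q ∘L P) f =ᵐ[mehlerMeasure D] (Set.Ici h).indicator
      fun a => ∫ y in Set.Ici h, mehlerKernel D a y * f y ∂mehlerMeasure D := by
  have hQP (a : ℝ) : ∫ y, P f (a / D + √(1 - 1 / D ^ 2) * y) ∂mehlerMeasure D =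
      ∫ y in Set.Ici h, mehlerKernel D a y * f y ∂mehlerMeasure D := by
    rw [integral_comp_add_mul_mehlerMeasure hD a (Lp.stronglyMeasurable _),
      ← integral_indicator measurableSet_Ici]
    refine integral_congr_ae ((hP f).mono fun y hy => ?_)
    simp only [hy, Set.indicator_apply, Set.mem_Ici, mul_ite, mul_zero]
  filter_upwards [hP (Q (P f)), hQ (P f)] with a hPa hQa
  simp only [ContinuousLinearMap.comp_apply, hPa, hQa, hQP, Set.indicator_apply, Set.mem_Ici]

theorem norm_compression_le (hD : 1 < D) (hQ : IsMehlerOperator D Q)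
    (hP : IsHalfLineProjection h P) (hP₀ : IsHalfLineProjection 0 P₀) (hh : 0 ≤ h) :
    ‖P ∘L Q ∘L P‖ ≤
      ‖P₀ ∘L Q ∘L P₀‖ * Real.exp (-(h ^ 2 * (D - 1) ^ 2) / (2 * D)) := by
  have hk (a y : ℝ) := (mehlerKernel_pos hD a y).le
  suffices ‖P ∘L Q ∘L P‖ₑ ≤ .ofReal (Real.exp (-(h ^ 2 * (D - 1) ^ 2) / (2 * D))) *
      ‖P₀ ∘L Q ∘L P₀‖ₑ by
    rwa [← ofReal_norm, ← ofReal_norm, ← ENNReal.ofReal_mul (Real.exp_pos _).le,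
      ENNReal.ofReal_le_ofReal_iff (by positivity), mul_comm] at this
  refine enorm_le_of_eLpNorm_kernelOp_le measurableSet_Ici hk (compression_ae_eq hD hQ hP)
    fun u hu hu2 => (eLpNorm_halfLineOp_le hD hh hu).trans ?_
  rw [← eLpNorm_weightedShift hD hu] at hu2 ⊢
  rw [mul_assoc]
  gcongr
  exact eLpNorm_kernelOp_le_enorm_mul measurableSet_Ici hk (memLp_mehlerKernel hD · 2)
    (compression_ae_eq hD hQ hP₀) (measurable_weightedShift D h hu) hu2

theorem norm_compression_zero_le (hD : 1 < D) (hQ : IsMehlerOperator D Q)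
    (hP₀ : IsHalfLineProjection 0 P₀) : ‖P₀ ∘L Q ∘L P₀‖ ≤ (1 + 1 / D) / 2 := by
  rw [← ENNReal.ofReal_le_ofReal_iff (by positivity), ofReal_norm]
  exact enorm_le_of_eLpNorm_kernelOp_le measurableSet_Ici (fun a y => (mehlerKernel_pos hD a y).le)
    (compression_ae_eq hD hQ hP₀) fun u hu _ => eLpNorm_halfLineOp_zero_le hD hu

end Compression

theorem stmt_18_general {D : ℝ} (hD : 1 < D)
    (ν : Measure ℝ) (hν : ν = gaussianReal 0 (Real.toNNReal (D / (D ^ 2 - 1))))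
    (Q : Lp ℝ 2 ν →L[ℝ] Lp ℝ 2 ν)
    (hQ : ∀ f : Lp ℝ 2 ν, (Q f : ℝ → ℝ) =ᵐ[ν]
      fun a => ∫ y, (f : ℝ → ℝ) (a / D + Real.sqrt (1 - 1 / D ^ 2) * y) ∂ν)
    (Ph : ℝ → (Lp ℝ 2 ν →L[ℝ] Lp ℝ 2 ν))
    (hPh : ∀ (h : ℝ) (f : Lp ℝ 2 ν), (Ph h f : ℝ → ℝ) =ᵐ[ν]
      fun a => if h ≤ a then (f : ℝ → ℝ) a else 0)
    (lam : ℝ → ℝ) (hlam : ∀ h : ℝ, lam h = ‖Ph h ∘L (D • Q) ∘L Ph h‖) :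
    ∀ h : ℝ, 0 ≤ h →
      lam h ≤ lam 0 * Real.exp (-(h ^ 2 * (D - 1) ^ 2) / (2 * D)) ∧
      lam 0 * Real.exp (-(h ^ 2 * (D - 1) ^ 2) / (2 * D)) <
        D * Real.exp (-(h ^ 2 * (D - 1) ^ 2) / (2 * D)) := by
  subst hν
  intro h hh
  have hD0 : 0 < D := by linarith
  have hlam_eq (t : ℝ) : lam t = D * ‖Ph t ∘L Q ∘L Ph t‖ := by
    rw [hlam, ContinuousLinearMap.smul_comp, ContinuousLinearMap.comp_smul, norm_smul,
      Real.norm_of_nonneg hD0.le]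
  have hgap : (1 + 1 / D) / 2 < 1 := by
    have : 1 / D < 1 := (div_lt_one hD0).2 hD
    linarith
  rw [hlam_eq h, hlam_eq 0, mul_assoc D]
  refine ⟨?_, ?_⟩
  · gcongr
    exact norm_compression_le hD hQ (hPh h) (hPh 0) hh
  · have hlt := (norm_compression_zero_le hD hQ (hPh 0)).trans_lt hgap
    exact mul_lt_mul_of_pos_left (mul_lt_of_lt_one_left (Real.exp_pos _) hlt) hD0

/-- For all h ≥ 0 and d ≥ 2,
λ_h ≤ λ_0·exp(-h²(d-1)²/(2d)) < d·exp(-h²(d-1)²/(2d)), where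
λ_h = ‖π_h(dQ_{log d})π_h‖ on L²(N(0, d/(d²-1))). -/
theorem stmt_18 (d : ℕ) (hd : 2 ≤ d)
    (ν : Measure ℝ) (hν : ν = gaussianReal 0 (Real.toNNReal ((d : ℝ) / ((d : ℝ) ^ 2 - 1))))
    (Q : Lp ℝ 2 ν →L[ℝ] Lp ℝ 2 ν)
    (hQ : ∀ f : Lp ℝ 2 ν, (Q f : ℝ → ℝ) =ᵐ[ν]
      fun a => ∫ y, (f : ℝ → ℝ) (a / d + Real.sqrt (1 - 1 / (d : ℝ) ^ 2) * y) ∂ν)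
    (Ph : ℝ → (Lp ℝ 2 ν →L[ℝ] Lp ℝ 2 ν))
    (hPh : ∀ (h : ℝ) (f : Lp ℝ 2 ν), (Ph h f : ℝ → ℝ) =ᵐ[ν]
      fun a => if h ≤ a then (f : ℝ → ℝ) a else 0)
    (lam : ℝ → ℝ) (hlam : ∀ h : ℝ, lam h = ‖Ph h ∘L ((d : ℝ) • Q) ∘L Ph h‖) :
    ∀ h : ℝ, 0 ≤ h →
      lam h ≤ lam 0 * Real.exp (-(h ^ 2 * ((d : ℝ) - 1) ^ 2) / (2 * d)) ∧
      lam 0 * Real.exp (-(h ^ 2 * ((d : ℝ) - 1) ^ 2) / (2 * d)) <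
        (d : ℝ) * Real.exp (-(h ^ 2 * ((d : ℝ) - 1) ^ 2) / (2 * d)) :=
  stmt_18_general (by exact_mod_cast hd) ν hν Q hQ Ph hPh lam hlam
end
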